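/- Let 1 ≤ n < α, p = 2n/(n+α), q = 2n/(n−α), and N*(n, α) = π^{(n−α)/2} · Γ(α/2)/Γ((n+α)/2) · (Γ(n/2)/Γ(n))^{−α/n}. A nonnegative f ∈ L^p(ℝⁿ), not identically zero, satisfies ‖I_α f‖_{L^q(ℝⁿ)} = N*(n, α)·‖f‖_{L^p(ℝⁿ)} if and only if there exist constants c > 0, d > 0 and a point x₀ ∈ ℝⁿ such that f(x) = c·(1/(|x−x₀|² + d²))^{(n+α)/2} for all x ∈ ℝⁿ. -/

import Mathlib

open MeasureTheory ENNReal

/-- The Riesz-type integral operator `I_α f(x) = ∫_{ℝⁿ} f(y) |x-y|^(α-n) dy` for `α > n`,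
valued in `ℝ≥0∞`. -/
noncomputable def rieszNeg (n : ℕ) (α : ℝ) (f : EuclideanSpace ℝ (Fin n) → ℝ)
    (x : EuclideanSpace ℝ (Fin n)) : ℝ≥0∞ :=
  ∫⁻ y, ENNReal.ofReal (f y * dist x y ^ (α - n))

/-!
The kernel `|x - y|^μ`, with `μ = α - n`, is covariant under inversions, and since it grows with the
distance, polarizing `f` and `g` in a sphere lowers the energy `∬ f(x) |x - y|^μ g(y)` while keeping
the `L^p` quasinorms. For pairs comparable to the bubble `(1 + |x|²)^(-(n + α)/2)`, polarizations
chosen to maximise an entropy make the potential approach a multiple of `(1 + |x|²)^(μ/2)`, and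
for such a potential Hölder's inequality bounds the energy below by the sharp constant; general
pairs follow by truncation.

An extremal `f`, tested against the dual function `(I_α f)^(q - 1)`, has minimal energy, so no
polarization lowers it: the two functions deviate from their Kelvin transforms in the same direction
for every inversion. The method of moving spheres then gives `I_α f = C (|x - x₀|² + d²)^(μ/2)`.
Some bubble has this potential, and the equality case of Hölder's inequality identifies `f` with it.
-/

open Module EuclideanGeometry

namespace ReversedHLS

/-! ### Inversions -/

section ConformalFactor

variable {E : Type*} [NormedAddCommGroup E] {a : E} {R : ℝ} {x : E}

open Classical in
/-- The conformal factor `(R / |x - a|)²` of the inversion in the sphere of centre `a` and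
radius `R`. Mathlib's inversion fixes the centre, so the value there is `1`: in this way the factor
is positive everywhere and is inverted by the inversion without exceptional points. -/
noncomputable def conformalFactor (a : E) (R : ℝ) (x : E) : ℝ :=
  if x = a then 1 else (R / dist x a) ^ 2

lemma conformalFactor_of_ne (h : x ≠ a) : conformalFactor a R x = (R / dist x a) ^ 2 :=
  if_neg h

lemma conformalFactor_pos (hR : 0 < R) (x : E) : 0 < conformalFactor a R x := by
  unfold conformalFactor
  split_ifs with h
  · exact one_pos
  · have := dist_pos.2 h
    positivity

lemma measurable_conformalFactor [MeasurableSpace E] [BorelSpace E] (a : E) (R : ℝ) :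
    Measurable (conformalFactor a R) :=
  Measurable.ite (measurableSet_singleton a) (by fun_prop) (by fun_prop)

end ConformalFactor

section Inversion

variable {E : Type*} [NormedAddCommGroup E] [InnerProductSpace ℝ E] {a : E} {R : ℝ} {x : E}

lemma inversion_ne_center (hR : 0 < R) (h : x ≠ a) : inversion a R x ≠ a :=
  fun h' => h ((inversion_eq_center hR.ne').1 h')

lemma conformalFactor_inversion (hR : 0 < R) (x : E) :
    conformalFactor a R (inversion a R x) = (conformalFactor a R x)⁻¹ := by
  by_cases h : x = a
  · simp [conformalFactor, h]
  · rw [conformalFactor_of_ne h, conformalFactor_of_ne (inversion_ne_center hR h),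
      dist_inversion_center]
    have := dist_pos.2 h
    field_simp

variable [FiniteDimensional ℝ E]

lemma abs_det_fderiv_inversion (hx : x ≠ a) :
    |((R / dist x a) ^ 2 • ((Submodule.span ℝ {x - a})ᗮ.reflection : E →L[ℝ] E)).det|
      = conformalFactor a R x ^ finrank ℝ E := by
  have h : (((R / dist x a) ^ 2 • ((Submodule.span ℝ {x - a})ᗮ.reflection : E →L[ℝ] E) :
      E →L[ℝ] E) : E →ₗ[ℝ] E) =
      (R / dist x a) ^ 2 • ((Submodule.span ℝ {x - a})ᗮ.reflection.toLinearMap : E →ₗ[ℝ] E) := by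
    ext; simp
  rw [conformalFactor_of_ne hx, ContinuousLinearMap.det, h, LinearMap.det_smul,
    Submodule.det_reflection]
  simp [abs_mul]

variable [MeasurableSpace E] [BorelSpace E]

lemma measurable_inversion (a : E) (R : ℝ) : Measurable (inversion a R) := by
  change Measurable fun x => (R / dist x a) ^ 2 • (x - a) + a
  fun_prop

lemma measurableEmbedding_inversion (a : E) (hR : 0 < R) : MeasurableEmbedding (inversion a R) :=
  (MeasurableEquiv.ofInvolutive _ (inversion_involutive a hR.ne')
    (measurable_inversion a R)).measurableEmbedding

variable [Nontrivial E]

theorem measurePreserving_inversion (a : E) (hR : 0 < R) :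
    MeasurePreserving (inversion a R)
      (volume.withDensity fun x => ENNReal.ofReal (conformalFactor a R x ^ finrank ℝ E))
      volume := by
  refine ⟨measurable_inversion a R, Measure.ext fun s hs => ?_⟩
  have hmeas : MeasurableSet (inversion a R ⁻¹' s) := measurable_inversion a R hs
  have himage : inversion a R '' (inversion a R ⁻¹' s \ {a}) = s \ {a} := by
    rw [Set.image_sdiff (inversion_injective a hR.ne'), Set.image_singleton, inversion_self,
      Set.image_preimage_eq _ (inversion_surjective a hR.ne')]
  have hcov := lintegral_abs_det_fderiv_eq_addHaar_image volume
    (hmeas.diff (measurableSet_singleton a))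
    (fun x hx => (hasFDerivAt_inversion (R := R) (c := a) hx.2).hasFDerivWithinAt)
    (inversion_injective a hR.ne').injOn
  rw [himage, measure_sdiff_null (measure_singleton a)] at hcov
  rw [Measure.map_apply (measurable_inversion a R) hs, withDensity_apply _ hmeas, ← hcov,
    ← setLIntegral_congr (sdiff_null_ae_eq_self (measure_singleton a))]
  exact setLIntegral_congr_fun (hmeas.diff (measurableSet_singleton a)) fun x hx => by
    simp only [abs_det_fderiv_inversion hx.2]

lemma lintegral_eq_lintegral_inversion (a : E) (hR : 0 < R) (φ : E → ℝ≥0∞) :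
    ∫⁻ x, φ x =
      ∫⁻ x, ENNReal.ofReal (conformalFactor a R x ^ finrank ℝ E) * φ (inversion a R x) := by
  rw [← (measurePreserving_inversion a hR).lintegral_comp_emb (measurableEmbedding_inversion a hR),
    lintegral_withDensity_eq_lintegral_mul_non_measurable]
  · rfl
  · exact ((measurable_conformalFactor a R).pow_const _).ennreal_ofReal
  · exact .of_forall fun x => ofReal_lt_top

lemma integral_eq_integral_inversion (a : E) (hR : 0 < R) (φ : E → ℝ) :
    ∫ x, φ x = ∫ x, conformalFactor a R x ^ finrank ℝ E * φ (inversion a R x) := by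
  rw [← (measurePreserving_inversion a hR).integral_comp (measurableEmbedding_inversion a hR),
    integral_withDensity_eq_integral_toReal_smul
      ((measurable_conformalFactor a R).pow_const _).ennreal_ofReal
      (.of_forall fun x => ofReal_lt_top)]
  simp only [toReal_ofReal (pow_nonneg (conformalFactor_pos hR _).le _), smul_eq_mul]

lemma integrable_iff_integrable_inversion (a : E) (hR : 0 < R) (φ : E → ℝ) :
    Integrable φ ↔
      Integrable fun x => conformalFactor a R x ^ finrank ℝ E * φ (inversion a R x) := by
  rw [← (measurePreserving_inversion a hR).integrable_comp_emb (measurableEmbedding_inversion a hR),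
    integrable_withDensity_iff_integrable_smul'
      ((measurable_conformalFactor a R).pow_const _).ennreal_ofReal
      (.of_forall fun x => ofReal_lt_top)]
  simp only [toReal_ofReal (pow_nonneg (conformalFactor_pos hR _).le _), smul_eq_mul,
    Function.comp_apply]

end Inversion

section Kernel

variable {E : Type*} [NormedAddCommGroup E]

/-- The power of the point `x` with respect to the sphere of centre `a` and radius `R`: negative
inside the sphere, positive outside. -/
def spherePower (a : E) (R : ℝ) (x : E) : ℝ := dist x a ^ 2 - R ^ 2

lemma dist_rpow_eq_sq_rpow (μ : ℝ) (x y : E) : dist x y ^ μ = (dist x y ^ 2) ^ (μ / 2) := by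
  rw [← Real.rpow_natCast, ← Real.rpow_mul dist_nonneg]
  congr 1; push_cast; ring

variable [InnerProductSpace ℝ E]

/-- The kernel `|x - y|^μ` with one argument reflected in the sphere of centre `a` and radius `R`,
normalised by the conformal factor so as to be symmetric. -/
noncomputable def reflectedKernel (μ : ℝ) (a : E) (R : ℝ) (x y : E) : ℝ :=
  conformalFactor a R x ^ (-(μ / 2)) * dist (inversion a R x) y ^ μ

variable {μ R : ℝ} {a x y : E}

lemma reflectedKernel_nonneg (hR : 0 < R) (x y : E) : 0 ≤ reflectedKernel μ a R x y :=
  mul_nonneg (Real.rpow_nonneg (conformalFactor_pos hR x).le _) (Real.rpow_nonneg dist_nonneg _)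

lemma measurable_reflectedKernel [FiniteDimensional ℝ E] [MeasurableSpace E] [BorelSpace E]
    (μ : ℝ) (a : E) (R : ℝ) :
    Measurable fun p : E × E => reflectedKernel μ a R p.1 p.2 :=
  (((measurable_conformalFactor a R).comp measurable_fst).pow_const _).mul
    ((((measurable_inversion a R).comp measurable_fst).dist measurable_snd).pow_const _)

lemma spherePower_inversion (hx : x ≠ a) :
    spherePower a R (inversion a R x) = -(conformalFactor a R x * spherePower a R x) := by
  rw [spherePower, spherePower, dist_inversion_center, conformalFactor_of_ne hx]
  have := dist_pos.2 hx
  field_simp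
  ring

lemma dist_inversion_sq (hR : 0 < R) (hx : x ≠ a) (y : E) :
    (conformalFactor a R x)⁻¹ * dist (inversion a R x) y ^ 2 =
      dist x y ^ 2 + spherePower a R x * spherePower a R y / R ^ 2 := by
  have hd : 0 < ‖x - a‖ := norm_sub_pos_iff.2 hx
  have hinv : inversion a R x - y = (R / ‖x - a‖) ^ 2 • (x - a) - (y - a) := by
    rw [inversion, dist_eq_norm, vsub_eq_sub, vadd_eq_add]; abel
  rw [conformalFactor_of_ne hx, spherePower, spherePower, dist_eq_norm x y, dist_eq_norm x a,
    dist_eq_norm y a, dist_eq_norm, hinv, ← sub_sub_sub_cancel_right x y a,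
    norm_sub_sq_real, norm_sub_sq_real (x - a), norm_smul, real_inner_smul_left, mul_pow, norm_pow,
    Real.norm_eq_abs, sq_abs]
  field_simp
  ring

lemma reflectedKernel_eq (hR : 0 < R) (hx : x ≠ a) (y : E) :
    reflectedKernel μ a R x y =
      (dist x y ^ 2 + spherePower a R x * spherePower a R y / R ^ 2) ^ (μ / 2) := by
  have hJ := (conformalFactor_pos (a := a) hR x).le
  rw [← dist_inversion_sq hR hx, Real.mul_rpow (inv_nonneg.2 hJ) (by positivity),
    ← dist_rpow_eq_sq_rpow, Real.inv_rpow hJ, ← Real.rpow_neg hJ, reflectedKernel]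

lemma reflectedKernel_comm (hR : 0 < R) (hx : x ≠ a) (hy : y ≠ a) :
    reflectedKernel μ a R x y = reflectedKernel μ a R y x := by
  rw [reflectedKernel_eq hR hx, reflectedKernel_eq hR hy, dist_comm x y,
    mul_comm (spherePower a R x)]

lemma reflectedKernel_base_nonneg (hR : 0 < R) (hx : x ≠ a) (y : E) :
    0 ≤ dist x y ^ 2 + spherePower a R x * spherePower a R y / R ^ 2 := by
  rw [← dist_inversion_sq hR hx]
  have := conformalFactor_pos (a := a) hR x
  positivity

lemma sign_reflectedKernel_sub (hμ : 0 < μ) (hR : 0 < R) (hx : x ≠ a) (y : E) :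
    SignType.sign (reflectedKernel μ a R x y - dist x y ^ μ) =
      SignType.sign (spherePower a R x) * SignType.sign (spherePower a R y) := by
  have hbase := reflectedKernel_base_nonneg hR hx y
  have hR2 : 0 < R ^ 2 := by positivity
  rw [← sign_mul, reflectedKernel_eq hR hx, dist_rpow_eq_sq_rpow]
  rcases lt_trichotomy (spherePower a R x * spherePower a R y) 0 with h | h | h
  · rw [sign_neg h, sign_neg (sub_neg.2 (Real.rpow_lt_rpow hbase _ (half_pos hμ)))]
    linarith [div_neg_of_neg_of_pos h hR2]
  · rw [h, zero_div, add_zero, sub_self]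
  · rw [sign_pos h, sign_pos (sub_pos.2 (Real.rpow_lt_rpow (sq_nonneg _) _ (half_pos hμ)))]
    linarith [div_pos h hR2]

end Kernel

section Kelvin

variable {E : Type*} [NormedAddCommGroup E] [InnerProductSpace ℝ E]

/-- The Kelvin transform attached to the kernel `|x - y|^μ`. Its weight `n + μ / 2`, with `n` the
dimension, is the one for which the energy `∬ f(x) |x - y|^μ g(y)` is invariant. -/
noncomputable def kelvin (μ : ℝ) (a : E) (R : ℝ) (f : E → ℝ) (x : E) : ℝ :=
  conformalFactor a R x ^ (finrank ℝ E + μ / 2) * f (inversion a R x)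

variable {μ R : ℝ} {a x y : E} {f : E → ℝ}

lemma kelvin_kelvin (hR : 0 < R) (f : E → ℝ) : kelvin μ a R (kelvin μ a R f) = f := by
  ext x
  have hJ := conformalFactor_pos (a := a) hR x
  rw [kelvin, kelvin, conformalFactor_inversion hR, inversion_inversion a hR.ne', ← mul_assoc,
    Real.inv_rpow hJ.le, mul_inv_cancel₀ (Real.rpow_pos_of_pos hJ _).ne', one_mul]

lemma kelvin_nonneg (hR : 0 < R) (hf : ∀ x, 0 ≤ f x) (x : E) : 0 ≤ kelvin μ a R f x :=
  mul_nonneg (Real.rpow_nonneg (conformalFactor_pos hR x).le _) (hf _)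

lemma kelvin_eq_self (hR : 0 < R) (hx : x = a ∨ spherePower a R x = 0) :
    kelvin μ a R f x = f x := by
  rcases hx with rfl | hx
  · simp [kelvin, conformalFactor]
  · have hd : dist x a = R := (sq_eq_sq₀ dist_nonneg hR.le).1 (sub_eq_zero.1 hx)
    have hxa : x ≠ a := by rw [← dist_pos, hd]; exact hR
    rw [kelvin, conformalFactor_of_ne hxa, inversion_of_mem_sphere (Metric.mem_sphere.2 hd), hd,
      div_self hR.ne']
    simp

lemma conformalFactor_pow_finrank (μ : ℝ) (hR : 0 < R) (x : E) :
    conformalFactor a R x ^ finrank ℝ E =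
      conformalFactor a R x ^ (-(μ / 2)) * conformalFactor a R x ^ (finrank ℝ E + μ / 2) := by
  rw [← Real.rpow_add (conformalFactor_pos hR x), ← Real.rpow_natCast]; congr 1; ring

lemma reflectedKernel_mul_kelvin (hR : 0 < R) (hx : x ≠ a) (hy : y ≠ a) (f : E → ℝ) :
    reflectedKernel μ a R x y * kelvin μ a R f y =
      conformalFactor a R y ^ finrank ℝ E *
        (dist x (inversion a R y) ^ μ * f (inversion a R y)) := by
  rw [reflectedKernel_comm hR hx hy, reflectedKernel, kelvin, dist_comm x,
    conformalFactor_pow_finrank μ hR]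
  ring

variable [FiniteDimensional ℝ E] [MeasurableSpace E] [BorelSpace E]

lemma measurable_kelvin (μ : ℝ) (a : E) (R : ℝ) (hf : Measurable f) :
    Measurable (kelvin μ a R f) :=
  ((measurable_conformalFactor a R).pow_const _).mul (hf.comp (measurable_inversion a R))

/-- The real-valued Riesz potential with kernel `|x - y|^μ`, where `μ = α - n`. -/
noncomputable def potential (μ : ℝ) (f : E → ℝ) (x : E) : ℝ := ∫ y, dist x y ^ μ * f y

lemma integral_reflectedKernel_mul (f : E → ℝ) :
    ∫ y, reflectedKernel μ a R x y * f y =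
      conformalFactor a R x ^ (-(μ / 2)) * potential μ f (inversion a R x) := by
  simp only [reflectedKernel, mul_assoc, integral_const_mul, potential]

lemma integrable_reflectedKernel_mul
    (hf : ∀ x, Integrable fun y => dist x y ^ μ * f y) (x : E) :
    Integrable fun y => reflectedKernel μ a R x y * f y := by
  simpa only [reflectedKernel, mul_assoc] using (hf (inversion a R x)).const_mul _

variable [Nontrivial E]

lemma potential_eq_integral_reflectedKernel (hR : 0 < R) (hx : x ≠ a) (f : E → ℝ) :
    potential μ f x = ∫ y, reflectedKernel μ a R x y * kelvin μ a R f y := by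
  rw [potential, integral_eq_integral_inversion a hR]
  refine integral_congr_ae ?_
  filter_upwards [Measure.ae_ne volume a] with y hy
  rw [reflectedKernel_mul_kelvin hR hx hy]

lemma integrable_dist_rpow_mul_iff (hR : 0 < R) (hx : x ≠ a) (f : E → ℝ) :
    Integrable (fun y => dist x y ^ μ * f y) ↔
      Integrable fun y => reflectedKernel μ a R x y * kelvin μ a R f y := by
  rw [integrable_iff_integrable_inversion a hR]
  refine integrable_congr ?_
  filter_upwards [Measure.ae_ne volume a] with y hy
  rw [reflectedKernel_mul_kelvin hR hx hy]

section PotentialDifference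

variable (hR : 0 < R) (hx : x ≠ a) (hf : ∀ x, Integrable fun y => dist x y ^ μ * f y)
include hR hx hf

lemma integrable_dist_rpow_mul_kelvin : Integrable fun y => dist x y ^ μ * kelvin μ a R f y := by
  rw [integrable_dist_rpow_mul_iff hR hx, kelvin_kelvin hR]
  exact integrable_reflectedKernel_mul hf x

lemma integrable_reflectedKernel_sub_mul_sub_kelvin :
    Integrable fun y => (reflectedKernel μ a R x y - dist x y ^ μ) * (f y - kelvin μ a R f y) := by
  have hsum := (integrable_reflectedKernel_mul (a := a) (R := R) hf x).add
    (integrable_dist_rpow_mul_kelvin hR hx hf)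
  refine (hsum.sub ((hf x).add ((integrable_dist_rpow_mul_iff hR hx f).1 (hf x)))).congr
    (.of_forall fun y => ?_)
  simp only [Pi.add_apply, Pi.sub_apply]
  ring

lemma two_mul_potential_inversion_sub :
    2 * (conformalFactor a R x ^ (-(μ / 2)) * potential μ f (inversion a R x) - potential μ f x) =
      ∫ y, (reflectedKernel μ a R x y - dist x y ^ μ) * (f y - kelvin μ a R f y) := by
  have hKf := integrable_reflectedKernel_mul (a := a) (R := R) hf x
  have hKf' := (integrable_dist_rpow_mul_iff hR hx f).1 (hf x)
  have hf' := integrable_dist_rpow_mul_kelvin hR hx hf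
  have hpot' : ∫ y, reflectedKernel μ a R x y * f y = potential μ (kelvin μ a R f) x := by
    rw [potential_eq_integral_reflectedKernel hR hx, kelvin_kelvin hR]
  calc _ = (∫ y, reflectedKernel μ a R x y * f y) + (∫ y, dist x y ^ μ * kelvin μ a R f y) -
        ((∫ y, dist x y ^ μ * f y) + ∫ y, reflectedKernel μ a R x y * kelvin μ a R f y) := by
        rw [← potential_eq_integral_reflectedKernel hR hx, ← potential, ← potential, ← hpot',
          integral_reflectedKernel_mul]
        ring
    _ = _ := by
        rw [← integral_add' hKf hf', ← integral_add' (hf x) hKf', ← integral_sub' (hKf.add hf')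
          ((hf x).add hKf')]
        exact integral_congr_ae (.of_forall fun y => by
          simp only [Pi.add_apply, Pi.sub_apply]; ring)

end PotentialDifference

end Kelvin

/-! ### Polarization -/

section Polarization

variable {E : Type*} [NormedAddCommGroup E] [InnerProductSpace ℝ E]

/-- The two-point polarization of `f` in the sphere of centre `a` and radius `R`: of the values of
`f` and of its Kelvin transform, the larger one is put outside the sphere if `0 < e` and inside if
`e < 0`. -/
noncomputable def polarize (μ : ℝ) (a : E) (R e : ℝ) (f : E → ℝ) (x : E) : ℝ :=
  if 0 < e * spherePower a R x then max (f x) (kelvin μ a R f x) else min (f x) (kelvin μ a R f x)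

variable {μ R e : ℝ} {a x y : E} {f g : E → ℝ}

lemma kelvin_polarize (hR : 0 < R) (he : e ≠ 0) (f : E → ℝ) (x : E) :
    kelvin μ a R (polarize μ a R e f) x =
      if 0 < e * spherePower a R x then min (f x) (kelvin μ a R f x)
      else max (f x) (kelvin μ a R f x) := by
  by_cases hx : x = a ∨ spherePower a R x = 0
  · rw [kelvin_eq_self hR hx, kelvin_eq_self hR hx, polarize, kelvin_eq_self hR hx]
    simp
  · push Not at hx
    obtain ⟨hxa, hx0⟩ := hx
    have hJ := conformalFactor_pos (a := a) hR x
    have hw : 0 ≤ conformalFactor a R x ^ (finrank ℝ E + μ / 2) := Real.rpow_nonneg hJ.le _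
    have hinv : kelvin μ a R (kelvin μ a R f) x = f x := by rw [kelvin_kelvin hR]
    have hside : 0 < e * spherePower a R (inversion a R x) ↔ ¬ 0 < e * spherePower a R x := by
      rw [spherePower_inversion hxa, not_lt, (mul_ne_zero he hx0).le_iff_lt,
        show e * -(conformalFactor a R x * spherePower a R x) =
          conformalFactor a R x * -(e * spherePower a R x) by ring, mul_pos_iff_of_pos_left hJ,
        neg_pos]
    rw [kelvin, polarize]
    by_cases h : 0 < e * spherePower a R x
    · rw [if_neg (by rwa [hside, not_not]), if_pos h, mul_min_of_nonneg _ _ hw, min_comm,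
        ← kelvin, ← kelvin, hinv]
    · rw [if_pos (by rwa [hside]), if_neg h, mul_max_of_nonneg _ _ hw, max_comm,
        ← kelvin, ← kelvin, hinv]

lemma polarize_add_kelvin_polarize (hR : 0 < R) (he : e ≠ 0) (f : E → ℝ) (x : E)
    {β : Type*} [AddCommMonoid β] (φ : ℝ → β) :
    φ (polarize μ a R e f x) + φ (kelvin μ a R (polarize μ a R e f) x) =
      φ (f x) + φ (kelvin μ a R f x) := by
  rw [kelvin_polarize hR he, polarize]
  split_ifs <;> rcases le_total (f x) (kelvin μ a R f x) with h | h <;> simp [h, add_comm]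

lemma polarize_sub_kelvin_polarize (hR : 0 < R) (he : e ≠ 0) (f : E → ℝ) (x : E) :
    polarize μ a R e f x - kelvin μ a R (polarize μ a R e f) x =
      SignType.sign (e * spherePower a R x) * |f x - kelvin μ a R f x| := by
  by_cases hx : spherePower a R x = 0
  · rw [kelvin_eq_self hR (.inr hx), hx]
    simp
  · rw [kelvin_polarize hR he, polarize]
    rcases lt_or_gt_of_ne (mul_ne_zero he hx) with h | h
    · rw [if_neg h.not_gt, if_neg h.not_gt, sign_neg h, ← max_sub_min_eq_abs, max_comm, min_comm]
      simp
    · rw [if_pos h, if_pos h, sign_pos h, ← max_sub_min_eq_abs, max_comm, min_comm]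
      simp

lemma polarize_nonneg (hR : 0 < R) (hf : ∀ x, 0 ≤ f x) (x : E) : 0 ≤ polarize μ a R e f x := by
  unfold polarize
  split_ifs
  · exact le_max_of_le_left (hf x)
  · exact le_min (hf x) (kelvin_nonneg hR hf x)

lemma measurable_polarize [FiniteDimensional ℝ E] [MeasurableSpace E] [BorelSpace E]
    (μ : ℝ) (a : E) (R e : ℝ) (hf : Measurable f) : Measurable (polarize μ a R e f) := by
  have hside : Measurable fun x => e * spherePower a R x := by unfold spherePower; fun_prop
  exact .ite (measurableSet_lt measurable_const hside) (hf.max (measurable_kelvin μ a R hf))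
    (hf.min (measurable_kelvin μ a R hf))

end Polarization

section FourPointEnergy

variable {E : Type*} [NormedAddCommGroup E] [InnerProductSpace ℝ E]
  {μ R e : ℝ} {a x y : E} {f g : E → ℝ}

/-- The integrand of `4 ∬ f(x) |x - y|^μ g(y)` after symmetrisation in both variables under the
reflection in the sphere of centre `a` and radius `R`. -/
noncomputable def fourPointEnergy (μ : ℝ) (a : E) (R : ℝ) (f g : E → ℝ) (x y : E) : ℝ :=
  (f x * g y + kelvin μ a R f x * kelvin μ a R g y) * dist x y ^ μ +
    (f x * kelvin μ a R g y + kelvin μ a R f x * g y) * reflectedKernel μ a R x y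

lemma fourPointEnergy_nonneg (hR : 0 < R) (hf : ∀ x, 0 ≤ f x) (hg : ∀ x, 0 ≤ g x) (x y : E) :
    0 ≤ fourPointEnergy μ a R f g x y := by
  have hf' := kelvin_nonneg (μ := μ) (a := a) hR hf x
  have hg' := kelvin_nonneg (μ := μ) (a := a) hR hg y
  have hK := reflectedKernel_nonneg (μ := μ) (a := a) hR x y
  have := hf x
  have := hg y
  unfold fourPointEnergy
  positivity

lemma two_mul_fourPointEnergy (f g : E → ℝ) (x y : E) :
    2 * fourPointEnergy μ a R f g x y =
      (f x + kelvin μ a R f x) * (g y + kelvin μ a R g y) *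
        (reflectedKernel μ a R x y + dist x y ^ μ) -
      (f x - kelvin μ a R f x) * (g y - kelvin μ a R g y) *
        (reflectedKernel μ a R x y - dist x y ^ μ) := by
  unfold fourPointEnergy
  ring

/- Polarization keeps `f + f'` (`f'` the Kelvin transform) and turns `f - f'` into `± |f - f'|`
according to the side of the sphere, so only the second term of `two_mul_fourPointEnergy` changes,
and the difference of the kernels is positive exactly when both points are on the same side. -/
lemma fourPointEnergy_sub_fourPointEnergy_polarize (hμ : 0 < μ) (hR : 0 < R) (he : e ≠ 0)
    (f g : E → ℝ) (hx : x ≠ a) :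
    2 * (fourPointEnergy μ a R f g x y -
        fourPointEnergy μ a R (polarize μ a R e f) (polarize μ a R e g) x y) =
      |reflectedKernel μ a R x y - dist x y ^ μ| *
        (|(f x - kelvin μ a R f x) * (g y - kelvin μ a R g y)| -
          SignType.sign (spherePower a R x) * SignType.sign (spherePower a R y) *
            ((f x - kelvin μ a R f x) * (g y - kelvin μ a R g y))) := by
  have hsign : ((SignType.sign (e * spherePower a R x) : SignType) : ℝ) *
      (SignType.sign (e * spherePower a R y) : SignType) =
      SignType.sign (spherePower a R x) * SignType.sign (spherePower a R y) := by
    rw [sign_mul, sign_mul]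
    rcases lt_or_gt_of_ne he with h | h <;> simp [h]
  have hK := sign_reflectedKernel_sub hμ hR hx y
  have hK_sign : _ = |reflectedKernel μ a R x y - dist x y ^ μ| :=
    sign_mul_self (reflectedKernel μ a R x y - dist x y ^ μ)
  have hK_abs := abs_mul_sign (reflectedKernel μ a R x y - dist x y ^ μ)
  rw [hK, SignType.coe_mul] at hK_sign hK_abs
  have hsum_f := polarize_add_kelvin_polarize (μ := μ) (a := a) hR he f x id
  have hsum_g := polarize_add_kelvin_polarize (μ := μ) (a := a) hR he g y id
  simp only [id] at hsum_f hsum_g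
  rw [mul_sub, two_mul_fourPointEnergy, two_mul_fourPointEnergy, polarize_sub_kelvin_polarize hR he,
    polarize_sub_kelvin_polarize hR he, hsum_f, hsum_g, abs_mul]
  linear_combination |f x - kelvin μ a R f x| * |g y - kelvin μ a R g y| *
    ((reflectedKernel μ a R x y - dist x y ^ μ) * hsign + hK_sign) +
    (f x - kelvin μ a R f x) * (g y - kelvin μ a R g y) * hK_abs

lemma fourPointEnergy_polarize_le (hμ : 0 < μ) (hR : 0 < R) (he : e ≠ 0) (f g : E → ℝ)
    (hx : x ≠ a) :
    fourPointEnergy μ a R (polarize μ a R e f) (polarize μ a R e g) x y ≤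
      fourPointEnergy μ a R f g x y := by
  have hsign : ∀ (σ : SignType) (t : ℝ), σ * t ≤ |t| := by
    rintro (_ | _ | _) t <;> simp [neg_le_abs, le_abs_self]
  have hdiff := fourPointEnergy_sub_fourPointEnergy_polarize (y := y) hμ hR he f g hx
  rw [← SignType.coe_mul] at hdiff
  have := mul_nonneg (abs_nonneg (reflectedKernel μ a R x y - dist x y ^ μ))
    (sub_nonneg.2 (hsign (SignType.sign (spherePower a R x) * SignType.sign (spherePower a R y))
      ((f x - kelvin μ a R f x) * (g y - kelvin μ a R g y))))
  linarith

lemma spherePower_mul_nonneg_of_fourPointEnergy_polarize_eq (hμ : 0 < μ) (hR : 0 < R) (he : e ≠ 0)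
    (hx : x ≠ a)
    (h : fourPointEnergy μ a R (polarize μ a R e f) (polarize μ a R e g) x y =
      fourPointEnergy μ a R f g x y) :
    0 ≤ spherePower a R x * (f x - kelvin μ a R f x) *
      (spherePower a R y * (g y - kelvin μ a R g y)) := by
  have hdiff := fourPointEnergy_sub_fourPointEnergy_polarize (y := y) hμ hR he f g hx
  have hK := sign_reflectedKernel_sub hμ hR hx y
  rw [h, sub_self, mul_zero, eq_comm, mul_eq_zero, abs_eq_zero] at hdiff
  set t := (f x - kelvin μ a R f x) * (g y - kelvin μ a R g y) with ht
  rw [← sign_mul] at hK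
  rw [← SignType.coe_mul, ← sign_mul] at hdiff
  suffices 0 ≤ spherePower a R x * spherePower a R y * t by rw [ht] at this; linarith
  rcases hdiff with hdiff | hdiff
  · rw [hdiff, sign_zero, eq_comm, sign_eq_zero_iff] at hK
    rw [hK, zero_mul]
  · rw [← abs_mul_sign (spherePower a R x * spherePower a R y), mul_assoc, ← sub_eq_zero.1 hdiff]
    positivity

end FourPointEnergy

section RieszEnergy

variable {E : Type*} [NormedAddCommGroup E] [InnerProductSpace ℝ E] [FiniteDimensional ℝ E]
  [MeasurableSpace E] [BorelSpace E] {μ R e : ℝ} {a : E} {f g : E → ℝ}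

/-- The energy `∬ f(x) k(x, y) g(y)` of a real-valued kernel. -/
noncomputable def kernelEnergy (k : E → E → ℝ) (f g : E → ℝ) : ℝ≥0∞ :=
  ∫⁻ x, ∫⁻ y, ENNReal.ofReal (f x * k x y * g y)

/-- The Riesz energy `∬ f(x) |x - y|^μ g(y)`. -/
noncomputable def rieszEnergy (μ : ℝ) (f g : E → ℝ) : ℝ≥0∞ :=
  kernelEnergy (fun x y => dist x y ^ μ) f g

lemma measurable_fourPointEnergy (μ : ℝ) (a : E) (R : ℝ) (hf : Measurable f) (hg : Measurable g) :
    Measurable fun p : E × E => fourPointEnergy μ a R f g p.1 p.2 := by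
  have hf' := measurable_kelvin μ a R hf
  have hg' := measurable_kelvin μ a R hg
  have hK := measurable_reflectedKernel μ a R
  unfold fourPointEnergy
  fun_prop

lemma kernelEnergy_eq_lintegral_prod {k : E → E → ℝ}
    (hk : Measurable fun p : E × E => k p.1 p.2) (hf : Measurable f) (hg : Measurable g) :
    kernelEnergy k f g = ∫⁻ p : E × E, ENNReal.ofReal (f p.1 * k p.1 p.2 * g p.2) := by
  have hm : Measurable fun p : E × E => ENNReal.ofReal (f p.1 * k p.1 p.2 * g p.2) := by fun_prop
  rw [Measure.volume_eq_prod, lintegral_prod _ hm.aemeasurable, kernelEnergy]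

lemma rieszEnergy_eq_lintegral_prod (hf : Measurable f) (hg : Measurable g) :
    rieszEnergy μ f g = ∫⁻ p : E × E, ENNReal.ofReal (f p.1 * dist p.1 p.2 ^ μ * g p.2) :=
  kernelEnergy_eq_lintegral_prod (by fun_prop) hf hg

variable [Nontrivial E]

lemma rieszEnergy_eq_reflectedKernel_kelvin_right (hR : 0 < R) (f g : E → ℝ) :
    rieszEnergy μ f g = kernelEnergy (reflectedKernel μ a R) f (kelvin μ a R g) := by
  refine lintegral_congr_ae ?_
  filter_upwards [Measure.ae_ne volume a] with x hx
  rw [lintegral_eq_lintegral_inversion a hR]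
  refine lintegral_congr_ae ?_
  filter_upwards [Measure.ae_ne volume a] with y hy
  rw [← ofReal_mul (pow_nonneg (conformalFactor_pos hR y).le _), mul_assoc (f x), mul_assoc (f x),
    reflectedKernel_mul_kelvin hR hx hy]
  ring_nf

lemma rieszEnergy_eq_reflectedKernel_kelvin_left (hR : 0 < R) (f g : E → ℝ) :
    rieszEnergy μ f g = kernelEnergy (reflectedKernel μ a R) (kelvin μ a R f) g := by
  rw [rieszEnergy, kernelEnergy, lintegral_eq_lintegral_inversion a hR]
  refine lintegral_congr fun x => ?_
  rw [← lintegral_const_mul' _ _ ofReal_ne_top]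
  refine lintegral_congr fun y => ?_
  rw [← ofReal_mul (pow_nonneg (conformalFactor_pos hR x).le _),
    conformalFactor_pow_finrank μ hR, reflectedKernel, kelvin]
  congr 1
  ring

lemma rieszEnergy_kelvin_kelvin (hR : 0 < R) (f g : E → ℝ) :
    rieszEnergy μ (kelvin μ a R f) (kelvin μ a R g) = rieszEnergy μ f g := by
  rw [rieszEnergy_eq_reflectedKernel_kelvin_left hR, kelvin_kelvin hR,
    ← rieszEnergy_eq_reflectedKernel_kelvin_right hR]

lemma ae_fourPointEnergy_polarize_le (hR : 0 < R) (hμ : 0 < μ) (he : e ≠ 0) (f g : E → ℝ) :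
    ∀ᵐ p : E × E, ENNReal.ofReal
        (fourPointEnergy μ a R (polarize μ a R e f) (polarize μ a R e g) p.1 p.2) ≤
      ENNReal.ofReal (fourPointEnergy μ a R f g p.1 p.2) := by
  have hne : ∀ᵐ p : E × E, p.1 ≠ a :=
    Measure.quasiMeasurePreserving_fst.ae (Measure.ae_ne volume a)
  filter_upwards [hne] with p hp
  exact ofReal_le_ofReal (fourPointEnergy_polarize_le hμ hR he f g hp)

variable (hR : 0 < R) (hf : Measurable f) (hg : Measurable g) (hf0 : ∀ x, 0 ≤ f x)
  (hg0 : ∀ x, 0 ≤ g x)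
include hR hf hg hf0 hg0

lemma lintegral_fourPointEnergy :
    ∫⁻ p : E × E, ENNReal.ofReal (fourPointEnergy μ a R f g p.1 p.2) = 4 * rieszEnergy μ f g := by
  have hf' := measurable_kelvin μ a R hf
  have hg' := measurable_kelvin μ a R hg
  have hf0' := kelvin_nonneg (μ := μ) (a := a) hR hf0
  have hg0' := kelvin_nonneg (μ := μ) (a := a) hR hg0
  have hK := measurable_reflectedKernel μ a R
  have hK0 := reflectedKernel_nonneg (μ := μ) (a := a) hR
  have hsplit (p : E × E) : ENNReal.ofReal (fourPointEnergy μ a R f g p.1 p.2) =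
      ENNReal.ofReal (f p.1 * dist p.1 p.2 ^ μ * g p.2) +
      (ENNReal.ofReal (kelvin μ a R f p.1 * dist p.1 p.2 ^ μ * kelvin μ a R g p.2) +
      (ENNReal.ofReal (f p.1 * reflectedKernel μ a R p.1 p.2 * kelvin μ a R g p.2) +
        ENNReal.ofReal (kelvin μ a R f p.1 * reflectedKernel μ a R p.1 p.2 * g p.2))) := by
    have := hf0 p.1
    have := hg0 p.2
    have := hf0' p.1
    have := hg0' p.2
    have := hK0 p.1 p.2
    rw [← ofReal_add (by positivity) (by positivity), ← ofReal_add (by positivity) (by positivity),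
      ← ofReal_add (by positivity) (by positivity), fourPointEnergy]
    congr 1
    ring
  simp_rw [hsplit]
  rw [lintegral_add_left (by fun_prop), lintegral_add_left (by fun_prop),
    lintegral_add_left (by fun_prop), ← rieszEnergy_eq_lintegral_prod hf hg,
    ← rieszEnergy_eq_lintegral_prod hf' hg', ← kernelEnergy_eq_lintegral_prod hK hf hg',
    ← kernelEnergy_eq_lintegral_prod hK hf' hg,
    rieszEnergy_kelvin_kelvin hR, ← rieszEnergy_eq_reflectedKernel_kelvin_left hR,
    ← rieszEnergy_eq_reflectedKernel_kelvin_right hR]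
  ring

variable (hμ : 0 < μ) (he : e ≠ 0)
include hμ he

theorem rieszEnergy_polarize_le :
    rieszEnergy μ (polarize μ a R e f) (polarize μ a R e g) ≤ rieszEnergy μ f g := by
  rw [← ENNReal.mul_le_mul_iff_right (a := 4) (by norm_num) (by norm_num),
    ← lintegral_fourPointEnergy hR (measurable_polarize μ a R e hf) (measurable_polarize μ a R e hg)
      (polarize_nonneg hR hf0) (polarize_nonneg hR hg0),
    ← lintegral_fourPointEnergy hR hf hg hf0 hg0]
  exact lintegral_mono_ae (ae_fourPointEnergy_polarize_le hR hμ he f g)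

theorem ae_spherePower_mul_nonneg_of_rieszEnergy_le_polarize (hfin : rieszEnergy μ f g ≠ ∞)
    (hle : rieszEnergy μ f g ≤ rieszEnergy μ (polarize μ a R e f) (polarize μ a R e g)) :
    ∀ᵐ x, ∀ᵐ y, 0 ≤ spherePower a R x * (f x - kelvin μ a R f x) *
      (spherePower a R y * (g y - kelvin μ a R g y)) := by
  have hPf0 := polarize_nonneg (μ := μ) (a := a) (e := e) hR hf0
  have hPg0 := polarize_nonneg (μ := μ) (a := a) (e := e) hR hg0
  have hint := lintegral_fourPointEnergy (μ := μ) (a := a) hR hf hg hf0 hg0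
  have hint_pol := lintegral_fourPointEnergy (μ := μ) (a := a) hR (measurable_polarize μ a R e hf)
    (measurable_polarize μ a R e hg) hPf0 hPg0
  have heq := ae_eq_of_ae_le_of_lintegral_le (ae_fourPointEnergy_polarize_le hR hμ he f g)
    (by
      rw [hint_pol]
      exact mul_ne_top (by norm_num)
        (ne_top_of_le_ne_top hfin (rieszEnergy_polarize_le hR hf hg hf0 hg0 hμ he)))
    (measurable_fourPointEnergy μ a R hf hg).ennreal_ofReal.aemeasurable
    (by rw [hint, hint_pol]; gcongr)
  filter_upwards [Measure.ae_ae_of_ae_prod heq, Measure.ae_ne volume a] with x hx hxa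
  filter_upwards [hx] with y hy
  refine spherePower_mul_nonneg_of_fourPointEnergy_polarize_eq hμ hR he hxa ?_
  exact (ofReal_eq_ofReal_iff (fourPointEnergy_nonneg hR hPf0 hPg0 x y)
    (fourPointEnergy_nonneg hR hf0 hg0 x y)).1 hy

end RieszEnergy

/-! ### Potentials and bubbles -/

section StereoWeight

open Filter Topology

variable {E : Type*} [NormedAddCommGroup E]

/-- The conformal factor `(1 + ‖x‖²)⁻¹` of the stereographic projection (up to a factor `2`). -/
noncomputable def stereoWeight (x : E) : ℝ := (1 + ‖x‖ ^ 2)⁻¹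

lemma stereoWeight_pos (x : E) : 0 < stereoWeight x := by unfold stereoWeight; positivity

lemma stereoWeight_le_one (x : E) : stereoWeight x ≤ 1 :=
  inv_le_one_of_one_le₀ (by nlinarith [sq_nonneg ‖x‖])

lemma stereoWeight_zero : stereoWeight (0 : E) = 1 := by simp [stereoWeight]

lemma stereoWeight_rpow_neg_mul_rpow (c : ℝ) (x : E) :
    stereoWeight x ^ (-c) * stereoWeight x ^ c = 1 := by
  rw [← Real.rpow_add (stereoWeight_pos x), neg_add_cancel, Real.rpow_zero]

lemma one_le_stereoWeight_rpow_neg {c : ℝ} (hc : 0 ≤ c) (x : E) : 1 ≤ stereoWeight x ^ (-c) :=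
  Real.one_le_rpow_of_pos_of_le_one_of_nonpos (stereoWeight_pos x) (stereoWeight_le_one x)
    (neg_nonpos.2 hc)

lemma continuous_stereoWeight : Continuous (stereoWeight : E → ℝ) :=
  Continuous.inv₀ (by fun_prop) fun x => by positivity

lemma continuous_stereoWeight_rpow (c : ℝ) : Continuous fun x : E => stereoWeight x ^ c :=
  continuous_stereoWeight.rpow_const fun x => .inl (stereoWeight_pos x).ne'

lemma dist_rpow_le_stereoWeight {μ : ℝ} (hμ : 0 < μ) (x y : E) :
    dist x y ^ μ ≤ (2 * (1 + ‖x‖ ^ 2)) ^ (μ / 2) * stereoWeight y ^ (-(μ / 2)) := by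
  rw [dist_rpow_eq_sq_rpow, stereoWeight, Real.inv_rpow (by positivity),
    Real.rpow_neg (by positivity), inv_inv, ← Real.mul_rpow (by positivity) (by positivity)]
  refine Real.rpow_le_rpow (by positivity) ?_ (by positivity)
  have hdist : dist x y ^ 2 ≤ (‖x‖ + ‖y‖) ^ 2 := by
    gcongr
    exact dist_le_norm_add_norm x y
  nlinarith [sq_nonneg (‖x‖ - ‖y‖), mul_nonneg (sq_nonneg ‖x‖) (sq_nonneg ‖y‖)]

variable [InnerProductSpace ℝ E]

lemma integrable_stereoWeight_rpow [FiniteDimensional ℝ E] [MeasurableSpace E] [BorelSpace E]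
    {c : ℝ} (hc : finrank ℝ E < 2 * c) :
    Integrable fun x : E => stereoWeight x ^ c := by
  refine (integrable_rpow_neg_one_add_norm_sq (μ := volume) hc).congr (.of_forall fun x => ?_)
  simp only [stereoWeight]
  rw [Real.inv_rpow (by positivity), ← Real.rpow_neg (by positivity)]
  congr 1; ring

/-- The stereographic weight seen through the inversion in the sphere of centre `a` and
radius `R`. -/
noncomputable def reflectedWeight (a : E) (R : ℝ) (x : E) : ℝ :=
  conformalFactor a R x * stereoWeight (inversion a R x)

variable {a x : E} {R : ℝ}

lemma reflectedWeight_pos (hR : 0 < R) (x : E) : 0 < reflectedWeight a R x :=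
  mul_pos (conformalFactor_pos hR x) (stereoWeight_pos _)

lemma inv_reflectedWeight (hR : 0 < R) (hx : x ≠ a) :
    (reflectedWeight a R x)⁻¹ =
      (stereoWeight x)⁻¹ + (1 + ‖a‖ ^ 2 - R ^ 2) * spherePower a R x / R ^ 2 := by
  have h := dist_inversion_sq hR hx (0 : E)
  have := dist_pos.2 hx
  simp only [spherePower, dist_zero_right, dist_zero_left] at h ⊢
  rw [reflectedWeight, mul_inv, stereoWeight, stereoWeight, inv_inv, inv_inv, mul_add, h,
    conformalFactor_of_ne hx]
  field_simp
  ring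

lemma reflectedWeight_le (hR : 0 < R) (h : 0 ≤ (1 + ‖a‖ ^ 2 - R ^ 2) * spherePower a R x) :
    reflectedWeight a R x ≤ stereoWeight x := by
  rcases eq_or_ne x a with rfl | hx
  · simp [reflectedWeight, conformalFactor]
  · rw [← inv_le_inv₀ (stereoWeight_pos x) (reflectedWeight_pos hR x), inv_reflectedWeight hR hx]
    exact le_add_of_nonneg_right (by positivity)

lemma le_reflectedWeight (hR : 0 < R) (h : (1 + ‖a‖ ^ 2 - R ^ 2) * spherePower a R x ≤ 0) :
    stereoWeight x ≤ reflectedWeight a R x := by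
  rcases eq_or_ne x a with rfl | hx
  · simp [reflectedWeight, conformalFactor]
  · rw [← inv_le_inv₀ (reflectedWeight_pos hR x) (stereoWeight_pos x), inv_reflectedWeight hR hx]
    exact add_le_of_nonpos_right (div_nonpos_of_nonpos_of_nonneg h (sq_nonneg R))

lemma reflectedWeight_ne (hR : 0 < R) (hx : x ≠ a)
    (h : (1 + ‖a‖ ^ 2 - R ^ 2) * spherePower a R x ≠ 0) :
    reflectedWeight a R x ≠ stereoWeight x := by
  rw [← inv_inj.ne, inv_reflectedWeight hR hx]
  simp [h, hR.ne']

end StereoWeight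

section FinitePotential

open Filter Topology

variable {E : Type*} [NormedAddCommGroup E] [InnerProductSpace ℝ E] [FiniteDimensional ℝ E]
  [MeasurableSpace E] [BorelSpace E]

/-- The nonnegative measurable functions whose potential is finite everywhere, expressed through
the integrability of the moment of order `μ`. -/
structure HasFinitePotential (μ : ℝ) (f : E → ℝ) : Prop where
  measurable : Measurable f
  nonneg : ∀ x, 0 ≤ f x
  integrable_moment : Integrable fun y => stereoWeight y ^ (-(μ / 2)) * f y

variable {μ : ℝ} {f : E → ℝ}

namespace HasFinitePotential

lemma mono {g : E → ℝ} (hg : HasFinitePotential μ g) (hf : Measurable f) (hf0 : ∀ x, 0 ≤ f x)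
    (hfg : ∀ x, f x ≤ g x) : HasFinitePotential μ f := by
  refine ⟨hf, hf0, hg.integrable_moment.mono' ?_ (.of_forall fun x => ?_)⟩
  · exact ((continuous_stereoWeight_rpow _).measurable.mul hf).aestronglyMeasurable
  · have hw := Real.rpow_nonneg (stereoWeight_pos x).le (-(μ / 2))
    rw [Real.norm_of_nonneg (mul_nonneg hw (hf0 x))]
    exact mul_le_mul_of_nonneg_left (hfg x) hw

variable (h : HasFinitePotential μ f) (hμ : 0 < μ)
include h hμ

lemma integrable_dist_rpow_mul (x : E) : Integrable fun y => dist x y ^ μ * f y := by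
  have := h.measurable
  refine (h.integrable_moment.const_mul ((2 * (1 + ‖x‖ ^ 2)) ^ (μ / 2))).mono'
    (Measurable.aestronglyMeasurable (by fun_prop)) (.of_forall fun y => ?_)
  rw [Real.norm_of_nonneg (mul_nonneg (by positivity) (h.nonneg y)), ← mul_assoc]
  exact mul_le_mul_of_nonneg_right (dist_rpow_le_stereoWeight hμ x y) (h.nonneg y)

lemma integrable : Integrable f := by
  refine h.integrable_moment.mono' h.measurable.aestronglyMeasurable (.of_forall fun y => ?_)
  rw [Real.norm_of_nonneg (h.nonneg y)]
  exact le_mul_of_one_le_left (h.nonneg y) (one_le_stereoWeight_rpow_neg (by positivity) y)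

lemma tendsto_integral_abs_sub {ι : Type*} {l : Filter ι} [l.IsCountablyGenerated] {c : ι → ℝ}
    {c₀ : ℝ} {z : ι → E} {z₀ : E} (hc : Tendsto c l (𝓝 c₀)) (hz : Tendsto z l (𝓝 z₀)) :
    Tendsto (fun i => ∫ y, |c i * dist (z i) y ^ μ - c₀ * dist z₀ y ^ μ| * f y) l (𝓝 0) := by
  have hf := h.measurable
  have hc' : ∀ᶠ i in l, |c i| ≤ |c₀| + 1 := hc.abs.eventually (eventually_le_nhds (by linarith))
  have hz' : ∀ᶠ i in l, ‖z i‖ ≤ ‖z₀‖ + 1 := hz.norm.eventually (eventually_le_nhds (by linarith))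
  set C := (2 * (1 + (‖z₀‖ + 1) ^ 2)) ^ (μ / 2)
  have hbound : ∀ (b : ℝ) (u y : E), |b| ≤ |c₀| + 1 → ‖u‖ ≤ ‖z₀‖ + 1 →
      |b * dist u y ^ μ| ≤ (|c₀| + 1) * (C * stereoWeight y ^ (-(μ / 2))) := by
    intro b u y hb hu
    have hw := Real.rpow_nonneg (stereoWeight_pos y).le (-(μ / 2))
    rw [abs_mul, abs_of_nonneg (Real.rpow_nonneg dist_nonneg μ)]
    refine mul_le_mul hb ((dist_rpow_le_stereoWeight hμ u y).trans ?_) (by positivity)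
      (by positivity)
    simp only [C]
    gcongr
  rw [← integral_zero E ℝ]
  refine tendsto_integral_filter_of_dominated_convergence
    (fun y => 2 * ((|c₀| + 1) * C) * (stereoWeight y ^ (-(μ / 2)) * f y))
    (.of_forall fun i => Measurable.aestronglyMeasurable (by fun_prop)) ?_
    (h.integrable_moment.const_mul _) (.of_forall fun y => ?_)
  · filter_upwards [hc', hz'] with i hci hzi
    refine .of_forall fun y => ?_
    rw [Real.norm_of_nonneg (mul_nonneg (abs_nonneg _) (h.nonneg y)), ← mul_assoc]
    refine mul_le_mul_of_nonneg_right ((abs_sub _ _).trans ?_) (h.nonneg y)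
    linarith [hbound _ _ y hci hzi, hbound c₀ z₀ y (by linarith) (by linarith)]
  · have hdist : Tendsto (fun i => dist (z i) y ^ μ) l (𝓝 (dist z₀ y ^ μ)) :=
      (hz.dist tendsto_const_nhds).rpow_const (.inr hμ.le)
    simpa using (((hc.mul hdist).sub_const (c₀ * dist z₀ y ^ μ)).abs).mul_const (f y)

lemma abs_potential_sub_le {g : E → ℝ} (hg : HasFinitePotential μ g) (hfg : ∀ x, f x ≤ g x)
    (c c₀ : ℝ) (z z₀ : E) :
    |c * potential μ f z - c₀ * potential μ f z₀| ≤
      ∫ y, |c * dist z y ^ μ - c₀ * dist z₀ y ^ μ| * g y := by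
  have hint {φ : E → ℝ} (hφ : HasFinitePotential μ φ) :
      Integrable fun y => (c * dist z y ^ μ - c₀ * dist z₀ y ^ μ) * φ y := by
    simp only [sub_mul, mul_assoc]
    exact ((hφ.integrable_dist_rpow_mul hμ z).const_mul c).sub
      ((hφ.integrable_dist_rpow_mul hμ z₀).const_mul c₀)
  have hsub : c * potential μ f z - c₀ * potential μ f z₀ =
      ∫ y, (c * dist z y ^ μ - c₀ * dist z₀ y ^ μ) * f y := by
    simp only [sub_mul, mul_assoc]
    rw [integral_sub ((h.integrable_dist_rpow_mul hμ z).const_mul c)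
      ((h.integrable_dist_rpow_mul hμ z₀).const_mul c₀), integral_const_mul, integral_const_mul]
    rfl
  rw [hsub]
  refine abs_integral_le_integral_abs.trans (integral_mono (hint h).abs ?_ fun y => ?_)
  · simpa only [abs_mul, abs_of_nonneg (hg.nonneg _)] using (hint hg).abs
  · simp only [abs_mul, abs_of_nonneg (h.nonneg y)]
    exact mul_le_mul_of_nonneg_left (hfg y) (abs_nonneg _)

lemma continuous_potential : Continuous (potential μ f) := by
  refine continuous_iff_continuousAt.2 fun x => tendsto_iff_norm_sub_tendsto_zero.2 ?_
  refine squeeze_zero (fun _ => norm_nonneg _) (fun y => ?_)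
    (h.tendsto_integral_abs_sub hμ (tendsto_const_nhds (x := 1)) tendsto_id)
  simpa using h.abs_potential_sub_le hμ h (fun _ => le_rfl) 1 1 y x

end HasFinitePotential

lemma potential_nonneg (hf : ∀ x, 0 ≤ f x) (x : E) : 0 ≤ potential μ f x :=
  integral_nonneg fun y => mul_nonneg (Real.rpow_nonneg dist_nonneg _) (hf y)

end FinitePotential

section Bubble

variable {E : Type*} [NormedAddCommGroup E] [InnerProductSpace ℝ E]

/-- The standard bubble, which is the extremal function centred at the origin. -/
noncomputable def bubble (μ : ℝ) (x : E) : ℝ := stereoWeight x ^ (finrank ℝ E + μ / 2)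

variable {μ m R : ℝ} {a x : E} {f g : E → ℝ}

lemma bubble_pos (μ : ℝ) (x : E) : 0 < bubble μ x := Real.rpow_pos_of_pos (stereoWeight_pos x) _

lemma stereoWeight_rpow_neg_mul_bubble (μ : ℝ) (x : E) :
    stereoWeight x ^ (-(μ / 2)) * bubble μ x = stereoWeight x ^ (finrank ℝ E : ℝ) := by
  rw [bubble, ← Real.rpow_add (stereoWeight_pos x), neg_add_cancel_comm_assoc]

lemma kelvin_bubble (hR : 0 < R) (x : E) :
    kelvin μ a R (bubble μ) x = reflectedWeight a R x ^ (finrank ℝ E + μ / 2) := by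
  rw [kelvin, bubble, reflectedWeight,
    Real.mul_rpow (conformalFactor_pos hR x).le (stereoWeight_pos _).le]

lemma kelvin_mono (hR : 0 < R) (hfg : ∀ x, f x ≤ g x) (x : E) :
    kelvin μ a R f x ≤ kelvin μ a R g x :=
  mul_le_mul_of_nonneg_left (hfg _) (Real.rpow_nonneg (conformalFactor_pos hR x).le _)

lemma kelvin_const_mul (c : ℝ) (f : E → ℝ) (x : E) :
    kelvin μ a R (fun x => c * f x) x = c * kelvin μ a R f x :=
  mul_left_comm _ _ _

variable [MeasurableSpace E]

/-- The measurable functions between `m` times the standard bubble and the standard bubble. -/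
structure BubbleComparable (μ m : ℝ) (f : E → ℝ) : Prop where
  measurable : Measurable f
  lower : ∀ x, m * bubble μ x ≤ f x
  upper : ∀ x, f x ≤ bubble μ x

namespace BubbleComparable

lemma nonneg (h : BubbleComparable μ m f) (hm : 0 ≤ m) (x : E) : 0 ≤ f x :=
  (mul_nonneg hm (bubble_pos μ x).le).trans (h.lower x)

lemma abs_sub_le (hf : BubbleComparable μ m f) (hg : BubbleComparable μ m g) (hm : 0 ≤ m) (x : E) :
    |f x - g x| ≤ bubble μ x :=
  abs_sub_le_of_nonneg_of_le (hf.nonneg hm x) (hf.upper x) (hg.nonneg hm x) (hg.upper x)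

end BubbleComparable

variable [BorelSpace E]

lemma measurable_bubble (μ : ℝ) : Measurable (bubble μ : E → ℝ) :=
  (continuous_stereoWeight_rpow _).measurable

lemma bubbleComparable_bubble (μ : ℝ) : BubbleComparable μ 1 (bubble μ : E → ℝ) :=
  ⟨measurable_bubble μ, fun _ => (one_mul _).le, fun _ => le_rfl⟩

variable [FiniteDimensional ℝ E]

lemma hasFinitePotential_bubble [Nontrivial E] (μ : ℝ) :
    HasFinitePotential μ (bubble μ : E → ℝ) := by
  refine ⟨measurable_bubble μ, fun x => (bubble_pos μ x).le, ?_⟩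
  simp only [stereoWeight_rpow_neg_mul_bubble]
  refine integrable_stereoWeight_rpow ?_
  have : (0 : ℝ) < finrank ℝ E := mod_cast finrank_pos
  linarith

namespace BubbleComparable

lemma hasFinitePotential [Nontrivial E] (h : BubbleComparable μ m f) (hm : 0 ≤ m) :
    HasFinitePotential μ f :=
  (hasFinitePotential_bubble μ).mono h.measurable (h.nonneg hm) h.upper

lemma polarize (h : BubbleComparable μ m f) (hμ : 0 < μ) (hm : 0 ≤ m) (hR : 0 < R) (a : E) :
    BubbleComparable μ m (polarize μ a R (1 + ‖a‖ ^ 2 - R ^ 2) f) := by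
  refine ⟨measurable_polarize _ _ _ _ h.measurable, fun x => ?_, fun x => ?_⟩ <;>
    rw [ReversedHLS.polarize] <;> split_ifs with hx
  · exact le_max_of_le_left (h.lower x)
  · refine le_min (h.lower x) (le_trans ?_ (kelvin_mono hR h.lower x))
    rw [kelvin_const_mul, kelvin_bubble hR, bubble]
    have := stereoWeight_pos x
    gcongr
    exact le_reflectedWeight hR (not_lt.1 hx)
  · refine max_le (h.upper x) ((kelvin_mono hR h.upper x).trans ?_)
    rw [kelvin_bubble hR, bubble]
    exact Real.rpow_le_rpow (reflectedWeight_pos hR x).le (reflectedWeight_le hR hx.le)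
      (by positivity)
  · exact min_le_of_left_le (h.upper x)

end BubbleComparable

end Bubble

/-! ### Asymptotically polarized sequences -/

section ExchangeSphere

variable {E : Type*} [NormedAddCommGroup E] [InnerProductSpace ℝ E]

/-- The centre of the sphere whose inversion exchanges the origin and `y` and corresponds, under
stereographic projection, to a reflection of the round sphere in a hyperplane. -/
noncomputable def exchangeCenter (y : E) : E := (-(‖y‖ ^ 2)⁻¹) • y

/-- The radius of the sphere whose centre is `exchangeCenter y`. -/
noncomputable def exchangeRadius (y : E) : ℝ := √(1 + ‖exchangeCenter y‖ ^ 2)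

lemma exchangeRadius_pos (y : E) : 0 < exchangeRadius y := Real.sqrt_pos.2 (by positivity)

lemma exchangeRadius_sq (y : E) : exchangeRadius y ^ 2 = 1 + ‖exchangeCenter y‖ ^ 2 :=
  Real.sq_sqrt (by positivity)

variable {y : E}

lemma norm_exchangeCenter (hy : y ≠ 0) : ‖exchangeCenter y‖ = ‖y‖⁻¹ := by
  have := norm_pos_iff.2 hy
  rw [exchangeCenter, norm_smul, norm_neg, Real.norm_of_nonneg (by positivity)]
  field_simp

lemma exchangeCenter_ne_zero (hy : y ≠ 0) : exchangeCenter y ≠ 0 := by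
  simp [← norm_ne_zero_iff, norm_exchangeCenter hy, hy]

lemma dist_exchangeCenter (hy : y ≠ 0) : dist y (exchangeCenter y) = ‖y‖⁻¹ * (1 + ‖y‖ ^ 2) := by
  have := norm_pos_iff.2 hy
  have hsub : y - exchangeCenter y = (1 + (‖y‖ ^ 2)⁻¹) • y := by rw [exchangeCenter]; module
  rw [dist_eq_norm, hsub, norm_smul, Real.norm_of_nonneg (by positivity)]
  field_simp
  ring

lemma ne_exchangeCenter (hy : y ≠ 0) : y ≠ exchangeCenter y := by
  have := norm_pos_iff.2 hy
  rw [← dist_pos, dist_exchangeCenter hy]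
  positivity

lemma spherePower_exchange_zero :
    spherePower (exchangeCenter y) (exchangeRadius y) 0 = -1 := by
  rw [spherePower, exchangeRadius_sq, dist_zero_left]
  ring

lemma spherePower_exchange_self (hy : y ≠ 0) :
    spherePower (exchangeCenter y) (exchangeRadius y) y = 1 + ‖y‖ ^ 2 := by
  have := norm_pos_iff.2 hy
  rw [spherePower, exchangeRadius_sq, dist_exchangeCenter hy, norm_exchangeCenter hy]
  field_simp
  ring

lemma inversion_exchange_zero (hy : y ≠ 0) :
    inversion (exchangeCenter y) (exchangeRadius y) 0 = y := by
  have := norm_pos_iff.2 hy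
  have hratio : (1 + ‖y‖⁻¹ ^ 2) / ‖y‖⁻¹ ^ 2 = ‖y‖ ^ 2 + 1 := by field_simp
  have hcoef : (‖y‖ ^ 2 + 1) * (‖y‖ ^ 2)⁻¹ - (‖y‖ ^ 2)⁻¹ = 1 := by field_simp; ring
  rw [inversion, dist_zero_left, div_pow, exchangeRadius_sq, norm_exchangeCenter hy, hratio,
    vsub_eq_sub, vadd_eq_add, exchangeCenter]
  calc _ = ((‖y‖ ^ 2 + 1) * (‖y‖ ^ 2)⁻¹ - (‖y‖ ^ 2)⁻¹) • y := by module
    _ = y := by rw [hcoef, one_smul]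

lemma inversion_exchange_self (hy : y ≠ 0) :
    inversion (exchangeCenter y) (exchangeRadius y) y = 0 := by
  have h := inversion_inversion (exchangeCenter y) (exchangeRadius_pos y).ne' (0 : E)
  rwa [inversion_exchange_zero hy] at h

lemma conformalFactor_exchange_self (hy : y ≠ 0) :
    conformalFactor (exchangeCenter y) (exchangeRadius y) y = stereoWeight y := by
  have := norm_pos_iff.2 hy
  rw [conformalFactor_of_ne (ne_exchangeCenter hy), dist_exchangeCenter hy, div_pow,
    exchangeRadius_sq, norm_exchangeCenter hy, stereoWeight]
  field_simp
  ring

lemma conformalFactor_exchange_zero (hy : y ≠ 0) :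
    conformalFactor (exchangeCenter y) (exchangeRadius y) 0 = (stereoWeight y)⁻¹ := by
  rw [← inversion_exchange_self hy, conformalFactor_inversion (exchangeRadius_pos y),
    conformalFactor_exchange_self hy]

lemma reflectedWeight_exchange (x : E) :
    reflectedWeight (exchangeCenter y) (exchangeRadius y) x = stereoWeight x := by
  have hR := exchangeRadius_pos y
  have he : 1 + ‖exchangeCenter y‖ ^ 2 - exchangeRadius y ^ 2 = 0 := by
    rw [exchangeRadius_sq, sub_self]
  exact le_antisymm (reflectedWeight_le hR (by simp [he])) (le_reflectedWeight hR (by simp [he]))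

lemma kelvin_exchange_bubble (μ : ℝ) :
    kelvin μ (exchangeCenter y) (exchangeRadius y) (bubble μ) = bubble μ := by
  ext x
  rw [kelvin_bubble (exchangeRadius_pos y), reflectedWeight_exchange, bubble]

end ExchangeSphere

section PotentialBubble

variable {E : Type*} [NormedAddCommGroup E] [InnerProductSpace ℝ E] [FiniteDimensional ℝ E]
  [MeasurableSpace E] [BorelSpace E] [Nontrivial E] {μ : ℝ}

theorem potential_bubble (hμ : 0 < μ) (y : E) :
    potential μ (bubble μ) y = potential μ (bubble μ) (0 : E) * stereoWeight y ^ (-(μ / 2)) := by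
  rcases eq_or_ne y 0 with rfl | hy
  · simp [stereoWeight_zero]
  have h := two_mul_potential_inversion_sub (exchangeRadius_pos y) (ne_exchangeCenter hy)
    ((hasFinitePotential_bubble μ).integrable_dist_rpow_mul hμ)
  rw [kelvin_exchange_bubble, inversion_exchange_self hy, conformalFactor_exchange_self hy] at h
  simp only [sub_self, mul_zero, integral_zero] at h
  linarith

end PotentialBubble

section Stability

open Filter Topology

variable {E : Type*} [NormedAddCommGroup E]

section Pointwise

variable {μ R e : ℝ} {a x : E}

lemma continuousAt_conformalFactor_radius (hx : x ≠ a) :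
    ContinuousAt (fun R => conformalFactor a R x) R := by
  simp only [conformalFactor_of_ne hx]
  fun_prop

lemma frequently_pos_mul_spherePower (hR : 0 < R) (hRa : R ^ 2 = 1 + ‖a‖ ^ 2)
    (hpow : spherePower a R x ≠ 0) :
    ∃ᶠ R' in 𝓝 R, 0 < (1 + ‖a‖ ^ 2 - R' ^ 2) * spherePower a R' x := by
  have hcont : ContinuousAt (fun R' => spherePower a R' x) R := by
    unfold spherePower
    fun_prop
  rw [← hRa]
  rcases lt_or_gt_of_ne hpow with hneg | hpos
  · refine Frequently.filter_mono (Eventually.frequently ?_) (nhdsWithin_le_nhds (s := Set.Ioi R))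
    filter_upwards [self_mem_nhdsWithin, nhdsWithin_le_nhds (hcont.eventually (gt_mem_nhds hneg))]
      with R' hR' hx'
    exact mul_pos_of_neg_of_neg (sub_neg.2 (pow_lt_pow_left₀ hR' hR.le two_ne_zero)) hx'
  · refine Frequently.filter_mono (Eventually.frequently ?_) (nhdsWithin_le_nhds (s := Set.Iio R))
    filter_upwards [self_mem_nhdsWithin, nhdsWithin_le_nhds (lt_mem_nhds hR),
      nhdsWithin_le_nhds (hcont.eventually (lt_mem_nhds hpos))] with R' hR' hR'0 hx'
    exact mul_pos (sub_pos.2 (pow_lt_pow_left₀ hR' hR'0.le two_ne_zero)) hx'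

variable [InnerProductSpace ℝ E]

lemma neg_abs_mul_abs_polarize_sub_le (hμ : 0 < μ) (hR : 0 < R) (hx : x ≠ a)
    (hex : 0 < e * spherePower a R x) (f : E → ℝ) (y : E) :
    -(|reflectedKernel μ a R x y - dist x y ^ μ| * |polarize μ a R e f y - f y|) ≤
      (reflectedKernel μ a R x y - dist x y ^ μ) * (f y - kelvin μ a R f y) := by
  have : e ≠ 0 := left_ne_zero_of_mul hex.ne'
  have hsign : SignType.sign (reflectedKernel μ a R x y - dist x y ^ μ) =
      SignType.sign (e * spherePower a R y) := by
    have hex' := sign_pos hex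
    rw [sign_mul] at hex'
    rw [sign_reflectedKernel_sub hμ hR hx, sign_mul]
    generalize SignType.sign (spherePower a R y) = u
    revert hex'
    generalize SignType.sign e = s
    generalize SignType.sign (spherePower a R x) = t
    revert s t u
    decide
  by_cases hey : 0 < e * spherePower a R y
  · have hker : 0 < reflectedKernel μ a R x y - dist x y ^ μ := by
      rwa [← sign_eq_one_iff, hsign, sign_eq_one_iff]
    simp only [polarize, if_pos hey, abs_of_pos hker, ← mul_neg]
    refine mul_le_mul_of_nonneg_left ?_ hker.le
    rw [abs_of_nonneg (sub_nonneg.2 (le_max_left _ _)), neg_sub]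
    exact sub_le_sub_left (le_max_right _ _) _
  · have hker : reflectedKernel μ a R x y - dist x y ^ μ ≤ 0 := by
      rwa [← sign_nonpos_iff, hsign, sign_nonpos_iff, ← not_lt]
    simp only [polarize, if_neg hey, abs_of_nonpos hker, neg_mul, neg_neg]
    refine mul_le_mul_of_nonpos_left ?_ hker
    rw [abs_of_nonpos (sub_nonpos.2 (min_le_left _ _)), neg_sub]
    exact sub_le_sub_left (min_le_right _ _) _

lemma exists_abs_reflectedKernel_sub_le (hμ : 0 < μ) (hR : 0 < R) (a x : E) :
    ∃ C : ℝ, 0 ≤ C ∧ ∀ y,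
      |reflectedKernel μ a R x y - dist x y ^ μ| ≤ C * stereoWeight y ^ (-(μ / 2)) := by
  have hJ := conformalFactor_pos (a := a) hR x
  refine ⟨conformalFactor a R x ^ (-(μ / 2)) * (2 * (1 + ‖inversion a R x‖ ^ 2)) ^ (μ / 2) +
    (2 * (1 + ‖x‖ ^ 2)) ^ (μ / 2), by positivity, fun y => (abs_sub _ _).trans ?_⟩
  rw [abs_of_nonneg (reflectedKernel_nonneg hR x y), abs_of_nonneg (by positivity), add_mul,
    mul_assoc, reflectedKernel]
  gcongr
  all_goals exact dist_rpow_le_stereoWeight hμ _ _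

lemma continuous_inversion_radius (a x : E) : Continuous fun R => inversion a R x := by
  simp only [inversion, vsub_eq_sub, vadd_eq_add]
  fun_prop

end Pointwise

variable [InnerProductSpace ℝ E] [FiniteDimensional ℝ E] [MeasurableSpace E] [BorelSpace E]

/-- A sequence is asymptotically polarized if, for every sphere, polarizing on the side on which the
standard bubble dominates its Kelvin transform has a vanishing effect in the moment of order `μ`. -/
def AsymptoticallyPolarized (μ : ℝ) (F : ℕ → E → ℝ) : Prop :=
  ∀ (a : E) (R : ℝ), 0 < R → 1 + ‖a‖ ^ 2 - R ^ 2 ≠ 0 →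
    Tendsto (fun k => ∫ x, stereoWeight x ^ (-(μ / 2)) *
      |polarize μ a R (1 + ‖a‖ ^ 2 - R ^ 2) (F k) x - F k x|) atTop (𝓝 0)

variable [Nontrivial E] {μ m R : ℝ} {a x y : E} {f : E → ℝ} {F : ℕ → E → ℝ}

lemma integrable_moment_polarize_sub (h : BubbleComparable μ m f) (hμ : 0 < μ)
    (hm : 0 ≤ m) (hR : 0 < R) (a : E) :
    Integrable fun x => stereoWeight x ^ (-(μ / 2)) *
      |polarize μ a R (1 + ‖a‖ ^ 2 - R ^ 2) f x - f x| :=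
  ((hasFinitePotential_bubble μ).mono ((h.polarize hμ hm hR a).measurable.sub h.measurable).abs
    (fun _ => abs_nonneg _) ((h.polarize hμ hm hR a).abs_sub_le h hm)).integrable_moment

lemma exists_neg_le_potential_inversion_sub (hμ : 0 < μ) (hm : 0 ≤ m)
    (hR : 0 < R) (hx : x ≠ a) (hside : 0 < (1 + ‖a‖ ^ 2 - R ^ 2) * spherePower a R x) :
    ∃ C : ℝ, 0 ≤ C ∧ ∀ f : E → ℝ, BubbleComparable μ m f →
      -(C * ∫ y, stereoWeight y ^ (-(μ / 2)) *
        |polarize μ a R (1 + ‖a‖ ^ 2 - R ^ 2) f y - f y|) ≤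
      conformalFactor a R x ^ (-(μ / 2)) * potential μ f (inversion a R x) - potential μ f x := by
  obtain ⟨C, hC, hker⟩ := exists_abs_reflectedKernel_sub_le hμ hR a x
  refine ⟨C / 2, by positivity, fun f h => ?_⟩
  have hint := (h.hasFinitePotential hm).integrable_dist_rpow_mul hμ
  have hle := integral_mono ((integrable_moment_polarize_sub h hμ hm hR a).const_mul C).neg
    (integrable_reflectedKernel_sub_mul_sub_kelvin hR hx hint) fun y =>
      (neg_le_neg ((mul_le_mul_of_nonneg_right (hker y) (abs_nonneg _)).trans_eq
        (mul_assoc _ _ _))).trans (neg_abs_mul_abs_polarize_sub_le hμ hR hx hside f y)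
  rw [integral_neg', integral_const_mul, ← two_mul_potential_inversion_sub hR hx hint] at hle
  linarith

namespace AsymptoticallyPolarized

variable (hF : AsymptoticallyPolarized μ F) (h : ∀ k, BubbleComparable μ m (F k)) (hμ : 0 < μ)
  (hm : 0 ≤ m)
include hF h hμ hm

lemma eventually_neg_le (hR : 0 < R) (hx : x ≠ a)
    (hside : 0 < (1 + ‖a‖ ^ 2 - R ^ 2) * spherePower a R x) {δ : ℝ} (hδ : 0 < δ) :
    ∀ᶠ k in atTop, -δ ≤ conformalFactor a R x ^ (-(μ / 2)) * potential μ (F k) (inversion a R x) -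
      potential μ (F k) x := by
  obtain ⟨C, -, hC⟩ := exists_neg_le_potential_inversion_sub hμ hm hR hx hside
  have hlim := (hF a R hR (left_ne_zero_of_mul hside.ne')).const_mul C
  rw [mul_zero] at hlim
  filter_upwards [hlim.eventually (gt_mem_nhds hδ)] with k hk
  linarith [hC (F k) (h k)]

/-- On a sphere with `R² = 1 + ‖a‖²`, where the bubble equals its Kelvin transform, the inequality
is obtained as a limit of spheres of nearby radius on the favourable side. -/
lemma eventually_neg_le_of_sq_eq (hR : 0 < R) (hRa : R ^ 2 = 1 + ‖a‖ ^ 2) (hx : x ≠ a)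
    (hpow : spherePower a R x ≠ 0) {δ : ℝ} (hδ : 0 < δ) :
    ∀ᶠ k in atTop, -δ ≤ conformalFactor a R x ^ (-(μ / 2)) * potential μ (F k) (inversion a R x) -
      potential μ (F k) x := by
  have hconv : Tendsto (fun R' => ∫ y, |conformalFactor a R' x ^ (-(μ / 2)) *
      dist (inversion a R' x) y ^ μ - conformalFactor a R x ^ (-(μ / 2)) *
      dist (inversion a R x) y ^ μ| * bubble μ y) (𝓝 R) (𝓝 0) :=
    (hasFinitePotential_bubble μ).tendsto_integral_abs_sub hμ
      ((continuousAt_conformalFactor_radius hx).rpow_const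
        (.inl (conformalFactor_pos hR x).ne')) (continuous_inversion_radius a x).continuousAt
  obtain ⟨R', hside, hR', hclose⟩ := ((frequently_pos_mul_spherePower hR hRa hpow).and_eventually
    ((lt_mem_nhds hR).and (hconv.eventually (gt_mem_nhds (half_pos hδ))))).exists
  filter_upwards [hF.eventually_neg_le h hμ hm hR' hx hside (half_pos hδ)] with k hk
  have hdiff := ((h k).hasFinitePotential hm).abs_potential_sub_le hμ
    (hasFinitePotential_bubble μ) (h k).upper (conformalFactor a R' x ^ (-(μ / 2)))
    (conformalFactor a R x ^ (-(μ / 2))) (inversion a R' x) (inversion a R x)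
  linarith [(abs_le.1 (hdiff.trans hclose.le)).2]

lemma tendsto_potential_sub (y : E) :
    Tendsto (fun k => stereoWeight y ^ (μ / 2) * potential μ (F k) y - potential μ (F k) 0)
      atTop (𝓝 0) := by
  rcases eq_or_ne y 0 with rfl | hy
  · simp [stereoWeight_zero]
  have hR := exchangeRadius_pos y
  have hRa := exchangeRadius_sq y
  have hw := stereoWeight_pos y
  have hlower {δ : ℝ} := hF.eventually_neg_le_of_sq_eq h hμ hm (δ := δ) hR hRa
    (exchangeCenter_ne_zero hy).symm (by simp [spherePower_exchange_zero])
  have hupper {δ : ℝ} := hF.eventually_neg_le_of_sq_eq h hμ hm (δ := δ) hR hRa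
    (ne_exchangeCenter hy) (by rw [spherePower_exchange_self hy]; positivity)
  simp only [inversion_exchange_zero hy, inversion_exchange_self hy,
    conformalFactor_exchange_zero hy, conformalFactor_exchange_self hy, Real.inv_rpow hw.le,
    Real.rpow_neg hw.le, inv_inv] at hlower hupper
  refine tendsto_order.2 ⟨fun δ hδ => ?_, fun δ hδ => ?_⟩
  · filter_upwards [hlower (δ := -δ / 2) (by linarith)] with k hk
    linarith
  · have hw' := Real.rpow_pos_of_pos hw (μ / 2)
    filter_upwards [hupper (δ := δ / 2 / stereoWeight y ^ (μ / 2)) (by positivity)] with k hk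
    have hk' := mul_le_mul_of_nonneg_left hk hw'.le
    rw [mul_sub, mul_inv_cancel_left₀ hw'.ne', mul_neg, mul_div_cancel₀ _ hw'.ne'] at hk'
    linarith

end AsymptoticallyPolarized

end Stability

section Moment

variable {E : Type*} [NormedAddCommGroup E] [MeasureSpace E] {μ : ℝ} {f g : E → ℝ}

/-- The moment `∫ (1 + ‖x‖²) ^ (μ/2) f(x) dx`, in terms of which the energy of an asymptotically
polarized pair is computed. -/
noncomputable def moment (μ : ℝ) (f : E → ℝ) : ℝ := ∫ x, stereoWeight x ^ (-(μ / 2)) * f x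

lemma moment_nonneg (hf : ∀ x, 0 ≤ f x) : 0 ≤ moment μ f :=
  integral_nonneg fun x => mul_nonneg (Real.rpow_nonneg (stereoWeight_pos x).le _) (hf x)

end Moment

section Mass

variable (E : Type*) [NormedAddCommGroup E] [InnerProductSpace ℝ E] [FiniteDimensional ℝ E]
  [MeasurableSpace E] [BorelSpace E]

/-- The total mass of the density `(1 + ‖x‖²) ^ (-n)`, which is the Jacobian of the stereographic
projection up to the factor `2 ^ n`. -/
noncomputable def stereoMass : ℝ := ∫ x : E, stereoWeight x ^ (finrank ℝ E : ℝ)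

lemma moment_bubble (μ : ℝ) : moment μ (bubble μ : E → ℝ) = stereoMass E := by
  simp only [moment, stereoWeight_rpow_neg_mul_bubble, stereoMass]

variable [Nontrivial E]

lemma integrable_stereoWeight_rpow_finrank :
    Integrable fun x : E => stereoWeight x ^ (finrank ℝ E : ℝ) :=
  integrable_stereoWeight_rpow (by have : (0 : ℝ) < finrank ℝ E := mod_cast finrank_pos; linarith)

lemma stereoMass_pos : 0 < stereoMass E := by
  have hpos (x : E) := Real.rpow_pos_of_pos (stereoWeight_pos x) (finrank ℝ E : ℝ)
  refine (integral_pos_iff_support_of_nonneg (fun x => (hpos x).le)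
    (integrable_stereoWeight_rpow_finrank E)).2 ?_
  rw [Function.support_eq_univ fun x => (hpos x).ne']
  exact Measure.measure_univ_pos.2 (NeZero.ne _)

end Mass

section Energy

variable {E : Type*} [NormedAddCommGroup E] [InnerProductSpace ℝ E] [FiniteDimensional ℝ E]
  [MeasurableSpace E] [BorelSpace E] {μ m : ℝ} {f g : E → ℝ}

lemma rieszEnergy_comm (hf : Measurable f) (hg : Measurable g) :
    rieszEnergy μ f g = rieszEnergy μ g f := by
  have hmeas : Measurable fun z : E × E => ENNReal.ofReal (f z.1 * dist z.1 z.2 ^ μ * g z.2) := by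
    fun_prop
  refine (lintegral_lintegral_swap hmeas.aemeasurable).trans
    (lintegral_congr fun x => lintegral_congr fun y => ?_)
  beta_reduce
  rw [dist_comm, mul_right_comm, mul_comm (f y), mul_right_comm]

lemma rieszEnergy_eq_lintegral_potential (hμ : 0 < μ) (hf : ∀ x, 0 ≤ f x)
    (hg : HasFinitePotential μ g) :
    rieszEnergy μ f g = ∫⁻ x, ENNReal.ofReal (f x * potential μ g x) := by
  refine lintegral_congr fun x => ?_
  rw [potential, ← integral_const_mul, ofReal_integral_eq_lintegral_ofReal
    ((hg.integrable_dist_rpow_mul hμ x).const_mul _) (.of_forall fun y => mul_nonneg (hf x)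
      (mul_nonneg (by positivity) (hg.nonneg y)))]
  simp only [mul_assoc]

lemma HasFinitePotential.potential_pos [Nontrivial E] (hf : HasFinitePotential μ f) (hμ : 0 < μ)
    (hne : ¬ f =ᵐ[volume] 0) (x : E) : 0 < potential μ f x := by
  refine (potential_nonneg hf.nonneg x).lt_of_ne' fun hzero => hne ?_
  have hae := (integral_eq_zero_iff_of_nonneg (fun y => mul_nonneg (by positivity) (hf.nonneg y))
    (hf.integrable_dist_rpow_mul hμ x)).1 hzero
  filter_upwards [hae, Measure.ae_ne volume x] with y hy hyx
  exact (mul_eq_zero.1 hy).resolve_left (Real.rpow_pos_of_pos (dist_pos.2 hyx.symm) _).ne'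

lemma not_bubble_ae_eq_zero (μ : ℝ) : ¬ (bubble μ : E → ℝ) =ᵐ[volume] 0 := fun h =>
  have ⟨x, hx⟩ := h.exists
  (bubble_pos μ x).ne' hx

variable [Nontrivial E]

lemma potential_bubble_zero_pos (hμ : 0 < μ) : 0 < potential μ (bubble μ) (0 : E) :=
  (hasFinitePotential_bubble μ).potential_pos hμ (not_bubble_ae_eq_zero μ) 0

namespace BubbleComparable

variable (h : BubbleComparable μ m g) (hm : 0 ≤ m)
include h hm

lemma moment_le : moment μ g ≤ stereoMass E := by
  rw [← moment_bubble]
  exact integral_mono (h.hasFinitePotential hm).integrable_moment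
    (hasFinitePotential_bubble μ).integrable_moment fun x =>
    mul_le_mul_of_nonneg_left (h.upper x) (Real.rpow_nonneg (stereoWeight_pos x).le _)

variable (hμ : 0 < μ)
include hμ

lemma potential_le (x : E) :
    potential μ g x ≤ potential μ (bubble μ) (0 : E) * stereoWeight x ^ (-(μ / 2)) := by
  rw [← potential_bubble hμ]
  exact integral_mono ((h.hasFinitePotential hm).integrable_dist_rpow_mul hμ x)
    ((hasFinitePotential_bubble μ).integrable_dist_rpow_mul hμ x) fun y =>
    mul_le_mul_of_nonneg_left (h.upper y) (by positivity)

lemma integrable_mul_potential (hf : HasFinitePotential μ f) :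
    Integrable fun x => f x * potential μ g x := by
  refine (hf.integrable_moment.const_mul (potential μ (bubble μ) (0 : E))).mono'
    (hf.measurable.mul ((h.hasFinitePotential hm).continuous_potential
      hμ).measurable).aestronglyMeasurable (.of_forall fun x => ?_)
  rw [Real.norm_of_nonneg (mul_nonneg (hf.nonneg x) (potential_nonneg (h.nonneg hm) x)), mul_comm,
    ← mul_assoc]
  exact mul_le_mul_of_nonneg_right (h.potential_le hm hμ x) (hf.nonneg x)

lemma rieszEnergy_eq_ofReal (hf : HasFinitePotential μ f) :
    rieszEnergy μ f g = ENNReal.ofReal (∫ x, f x * potential μ g x) := by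
  rw [rieszEnergy_eq_lintegral_potential hμ hf.nonneg (h.hasFinitePotential hm),
    ofReal_integral_eq_lintegral_ofReal (h.integrable_mul_potential hm hμ hf)]
  exact .of_forall fun x => mul_nonneg (hf.nonneg x) (potential_nonneg (h.nonneg hm) x)

lemma integral_bubble_mul_potential :
    ∫ x, bubble μ x * potential μ g x = potential μ (bubble μ) (0 : E) * moment μ g := by
  have hb := bubbleComparable_bubble (E := E) μ
  have hfin := h.hasFinitePotential hm
  have heq := h.rieszEnergy_eq_ofReal hm hμ (hasFinitePotential_bubble μ)
  rw [rieszEnergy_comm (measurable_bubble μ) h.measurable,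
    hb.rieszEnergy_eq_ofReal zero_le_one hμ hfin, ENNReal.ofReal_eq_ofReal_iff
      (integral_nonneg fun x => mul_nonneg (hfin.nonneg x)
        (potential_nonneg (hb.nonneg zero_le_one) x))
      (integral_nonneg fun x => mul_nonneg (bubble_pos μ x).le
        (potential_nonneg hfin.nonneg x))] at heq
  rw [← heq, moment, ← integral_const_mul]
  congr 1 with x
  rw [potential_bubble hμ]
  ring

lemma abs_potential_sub_le (x : E) :
    |stereoWeight x ^ (μ / 2) * potential μ g x - potential μ g 0| ≤
      potential μ (bubble μ) (0 : E) := by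
  have hw := Real.rpow_pos_of_pos (stereoWeight_pos x) (μ / 2)
  have hzero := h.potential_le hm hμ 0
  have hx := h.potential_le hm hμ x
  rw [stereoWeight_zero, Real.one_rpow, mul_one] at hzero
  rw [Real.rpow_neg (stereoWeight_pos x).le, ← div_eq_mul_inv, le_div_iff₀' hw] at hx
  exact abs_sub_le_of_nonneg_of_le (mul_nonneg hw.le (potential_nonneg (h.nonneg hm) x)) hx
    (potential_nonneg (h.nonneg hm) 0) hzero

end BubbleComparable

namespace AsymptoticallyPolarized

open Filter Topology

variable {m' : ℝ} {F G : ℕ → E → ℝ} (hG : AsymptoticallyPolarized μ G)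
  (h : ∀ k, BubbleComparable μ m (G k)) (hμ : 0 < μ) (hm : 0 ≤ m)
  (hF : ∀ k, BubbleComparable μ m' (F k)) (hm' : 0 ≤ m')
include hG h hμ hm hF hm'

lemma tendsto_integral_mul_potential_sub :
    Tendsto (fun k => (∫ x, F k x * potential μ (G k) x) - potential μ (G k) 0 * moment μ (F k))
      atTop (𝓝 0) := by
  have hfac (k : ℕ) : (∫ x, F k x * potential μ (G k) x) - potential μ (G k) 0 * moment μ (F k) =
      ∫ x, stereoWeight x ^ (-(μ / 2)) * F k x *
        (stereoWeight x ^ (μ / 2) * potential μ (G k) x - potential μ (G k) 0) := by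
    have hFk := (hF k).hasFinitePotential hm'
    rw [moment, ← integral_const_mul, ← integral_sub ((h k).integrable_mul_potential hm hμ hFk)
      (hFk.integrable_moment.const_mul _)]
    congr 1 with x
    linear_combination -(F k x * potential μ (G k) x) * stereoWeight_rpow_neg_mul_rpow (μ / 2) x
  have hbound (k : ℕ) (x : E) : ‖stereoWeight x ^ (-(μ / 2)) * F k x *
      (stereoWeight x ^ (μ / 2) * potential μ (G k) x - potential μ (G k) 0)‖ ≤
      stereoWeight x ^ (finrank ℝ E : ℝ) *
        |stereoWeight x ^ (μ / 2) * potential μ (G k) x - potential μ (G k) 0| := by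
    have hw := Real.rpow_nonneg (stereoWeight_pos x).le (-(μ / 2))
    rw [norm_mul, Real.norm_of_nonneg (mul_nonneg hw ((hF k).nonneg hm' x)), Real.norm_eq_abs,
      ← stereoWeight_rpow_neg_mul_bubble μ]
    gcongr
    exact (hF k).upper x
  simp only [hfac]
  rw [← integral_zero E ℝ]
  refine tendsto_integral_of_dominated_convergence (fun x => stereoWeight x ^ (finrank ℝ E : ℝ) *
    potential μ (bubble μ) (0 : E)) (fun k => ?_)
    ((integrable_stereoWeight_rpow_finrank E).mul_const _) (fun k => .of_forall fun x => ?_)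
    (.of_forall fun x => squeeze_zero_norm (hbound · x) ?_)
  · have hFk := (hF k).measurable
    have hcont := ((h k).hasFinitePotential hm).continuous_potential hμ
    have hw := (continuous_stereoWeight (E := E)).measurable
    exact Measurable.aestronglyMeasurable (by fun_prop)
  · exact (hbound k x).trans (mul_le_mul_of_nonneg_left ((h k).abs_potential_sub_le hm hμ x)
      (Real.rpow_nonneg (stereoWeight_pos x).le _))
  · simpa using (hG.tendsto_potential_sub h hμ hm x).abs.const_mul
      (stereoWeight x ^ (finrank ℝ E : ℝ))

lemma tendsto_energy_sub :
    Tendsto (fun k => stereoMass E * (∫ x, F k x * potential μ (G k) x) -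
      potential μ (bubble μ) (0 : E) * moment μ (F k) * moment μ (G k)) atTop (𝓝 0) := by
  have hpair := hG.tendsto_integral_mul_potential_sub h hμ hm hF hm'
  have hbub := hG.tendsto_integral_mul_potential_sub h hμ hm
    (fun _ => bubbleComparable_bubble μ) zero_le_one
  simp only [moment_bubble, (h _).integral_bubble_mul_potential hm hμ] at hbub
  have hbdd : IsBoundedUnder (· ≤ ·) atTop fun k => ‖moment μ (F k)‖ :=
    isBoundedUnder_of ⟨stereoMass E, fun k => by
      rw [Real.norm_of_nonneg (moment_nonneg ((hF k).nonneg hm'))]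
      exact (hF k).moment_le hm'⟩
  have hlim := (hpair.const_mul (stereoMass E)).sub (hbdd.smul_tendsto_zero hbub)
  rw [mul_zero, sub_zero] at hlim
  refine hlim.congr fun k => ?_
  rw [smul_eq_mul]
  ring

end AsymptoticallyPolarized

end Energy

/-! ### Entropy -/

section WeightedConvergence

open Filter Topology

variable {X : Type*} [MeasurableSpace X] {ν : Measure X} {θ w : X → ℝ}

lemma norm_max_one_sub_mul_le {c : ℝ} (hc : 0 ≤ c) (s : ℝ) : ‖max (1 - c) 0 * s‖ ≤ ‖s‖ := by
  rw [norm_mul, Real.norm_of_nonneg (le_max_right _ _)]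
  exact mul_le_of_le_one_left (norm_nonneg _) (max_le (sub_le_self 1 hc) zero_le_one)

lemma integrable_max_one_sub_mul (hθ : AEStronglyMeasurable θ ν) (hθ_pos : ∀ᵐ x ∂ν, 0 < θ x)
    (hw : Integrable w ν) (C : ℕ) : Integrable (fun x => max (1 - C * θ x) 0 * w x) ν := by
  refine hw.norm.mono' (((aestronglyMeasurable_const.sub (hθ.const_mul _)).sup
    aestronglyMeasurable_const).mul hw.1) ?_
  filter_upwards [hθ_pos] with x hx using norm_max_one_sub_mul_le (by positivity) _

lemma tendsto_integral_max_one_sub_mul (hθ : AEStronglyMeasurable θ ν)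
    (hθ_pos : ∀ᵐ x ∂ν, 0 < θ x) (hw : Integrable w ν) :
    Tendsto (fun C : ℕ => ∫ x, max (1 - C * θ x) 0 * w x ∂ν) atTop (𝓝 0) := by
  suffices Tendsto (fun C : ℕ => ∫ x, max (1 - C * θ x) 0 * w x ∂ν) atTop (𝓝 (∫ _, 0 ∂ν)) by
    rwa [integral_zero] at this
  refine tendsto_integral_of_dominated_convergence (fun x => ‖w x‖)
    (fun C => (integrable_max_one_sub_mul hθ hθ_pos hw C).1) hw.norm (fun C => ?_)
    (hθ_pos.mono fun x hx => ?_)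
  · filter_upwards [hθ_pos] with x hx using norm_max_one_sub_mul_le (by positivity) _
  · refine tendsto_const_nhds.congr' ?_
    obtain ⟨C₀, hC₀⟩ := exists_nat_gt (1 / θ x)
    filter_upwards [eventually_ge_atTop C₀] with C hC
    have h : 1 < C * θ x := (div_lt_iff₀ hx).1 (hC₀.trans_le (Nat.cast_le.2 hC))
    rw [max_eq_right (sub_neg.2 h).le, zero_mul]

lemma tendsto_integral_of_tendsto_integral_mul {h : ℕ → X → ℝ} (hθ : AEStronglyMeasurable θ ν)
    (hθ_pos : ∀ᵐ x ∂ν, 0 < θ x) (hw : Integrable w ν) (hh_nonneg : ∀ k x, 0 ≤ h k x)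
    (hhw : ∀ k x, h k x ≤ w x) (hθh : ∀ k, Integrable (fun x => θ x * h k x) ν)
    (hlim : Tendsto (fun k => ∫ x, θ x * h k x ∂ν) atTop (𝓝 0)) :
    Tendsto (fun k => ∫ x, h k x ∂ν) atTop (𝓝 0) := by
  have hbound (C k : ℕ) :
      ∫ x, h k x ∂ν ≤ C * (∫ x, θ x * h k x ∂ν) + ∫ x, max (1 - C * θ x) 0 * w x ∂ν := by
    have hint := integrable_max_one_sub_mul hθ hθ_pos hw C
    rw [← integral_const_mul, ← integral_add ((hθh k).const_mul _) hint]
    refine integral_mono_of_nonneg (.of_forall (hh_nonneg k)) (((hθh k).const_mul _).add hint)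
      (.of_forall fun x => ?_)
    have h1 := mul_le_mul_of_nonneg_right (le_max_left (1 - C * θ x) 0) (hh_nonneg k x)
    have h2 := mul_le_mul_of_nonneg_left (hhw k x) (le_max_right (1 - C * θ x) 0)
    beta_reduce
    linarith
  refine tendsto_order.2 ⟨fun ε hε => .of_forall fun k =>
    hε.trans_le (integral_nonneg (hh_nonneg k)), fun ε hε => ?_⟩
  obtain ⟨C, hC⟩ := ((tendsto_integral_max_one_sub_mul hθ hθ_pos hw).eventually
    (gt_mem_nhds hε)).exists
  have hlim' := (hlim.const_mul (C : ℝ)).add_const (∫ x, max (1 - C * θ x) 0 * w x ∂ν)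
  rw [mul_zero, zero_add] at hlim'
  filter_upwards [hlim'.eventually (gt_mem_nhds hC)] with k hk using (hbound C k).trans_lt hk

end WeightedConvergence

section Entropy

open Filter Topology

variable {E : Type*} [NormedAddCommGroup E] [InnerProductSpace ℝ E]
  {μ m R : ℝ} {a x : E} {f : E → ℝ}

lemma reflectedWeight_rpow_finrank (hR : 0 < R) (x : E) :
    reflectedWeight a R x ^ (finrank ℝ E : ℝ) =
      conformalFactor a R x ^ finrank ℝ E * stereoWeight (inversion a R x) ^ (finrank ℝ E : ℝ) := by
  rw [reflectedWeight, Real.mul_rpow (conformalFactor_pos hR x).le (stereoWeight_pos _).le,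
    Real.rpow_natCast]

/-- The relative change of the density `(1 + ‖x‖²) ^ (-n)` under the inversion in the sphere of
centre `a` and radius `R`. -/
noncomputable def relativeDefect (a : E) (R : ℝ) (x : E) : ℝ :=
  |stereoWeight x ^ (finrank ℝ E : ℝ) - reflectedWeight a R x ^ (finrank ℝ E : ℝ)| /
    stereoWeight x ^ (finrank ℝ E : ℝ)

lemma relativeDefect_nonneg (x : E) : 0 ≤ relativeDefect a R x :=
  div_nonneg (abs_nonneg _) (Real.rpow_nonneg (stereoWeight_pos x).le _)

section Measurable

variable [MeasurableSpace E]

namespace BubbleComparable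

variable (h : BubbleComparable μ m f) (hm : 0 < m)
include h hm

lemma pos (x : E) : 0 < f x := (mul_pos hm (bubble_pos μ x)).trans_le (h.lower x)

lemma log_div_bubble_nonpos (x : E) : Real.log (f x / bubble μ x) ≤ 0 :=
  Real.log_nonpos (div_nonneg (h.pos hm x).le (bubble_pos μ x).le)
    ((div_le_one (bubble_pos μ x)).2 (h.upper x))

lemma log_div_le {g : E → ℝ} (hg : BubbleComparable μ m g) (x : E) :
    Real.log (f x / g x) ≤ -Real.log m := by
  rw [← Real.log_inv]
  refine Real.log_le_log (div_pos (h.pos hm x) (hg.pos hm x)) ?_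
  rw [div_le_iff₀ (hg.pos hm x), ← div_eq_inv_mul, le_div_iff₀' hm]
  exact (mul_le_mul_of_nonneg_left (h.upper x) hm.le).trans (hg.lower x)

lemma abs_log_div_le {g : E → ℝ} (hg : BubbleComparable μ m g) (x : E) :
    |Real.log (f x / g x)| ≤ -Real.log m :=
  abs_le'.2 ⟨h.log_div_le hm hg x, by
    rw [← Real.log_inv, inv_div]
    exact hg.log_div_le hm h x⟩

lemma sub_div_bubble_le {g : E → ℝ} (hg : BubbleComparable μ m g) {x : E} (hfg : g x ≤ f x) :
    (f x - g x) / bubble μ x ≤ Real.log (f x / g x) := by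
  have hf := h.pos hm x
  calc (f x - g x) / bubble μ x ≤ (f x - g x) / f x :=
        div_le_div_of_nonneg_left (sub_nonneg.2 hfg) hf (h.upper x)
    _ = 1 - (f x / g x)⁻¹ := by rw [inv_div, sub_div, div_self hf.ne']
    _ ≤ Real.log (f x / g x) := Real.one_sub_inv_le_log_of_pos (div_pos hf (hg.pos hm x))

lemma abs_sub_div_bubble_le {g : E → ℝ} (hg : BubbleComparable μ m g) (x : E) :
    |f x - g x| / bubble μ x ≤ |Real.log (f x / g x)| := by
  rcases le_total (g x) (f x) with hle | hle
  · rw [abs_of_nonneg (sub_nonneg.2 hle)]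
    exact (h.sub_div_bubble_le hm hg hle).trans (le_abs_self _)
  · rw [abs_sub_comm, abs_of_nonneg (sub_nonneg.2 hle), ← abs_neg (Real.log _),
      ← Real.log_inv, inv_div]
    exact (hg.sub_div_bubble_le hm h hle).trans (le_abs_self _)

end BubbleComparable

end Measurable

variable [FiniteDimensional ℝ E] [MeasurableSpace E] [BorelSpace E]

/-- The entropy of `f` relative to the bubble, for the density `(1 + ‖x‖²) ^ (-n)`. Polarization
on the side where the bubble dominates its Kelvin transform increases it. -/
noncomputable def entropy (μ : ℝ) (f : E → ℝ) : ℝ :=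
  ∫ x, Real.log (f x / bubble μ x) * stereoWeight x ^ (finrank ℝ E : ℝ)

lemma measurable_reflectedWeight (a : E) (R : ℝ) : Measurable (reflectedWeight a R) :=
  (measurable_conformalFactor a R).mul
    (continuous_stereoWeight.measurable.comp (measurable_inversion a R))

lemma measurable_relativeDefect (a : E) (R : ℝ) : Measurable (relativeDefect a R) := by
  have hw := (continuous_stereoWeight (E := E)).measurable
  have hW := measurable_reflectedWeight a R
  unfold relativeDefect
  fun_prop

namespace BubbleComparable

variable (h : BubbleComparable μ m f) (hm : 0 < m)
include h hm

lemma entropy_nonpos : entropy μ f ≤ 0 :=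
  integral_nonpos fun x => mul_nonpos_of_nonpos_of_nonneg (h.log_div_bubble_nonpos hm x)
    (Real.rpow_nonneg (stereoWeight_pos x).le _)

lemma integrable_log_div_mul {g φ : E → ℝ} (hg : BubbleComparable μ m g) (hφ : Integrable φ) :
    Integrable fun x => Real.log (f x / g x) * φ x :=
  hφ.bdd_mul (h.measurable.div hg.measurable).log.aestronglyMeasurable
    (.of_forall (h.abs_log_div_le hm hg))

variable [Nontrivial E]

lemma entropy_sub_entropy {g : E → ℝ} (hg : BubbleComparable μ m g) :
    entropy μ f - entropy μ g =
      ∫ x, Real.log (f x / g x) * stereoWeight x ^ (finrank ℝ E : ℝ) := by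
  have hb : BubbleComparable μ m (bubble μ : E → ℝ) := ⟨measurable_bubble μ,
    fun x => (h.lower x).trans (h.upper x), fun _ => le_rfl⟩
  have hw := integrable_stereoWeight_rpow_finrank E
  rw [entropy, entropy, ← integral_sub (h.integrable_log_div_mul hm hb hw)
    (hg.integrable_log_div_mul hm hb hw)]
  congr 1 with x
  rw [← sub_mul, ← Real.log_div (div_pos (h.pos hm x) (bubble_pos μ x)).ne'
    (div_pos (hg.pos hm x) (bubble_pos μ x)).ne', div_div_div_cancel_right₀ (bubble_pos μ x).ne']

end BubbleComparable

lemma integrable_reflectedWeight_rpow_finrank [Nontrivial E] (a : E) (hR : 0 < R) :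
    Integrable fun x => reflectedWeight a R x ^ (finrank ℝ E : ℝ) := by
  simp only [reflectedWeight_rpow_finrank hR]
  exact (integrable_iff_integrable_inversion a hR _).1 (integrable_stereoWeight_rpow_finrank E)

lemma ae_relativeDefect_pos [Nontrivial E] (hR : 0 < R) (ha : 1 + ‖a‖ ^ 2 - R ^ 2 ≠ 0) :
    ∀ᵐ x, 0 < relativeDefect a R x := by
  have hsphere : ∀ᵐ x, x ∉ Metric.sphere a R :=
    measure_eq_zero_iff_ae_notMem.1 (Measure.addHaar_sphere volume a R)
  filter_upwards [Measure.ae_ne volume a, hsphere] with x hxa hx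
  have hP : spherePower a R x ≠ 0 := fun h => hx
    (Metric.mem_sphere.2 ((sq_eq_sq₀ dist_nonneg hR.le).1 (sub_eq_zero.1 h)))
  refine div_pos (abs_pos.2 (sub_ne_zero.2 fun heq => ?_))
    (Real.rpow_pos_of_pos (stereoWeight_pos x) _)
  have hn : (finrank ℝ E : ℝ) ≠ 0 := mod_cast (finrank_pos (R := ℝ) (M := E)).ne'
  exact reflectedWeight_ne hR hxa (mul_ne_zero ha hP) ((Real.rpow_left_inj
    (stereoWeight_pos x).le (reflectedWeight_pos hR x).le hn).1 heq).symm

namespace BubbleComparable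

variable (h : BubbleComparable μ m f) (hμ : 0 < μ) (hm : 0 < m) (hR : 0 < R)
include h hμ hm hR

lemma log_polarize_div_inversion (ha : 1 + ‖a‖ ^ 2 - R ^ 2 ≠ 0) (x : E) :
    Real.log (ReversedHLS.polarize μ a R (1 + ‖a‖ ^ 2 - R ^ 2) f (inversion a R x) /
        f (inversion a R x)) =
      -Real.log (ReversedHLS.polarize μ a R (1 + ‖a‖ ^ 2 - R ^ 2) f x / f x) := by
  have hP := (h.polarize hμ hm.le hR a).pos hm
  have hf := h.pos hm
  have hJ := (Real.rpow_pos_of_pos (conformalFactor_pos (a := a) hR x) (finrank ℝ E + μ / 2)).ne'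
  have hsum := polarize_add_kelvin_polarize (μ := μ) (a := a) hR ha f x Real.log
  rw [kelvin, kelvin, Real.log_mul hJ (hP _).ne', Real.log_mul hJ (hf _).ne'] at hsum
  rw [Real.log_div (hP _).ne' (hf _).ne', Real.log_div (hP _).ne' (hf _).ne']
  linarith

lemma log_polarize_div_mul_sub_eq_abs (x : E) :
    Real.log (ReversedHLS.polarize μ a R (1 + ‖a‖ ^ 2 - R ^ 2) f x / f x) *
        (stereoWeight x ^ (finrank ℝ E : ℝ) - reflectedWeight a R x ^ (finrank ℝ E : ℝ)) =
      |Real.log (ReversedHLS.polarize μ a R (1 + ‖a‖ ^ 2 - R ^ 2) f x / f x)| *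
        |stereoWeight x ^ (finrank ℝ E : ℝ) - reflectedWeight a R x ^ (finrank ℝ E : ℝ)| := by
  have hP := (h.polarize hμ hm.le hR a).pos hm x
  have hf := h.pos hm x
  have hw := (stereoWeight_pos x).le
  have hW := (reflectedWeight_pos (a := a) hR x).le
  rw [← abs_mul, eq_comm, abs_eq_self]
  by_cases hx : 0 < (1 + ‖a‖ ^ 2 - R ^ 2) * spherePower a R x
  · refine mul_nonneg (Real.log_nonneg ((one_le_div hf).2 ?_))
      (sub_nonneg.2 (Real.rpow_le_rpow hW (reflectedWeight_le hR hx.le) (Nat.cast_nonneg _)))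
    rw [ReversedHLS.polarize, if_pos hx]
    exact le_max_left _ _
  · refine mul_nonneg_of_nonpos_of_nonpos (Real.log_nonpos (div_nonneg hP.le hf.le)
      ((div_le_one hf).2 ?_)) (sub_nonpos.2 (Real.rpow_le_rpow hw
        (le_reflectedWeight hR (not_lt.1 hx)) (Nat.cast_nonneg _)))
    rw [ReversedHLS.polarize, if_neg hx]
    exact min_le_left _ _

lemma relativeDefect_mul_le (x : E) :
    relativeDefect a R x * (stereoWeight x ^ (-(μ / 2)) *
        |ReversedHLS.polarize μ a R (1 + ‖a‖ ^ 2 - R ^ 2) f x - f x|) ≤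
      |Real.log (ReversedHLS.polarize μ a R (1 + ‖a‖ ^ 2 - R ^ 2) f x / f x)| *
        |stereoWeight x ^ (finrank ℝ E : ℝ) - reflectedWeight a R x ^ (finrank ℝ E : ℝ)| := by
  have hw := Real.rpow_pos_of_pos (stereoWeight_pos x) (-(μ / 2))
  have hb := bubble_pos μ x
  calc _ = |ReversedHLS.polarize μ a R (1 + ‖a‖ ^ 2 - R ^ 2) f x - f x| / bubble μ x *
        |stereoWeight x ^ (finrank ℝ E : ℝ) - reflectedWeight a R x ^ (finrank ℝ E : ℝ)| := by
        rw [relativeDefect, ← stereoWeight_rpow_neg_mul_bubble μ]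
        field_simp
    _ ≤ _ := mul_le_mul_of_nonneg_right
        ((h.polarize hμ hm.le hR a).abs_sub_div_bubble_le hm h x) (abs_nonneg _)

variable [Nontrivial E]

lemma integrable_abs_log_polarize_div_mul (a : E) :
    Integrable fun x => |Real.log (ReversedHLS.polarize μ a R (1 + ‖a‖ ^ 2 - R ^ 2) f x / f x)| *
      |stereoWeight x ^ (finrank ℝ E : ℝ) - reflectedWeight a R x ^ (finrank ℝ E : ℝ)| := by
  simp only [← abs_mul]
  exact ((h.polarize hμ hm.le hR a).integrable_log_div_mul hm h
    ((integrable_stereoWeight_rpow_finrank E).sub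
      (integrable_reflectedWeight_rpow_finrank a hR))).abs

lemma integrable_relativeDefect_mul (a : E) :
    Integrable fun x => relativeDefect a R x * (stereoWeight x ^ (-(μ / 2)) *
      |ReversedHLS.polarize μ a R (1 + ‖a‖ ^ 2 - R ^ 2) f x - f x|) := by
  refine (h.integrable_abs_log_polarize_div_mul hμ hm hR a).mono'
    (.mul (measurable_relativeDefect a R).aestronglyMeasurable
      (integrable_moment_polarize_sub h hμ hm.le hR a).1) (.of_forall fun x => ?_)
  rw [Real.norm_of_nonneg (mul_nonneg (relativeDefect_nonneg x)
    (mul_nonneg (Real.rpow_nonneg (stereoWeight_pos x).le _) (abs_nonneg _)))]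
  exact h.relativeDefect_mul_le hμ hm hR x

variable (ha : 1 + ‖a‖ ^ 2 - R ^ 2 ≠ 0)
include ha

lemma two_mul_entropy_polarize_sub :
    2 * (entropy μ (ReversedHLS.polarize μ a R (1 + ‖a‖ ^ 2 - R ^ 2) f) - entropy μ f) =
      ∫ x, |Real.log (ReversedHLS.polarize μ a R (1 + ‖a‖ ^ 2 - R ^ 2) f x / f x)| *
        |stereoWeight x ^ (finrank ℝ E : ℝ) - reflectedWeight a R x ^ (finrank ℝ E : ℝ)| := by
  have hP := h.polarize hμ hm.le hR a
  have hreflect : ∫ x, Real.log (ReversedHLS.polarize μ a R (1 + ‖a‖ ^ 2 - R ^ 2) f x / f x) *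
      stereoWeight x ^ (finrank ℝ E : ℝ) =
      -∫ x, Real.log (ReversedHLS.polarize μ a R (1 + ‖a‖ ^ 2 - R ^ 2) f x / f x) *
        reflectedWeight a R x ^ (finrank ℝ E : ℝ) := by
    rw [integral_eq_integral_inversion a hR, ← integral_neg]
    simp only [h.log_polarize_div_inversion hμ hm hR ha, reflectedWeight_rpow_finrank hR]
    exact integral_congr_ae (.of_forall fun x => by ring)
  simp only [← h.log_polarize_div_mul_sub_eq_abs hμ hm hR]
  simp only [mul_sub (Real.log _)]
  rw [hP.entropy_sub_entropy hm h, integral_sub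
    (hP.integrable_log_div_mul hm h (integrable_stereoWeight_rpow_finrank E))
    (hP.integrable_log_div_mul hm h (integrable_reflectedWeight_rpow_finrank a hR))]
  linarith

lemma integral_relativeDefect_mul_le :
    ∫ x, relativeDefect a R x * (stereoWeight x ^ (-(μ / 2)) *
        |ReversedHLS.polarize μ a R (1 + ‖a‖ ^ 2 - R ^ 2) f x - f x|) ≤
      2 * (entropy μ (ReversedHLS.polarize μ a R (1 + ‖a‖ ^ 2 - R ^ 2) f) - entropy μ f) := by
  rw [h.two_mul_entropy_polarize_sub hμ hm hR ha]
  exact integral_mono (h.integrable_relativeDefect_mul hμ hm hR a)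
    (h.integrable_abs_log_polarize_div_mul hμ hm hR a) (h.relativeDefect_mul_le hμ hm hR)

end BubbleComparable

lemma asymptoticallyPolarized_of_tendsto_entropy [Nontrivial E] {F : ℕ → E → ℝ} (hμ : 0 < μ)
    (hm : 0 < m) (hF : ∀ k, BubbleComparable μ m (F k)) {s : ℝ}
    (hlim : Tendsto (fun k => entropy μ (F k)) atTop (𝓝 s))
    (hle : ∀ k (a : E) (R : ℝ), 0 < R → 1 + ‖a‖ ^ 2 - R ^ 2 ≠ 0 →
      entropy μ (polarize μ a R (1 + ‖a‖ ^ 2 - R ^ 2) (F k)) ≤ s) :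
    AsymptoticallyPolarized μ F := by
  intro a R hR ha
  have hw (x : E) := Real.rpow_nonneg (stereoWeight_pos x).le (-(μ / 2))
  refine tendsto_integral_of_tendsto_integral_mul
    (measurable_relativeDefect a R).aestronglyMeasurable (ae_relativeDefect_pos hR ha)
    (hasFinitePotential_bubble μ).integrable_moment
    (fun k x => mul_nonneg (hw x) (abs_nonneg _))
    (fun k x => mul_le_mul_of_nonneg_left
      (((hF k).polarize hμ hm.le hR a).abs_sub_le (hF k) hm.le x) (hw x))
    (fun k => (hF k).integrable_relativeDefect_mul hμ hm hR a) ?_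
  have hgap : Tendsto (fun k => 2 * (s - entropy μ (F k))) atTop (𝓝 0) := by
    simpa using (hlim.const_sub s).const_mul 2
  refine squeeze_zero (fun k => integral_nonneg fun x => ?_) (fun k => ?_) hgap
  · exact mul_nonneg (relativeDefect_nonneg x) (mul_nonneg (hw x) (abs_nonneg _))
  · have := (hF k).integral_relativeDefect_mul_le hμ hm hR ha
    have := hle k a R hR ha
    linarith

end Entropy

/-! ### The sharp inequality -/

section CriticalNorm

variable {E : Type*} [NormedAddCommGroup E] [InnerProductSpace ℝ E]

variable (E) in
/-- The exponent `p = 2n / (2n + μ)` for which the energy with kernel `|x - y|^μ` and the `L^p`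
quasinorm scale in the same way. -/
noncomputable def criticalExponent (μ : ℝ) : ℝ := finrank ℝ E / (finrank ℝ E + μ / 2)

variable {μ R e m : ℝ} {a : E} {f g : E → ℝ}

lemma criticalExponent_mul (hμ : 0 < μ) :
    (finrank ℝ E + μ / 2) * criticalExponent E μ = finrank ℝ E :=
  mul_div_cancel₀ _ (by positivity)

lemma criticalExponent_lt_one (hμ : 0 < μ) : criticalExponent E μ < 1 := by
  unfold criticalExponent
  exact (div_lt_one (by positivity)).2 (by linarith)

variable [FiniteDimensional ℝ E]

lemma criticalExponent_pos [Nontrivial E] (hμ : 0 < μ) : 0 < criticalExponent E μ := by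
  have : (0 : ℝ) < finrank ℝ E := mod_cast finrank_pos
  unfold criticalExponent
  positivity

variable [MeasurableSpace E] [BorelSpace E]

/-- The `L^p` quasinorm at the critical exponent `p = 2n / (2n + μ) < 1`. -/
noncomputable def criticalNorm (μ : ℝ) (f : E → ℝ) : ℝ≥0∞ :=
  eLpNorm' f (criticalExponent E μ) volume

section Polarization

variable [Nontrivial E]

lemma lintegral_enorm_kelvin_rpow (hμ : 0 < μ) (hR : 0 < R) (f : E → ℝ) :
    ∫⁻ x, ‖kelvin μ a R f x‖ₑ ^ criticalExponent E μ = ∫⁻ x, ‖f x‖ₑ ^ criticalExponent E μ := by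
  rw [lintegral_eq_lintegral_inversion a hR fun x => ‖f x‖ₑ ^ criticalExponent E μ]
  refine lintegral_congr fun x => ?_
  have hJ := conformalFactor_pos (a := a) hR x
  have hp := (criticalExponent_pos (E := E) hμ).le
  rw [kelvin, enorm_mul, ENNReal.mul_rpow_of_nonneg _ _ hp, Real.enorm_of_nonneg
    (Real.rpow_nonneg hJ.le _), ENNReal.ofReal_rpow_of_nonneg (Real.rpow_nonneg hJ.le _) hp,
    ← Real.rpow_mul hJ.le, criticalExponent_mul hμ, Real.rpow_natCast]

lemma criticalNorm_polarize (hμ : 0 < μ) (hR : 0 < R) (he : e ≠ 0) (a : E) (hf : Measurable f) :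
    criticalNorm μ (polarize μ a R e f) = criticalNorm μ f := by
  suffices h : 2 * ∫⁻ x, ‖polarize μ a R e f x‖ₑ ^ criticalExponent E μ =
      2 * ∫⁻ x, ‖f x‖ₑ ^ criticalExponent E μ by
    rw [criticalNorm, criticalNorm, eLpNorm', eLpNorm',
      (ENNReal.mul_right_inj two_ne_zero ofNat_ne_top).1 h]
  have hP := measurable_polarize μ a R e hf
  rw [two_mul, two_mul]
  nth_rw 2 [← lintegral_enorm_kelvin_rpow (a := a) hμ hR]
  nth_rw 4 [← lintegral_enorm_kelvin_rpow (a := a) hμ hR]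
  rw [← lintegral_add_left (hP.enorm.pow_const _), ← lintegral_add_left (hf.enorm.pow_const _)]
  exact lintegral_congr fun x =>
    polarize_add_kelvin_polarize hR he f x fun t => ‖t‖ₑ ^ criticalExponent E μ

end Polarization

variable [Nontrivial E]

lemma eLpNorm'_stereoWeight_rpow (hμ : 0 < μ) :
    eLpNorm' (fun x : E => stereoWeight x ^ (μ / 2)) (2 * finrank ℝ E / μ) volume =
      ENNReal.ofReal (stereoMass E ^ (μ / (2 * finrank ℝ E))) := by
  have hN : (0 : ℝ) < finrank ℝ E := mod_cast finrank_pos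
  have hpow (x : E) : ‖stereoWeight x ^ (μ / 2)‖ₑ ^ (2 * finrank ℝ E / μ) =
      ENNReal.ofReal (stereoWeight x ^ (finrank ℝ E : ℝ)) := by
    have hwx := (stereoWeight_pos x).le
    rw [Real.enorm_of_nonneg (by positivity),
      ENNReal.ofReal_rpow_of_nonneg (by positivity) (by positivity), ← Real.rpow_mul hwx]
    congr 2
    field_simp
  rw [eLpNorm', lintegral_congr hpow, ← ofReal_integral_eq_lintegral_ofReal
    (integrable_stereoWeight_rpow_finrank E)
    (.of_forall fun x => Real.rpow_nonneg (stereoWeight_pos x).le _), ← stereoMass, one_div_div,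
    ENNReal.ofReal_rpow_of_nonneg (stereoMass_pos E).le (by positivity)]

/-- Hölder's inequality applied to `f = (w ^ (-μ/2) * f) * w ^ (μ/2)`. -/
lemma criticalNorm_le_moment (hμ : 0 < μ) (hf : HasFinitePotential μ f) :
    criticalNorm μ f ≤ ENNReal.ofReal (moment μ f * stereoMass E ^ (μ / (2 * finrank ℝ E))) := by
  have hN : (0 : ℝ) < finrank ℝ E := mod_cast finrank_pos
  have hnonneg (x : E) : 0 ≤ stereoWeight x ^ (-(μ / 2)) * f x :=
    mul_nonneg (Real.rpow_nonneg (stereoWeight_pos x).le _) (hf.nonneg x)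
  have hsplit : f =
      (fun x => stereoWeight x ^ (-(μ / 2)) * f x) • fun x => stereoWeight x ^ (μ / 2) := by
    ext x
    rw [Pi.smul_apply', smul_eq_mul, mul_right_comm, stereoWeight_rpow_neg_mul_rpow, one_mul]
  have hmoment : eLpNorm' (fun x => stereoWeight x ^ (-(μ / 2)) * f x) 1 volume =
      ENNReal.ofReal (moment μ f) := by
    rw [moment, ofReal_integral_eq_lintegral_ofReal hf.integrable_moment (.of_forall hnonneg),
      eLpNorm', div_one, ENNReal.rpow_one]
    exact lintegral_congr fun x => by rw [ENNReal.rpow_one, Real.enorm_of_nonneg (hnonneg x)]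
  have hholder := eLpNorm'_smul_le_mul_eLpNorm' (r := 2 * finrank ℝ E / μ)
    (continuous_stereoWeight_rpow (μ / 2)).aestronglyMeasurable hf.integrable_moment.1
    (criticalExponent_pos hμ) (criticalExponent_lt_one hμ)
    (by simp only [criticalExponent]; field_simp)
  rwa [← hsplit, hmoment, eLpNorm'_stereoWeight_rpow hμ,
    ← ENNReal.ofReal_mul (moment_nonneg hf.nonneg)] at hholder

end CriticalNorm

section Competitors

variable {E : Type*} [NormedAddCommGroup E] [InnerProductSpace ℝ E] [FiniteDimensional ℝ E]
  [MeasurableSpace E] [BorelSpace E]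

variable (E) in
/-- The best constant in the reversed Hardy-Littlewood-Sobolev inequality for the kernel
`|x - y|^μ`, written as the energy of the bubble divided by the square of its critical norm. -/
noncomputable def sharpConstant (μ : ℝ) : ℝ :=
  potential μ (bubble μ) (0 : E) * stereoMass E ^ (-(1 + μ / finrank ℝ E))

/-- Pairs comparable to the bubble with the critical norms of `f` and `g` and no larger energy. -/
def competitors (μ m : ℝ) (f g : E → ℝ) : Set ((E → ℝ) × (E → ℝ)) :=
  {P | BubbleComparable μ m P.1 ∧ BubbleComparable μ m P.2 ∧
    criticalNorm μ P.1 = criticalNorm μ f ∧ criticalNorm μ P.2 = criticalNorm μ g ∧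
    rieszEnergy μ P.1 P.2 ≤ rieszEnergy μ f g}

variable [Nontrivial E] {μ m R : ℝ} {f g : E → ℝ}

lemma sharpConstant_pos (hμ : 0 < μ) : 0 < sharpConstant E μ :=
  mul_pos (potential_bubble_zero_pos hμ) (Real.rpow_pos_of_pos (stereoMass_pos E) _)

lemma sharpConstant_mul_criticalNorm_le (hμ : 0 < μ) (hf : HasFinitePotential μ f)
    (hg : HasFinitePotential μ g) :
    ENNReal.ofReal (sharpConstant E μ) * (criticalNorm μ f * criticalNorm μ g) ≤ ENNReal.ofReal
      ((stereoMass E)⁻¹ * (potential μ (bubble μ) (0 : E) * moment μ f * moment μ g)) := by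
  have hS := stereoMass_pos E
  have hmass : stereoMass E ^ (-(1 + μ / finrank ℝ E)) * (stereoMass E ^ (μ / (2 * finrank ℝ E)) *
      stereoMass E ^ (μ / (2 * finrank ℝ E))) = (stereoMass E)⁻¹ := by
    rw [← Real.rpow_add hS, ← Real.rpow_add hS, ← Real.rpow_neg_one]
    ring_nf
  have hf0 := moment_nonneg (μ := μ) hf.nonneg
  refine (mul_le_mul_right (mul_le_mul' (criticalNorm_le_moment hμ hf)
    (criticalNorm_le_moment hμ hg)) _).trans_eq ?_
  rw [← ENNReal.ofReal_mul (by positivity), ← ENNReal.ofReal_mul (sharpConstant_pos hμ).le,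
    sharpConstant, ← hmass]
  ring_nf

lemma mk_polarize_mem_competitors (hμ : 0 < μ) (hm : 0 ≤ m) (hR : 0 < R) {a : E}
    (ha : 1 + ‖a‖ ^ 2 - R ^ 2 ≠ 0) {P : (E → ℝ) × (E → ℝ)} (hP : P ∈ competitors μ m f g) :
    (polarize μ a R (1 + ‖a‖ ^ 2 - R ^ 2) P.1, polarize μ a R (1 + ‖a‖ ^ 2 - R ^ 2) P.2) ∈
      competitors μ m f g := by
  obtain ⟨h₁, h₂, hf, hg, hle⟩ := hP
  exact ⟨h₁.polarize hμ hm hR a, h₂.polarize hμ hm hR a,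
    (criticalNorm_polarize hμ hR ha a h₁.measurable).trans hf,
    (criticalNorm_polarize hμ hR ha a h₂.measurable).trans hg,
    (rieszEnergy_polarize_le hR h₁.measurable h₂.measurable (h₁.nonneg hm) (h₂.nonneg hm)
      hμ ha).trans hle⟩

/-- A sequence of competitors whose second components maximise the entropy. -/
lemma exists_competitors_asymptoticallyPolarized (hμ : 0 < μ) (hm : 0 < m)
    (hf : BubbleComparable μ m f) (hg : BubbleComparable μ m g) :
    ∃ P : ℕ → (E → ℝ) × (E → ℝ), (∀ k, P k ∈ competitors μ m f g) ∧
      AsymptoticallyPolarized μ fun k => (P k).2 := by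
  have hfg : (f, g) ∈ competitors μ m f g := ⟨hf, hg, rfl, rfl, le_rfl⟩
  have hbdd : BddAbove ((fun P => entropy μ P.2) '' competitors μ m f g) :=
    ⟨0, Set.forall_mem_image.2 fun P hP => hP.2.1.entropy_nonpos hm⟩
  obtain ⟨s, -, hs, hmem⟩ := exists_seq_tendsto_sSup
    (Set.Nonempty.image _ ⟨(f, g), hfg⟩) hbdd
  choose P hP hPs using hmem
  refine ⟨P, hP, asymptoticallyPolarized_of_tendsto_entropy hμ hm (fun k => (hP k).2.1)
    (by simpa only [hPs] using hs) fun k a R hR ha => ?_⟩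
  exact le_csSup hbdd ⟨_, mk_polarize_mem_competitors hμ hm.le hR ha (hP k), rfl⟩

lemma BubbleComparable.sharpConstant_mul_criticalNorm_le_rieszEnergy
    (hf : BubbleComparable μ m f) (hg : BubbleComparable μ m g) (hμ : 0 < μ) (hm : 0 < m) :
    ENNReal.ofReal (sharpConstant E μ) * (criticalNorm μ f * criticalNorm μ g) ≤
      rieszEnergy μ f g := by
  obtain ⟨P, hP, hpol⟩ := exists_competitors_asymptoticallyPolarized hμ hm hf hg
  have hgap := hpol.tendsto_energy_sub (fun k => (hP k).2.1) hμ hm.le (fun k => (hP k).1) hm.le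
  have henergy {F G : E → ℝ} (hF : BubbleComparable μ m F) (hG : BubbleComparable μ m G) :=
    hG.rieszEnergy_eq_ofReal hm.le hμ (hF.hasFinitePotential hm.le)
  have hlim := (hgap.const_mul (stereoMass E)⁻¹).const_sub (∫ x, f x * potential μ g x)
  rw [mul_zero, sub_zero] at hlim
  rw [henergy hf hg]
  refine ge_of_tendsto' ((ENNReal.continuous_ofReal.tendsto _).comp hlim) fun k => ?_
  obtain ⟨h₁, h₂, hnorm₁, hnorm₂, hle⟩ := hP k
  rw [henergy h₁ h₂, henergy hf hg, ENNReal.ofReal_le_ofReal_iff (integral_nonneg fun x =>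
    mul_nonneg (hf.nonneg hm.le x) (potential_nonneg (hg.nonneg hm.le) x))] at hle
  rw [← hnorm₁, ← hnorm₂]
  refine (sharpConstant_mul_criticalNorm_le hμ (h₁.hasFinitePotential hm.le)
    (h₂.hasFinitePotential hm.le)).trans (ENNReal.ofReal_le_ofReal ?_)
  simp only [mul_sub, inv_mul_cancel_left₀ (stereoMass_pos E).ne']
  linarith

end Competitors

section SharpInequality

variable {E : Type*} [NormedAddCommGroup E] [InnerProductSpace ℝ E] [FiniteDimensional ℝ E]
  [MeasurableSpace E] [BorelSpace E] {μ k m : ℝ} {f g f' g' : E → ℝ}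

lemma rieszEnergy_mono (hf : ∀ x, 0 ≤ f x) (hg : ∀ x, 0 ≤ g x) (hff' : ∀ x, f x ≤ f' x)
    (hgg' : ∀ x, g x ≤ g' x) : rieszEnergy μ f g ≤ rieszEnergy μ f' g' := by
  refine lintegral_mono fun x => lintegral_mono fun y => ENNReal.ofReal_le_ofReal ?_
  have : 0 ≤ dist x y ^ μ := Real.rpow_nonneg dist_nonneg _
  have hfx := (hf x).trans (hff' x)
  have := hg y
  gcongr
  exacts [hff' x, hgg' y]

lemma rieszEnergy_const_smul_smul {c : ℝ} (hc : 0 ≤ c) (f g : E → ℝ) :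
    rieszEnergy μ (c • f) (c • g) = ENNReal.ofReal (c * c) * rieszEnergy μ f g := by
  simp_rw [rieszEnergy, kernelEnergy, ← lintegral_const_mul' _ _ ENNReal.ofReal_ne_top,
    ← ENNReal.ofReal_mul (mul_nonneg hc hc), Pi.smul_apply, smul_eq_mul]
  ring_nf

lemma rieszEnergy_add_bubble_le (hm : 0 ≤ m) (hf : Measurable f) (hg : Measurable g)
    (hf0 : ∀ x, 0 ≤ f x) (hg0 : ∀ x, 0 ≤ g x) (hfk : ∀ x, f x ≤ k * bubble μ x)
    (hgk : ∀ x, g x ≤ k * bubble μ x) :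
    rieszEnergy μ (f + m • bubble μ) (g + m • bubble μ) ≤ rieszEnergy μ f g +
      ENNReal.ofReal (m * (2 * k + m)) * rieszEnergy μ (bubble μ : E → ℝ) (bubble μ) := by
  have hb := measurable_bubble (E := E) μ
  rw [rieszEnergy_eq_lintegral_prod (hf.add (hb.const_smul m)) (hg.add (hb.const_smul m)),
    rieszEnergy_eq_lintegral_prod hf hg, rieszEnergy_eq_lintegral_prod hb hb,
    ← lintegral_const_mul' _ _ ENNReal.ofReal_ne_top, ← lintegral_add_left (by fun_prop)]
  refine lintegral_mono fun ⟨x, y⟩ => ?_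
  have hK : 0 ≤ dist x y ^ μ := Real.rpow_nonneg dist_nonneg _
  have hx := (bubble_pos μ x).le
  have hy := (bubble_pos μ y).le
  have hfx := hf0 x
  have hgy := hg0 y
  have hk : 0 ≤ k := nonneg_of_mul_nonneg_left (hfx.trans (hfk x)) (bubble_pos μ x)
  rw [← ENNReal.ofReal_mul (by positivity), ← ENNReal.ofReal_add (by positivity) (by positivity)]
  refine ENNReal.ofReal_le_ofReal ?_
  have hprod : (f x + m * bubble μ x) * (g y + m * bubble μ y) ≤
      f x * g y + m * (2 * k + m) * (bubble μ x * bubble μ y) := by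
    have := mul_le_mul_of_nonneg_right (hfk x) (mul_nonneg hm hy)
    have := mul_le_mul_of_nonneg_right (hgk y) (mul_nonneg hm hx)
    linarith
  have := mul_le_mul_of_nonneg_right hprod hK
  simp only [Pi.add_apply, Pi.smul_apply, smul_eq_mul]
  linarith

variable [Nontrivial E]

lemma criticalNorm_mono (hμ : 0 < μ) (hf : ∀ x, 0 ≤ f x) (hfg : ∀ x, f x ≤ g x) :
    criticalNorm μ f ≤ criticalNorm μ g :=
  eLpNorm'_mono_ae (criticalExponent_pos hμ).le <| .of_forall fun x => by
    rw [Real.norm_of_nonneg (hf x), Real.norm_of_nonneg ((hf x).trans (hfg x))]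
    exact hfg x

lemma sharpConstant_mul_criticalNorm_le_of_between (hμ : 0 < μ) (hm : 0 < m) (hk : 0 < k)
    (hf : Measurable f) (hg : Measurable g) (hfm : ∀ x, m * bubble μ x ≤ f x)
    (hgm : ∀ x, m * bubble μ x ≤ g x) (hfk : ∀ x, f x ≤ k * bubble μ x)
    (hgk : ∀ x, g x ≤ k * bubble μ x) :
    ENNReal.ofReal (sharpConstant E μ) * (criticalNorm μ f * criticalNorm μ g) ≤
      rieszEnergy μ f g := by
  have hk' : 0 < k⁻¹ := inv_pos.2 hk
  have hcls {h : E → ℝ} (hh : Measurable h) (hhm : ∀ x, m * bubble μ x ≤ h x)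
      (hhk : ∀ x, h x ≤ k * bubble μ x) : BubbleComparable μ (k⁻¹ * m) (k⁻¹ • h) :=
    { measurable := hh.const_smul _
      lower x := by
        rw [mul_assoc]
        exact mul_le_mul_of_nonneg_left (hhm x) hk'.le
      upper x := (inv_mul_le_iff₀ hk).2 (hhk x) }
  have key := (hcls hf hfm hfk).sharpConstant_mul_criticalNorm_le_rieszEnergy (hcls hg hgm hgk) hμ
    (mul_pos hk' hm)
  rw [rieszEnergy_const_smul_smul hk'.le, criticalNorm, criticalNorm,
    eLpNorm'_const_smul _ (criticalExponent_pos hμ),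
    eLpNorm'_const_smul _ (criticalExponent_pos hμ), Real.enorm_of_nonneg hk'.le,
    mul_mul_mul_comm, ← ENNReal.ofReal_mul hk'.le, mul_left_comm] at key
  exact (ENNReal.mul_le_mul_iff_right (ENNReal.ofReal_pos.2 (mul_pos hk' hk')).ne'
    ENNReal.ofReal_ne_top).1 key

lemma sharpConstant_mul_criticalNorm_le_add (hμ : 0 < μ) (hm : 0 < m) (hf : Measurable f)
    (hg : Measurable g) (hf0 : ∀ x, 0 ≤ f x) (hg0 : ∀ x, 0 ≤ g x)
    (hfk : ∀ x, f x ≤ k * bubble μ x) (hgk : ∀ x, g x ≤ k * bubble μ x) :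
    ENNReal.ofReal (sharpConstant E μ) * (criticalNorm μ f * criticalNorm μ g) ≤
      rieszEnergy μ f g +
        ENNReal.ofReal (m * (2 * k + m)) * rieszEnergy μ (bubble μ : E → ℝ) (bubble μ) := by
  have hb := measurable_bubble (E := E) μ
  have hk : 0 ≤ k := nonneg_of_mul_nonneg_left ((hf0 0).trans (hfk 0)) (bubble_pos μ 0)
  have hmb (x : E) : 0 ≤ m * bubble μ x := (mul_pos hm (bubble_pos μ x)).le
  have hupper {h : E → ℝ} (hhk : ∀ x, h x ≤ k * bubble μ x) (x : E) :
      (h + m • bubble μ : E → ℝ) x ≤ (k + m) * bubble μ x :=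
    (add_le_add_left (hhk x) _).trans_eq (add_mul _ _ _).symm
  calc ENNReal.ofReal (sharpConstant E μ) * (criticalNorm μ f * criticalNorm μ g)
      ≤ ENNReal.ofReal (sharpConstant E μ) *
          (criticalNorm μ (f + m • bubble μ) * criticalNorm μ (g + m • bubble μ)) := by
        gcongr
        · exact criticalNorm_mono hμ hf0 fun x => le_add_of_nonneg_right (hmb x)
        · exact criticalNorm_mono hμ hg0 fun x => le_add_of_nonneg_right (hmb x)
    _ ≤ rieszEnergy μ (f + m • bubble μ) (g + m • bubble μ) :=
        sharpConstant_mul_criticalNorm_le_of_between hμ hm (add_pos_of_nonneg_of_pos hk hm)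
          (hf.add (hb.const_smul m)) (hg.add (hb.const_smul m))
          (fun x => le_add_of_nonneg_left (hf0 x)) (fun x => le_add_of_nonneg_left (hg0 x))
          (hupper hfk) (hupper hgk)
    _ ≤ _ := rieszEnergy_add_bubble_le hm.le hf hg hf0 hg0 hfk hgk

lemma rieszEnergy_bubble_ne_top (hμ : 0 < μ) :
    rieszEnergy μ (bubble μ : E → ℝ) (bubble μ) ≠ ∞ := by
  rw [(bubbleComparable_bubble μ).rieszEnergy_eq_ofReal zero_le_one hμ
    (hasFinitePotential_bubble μ)]
  exact ENNReal.ofReal_ne_top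

lemma sharpConstant_mul_criticalNorm_le_of_le_bubble (hμ : 0 < μ) (hf : Measurable f)
    (hg : Measurable g) (hf0 : ∀ x, 0 ≤ f x) (hg0 : ∀ x, 0 ≤ g x)
    (hfk : ∀ x, f x ≤ k * bubble μ x) (hgk : ∀ x, g x ≤ k * bubble μ x) :
    ENNReal.ofReal (sharpConstant E μ) * (criticalNorm μ f * criticalNorm μ g) ≤
      rieszEnergy μ f g := by
  have hzero : Filter.Tendsto (fun m : ℝ => m * (2 * k + m)) (nhdsWithin 0 (Set.Ioi 0)) (nhds 0) :=
    (Continuous.tendsto' (f := fun m : ℝ => m * (2 * k + m)) (by fun_prop) _ _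
      (zero_mul _)).mono_left nhdsWithin_le_nhds
  have hlim := (ENNReal.Tendsto.mul_const (ENNReal.tendsto_ofReal hzero)
    (.inr (rieszEnergy_bubble_ne_top (E := E) hμ))).const_add (rieszEnergy μ f g)
  rw [ENNReal.ofReal_zero, zero_mul, add_zero] at hlim
  exact ge_of_tendsto hlim <| eventually_nhdsWithin_of_forall fun m hm =>
    sharpConstant_mul_criticalNorm_le_add hμ hm hf hg hf0 hg0 hfk hgk

lemma iSup_criticalNorm_min_bubble (hμ : 0 < μ) (hf : Measurable f) (hf0 : ∀ x, 0 ≤ f x) :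
    ⨆ k : ℕ, criticalNorm μ (fun x => min (f x) (k * bubble μ x)) = criticalNorm μ f := by
  have hp := criticalExponent_pos (E := E) hμ
  have hnonneg (k : ℕ) (x : E) : 0 ≤ min (f x) (k * bubble μ x) :=
    le_min (hf0 x) (mul_nonneg k.cast_nonneg (bubble_pos μ x).le)
  have hmono (x : E) : Monotone fun k : ℕ => min (f x) (k * bubble μ x) := fun i j hij =>
    min_le_min_left _ (mul_le_mul_of_nonneg_right (Nat.cast_le.2 hij) (bubble_pos μ x).le)
  have henorm (x : E) : Monotone fun k : ℕ => ‖min (f x) (k * bubble μ x)‖ₑ := fun i j hij => by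
    simp only [Real.enorm_of_nonneg (hnonneg _ x)]
    exact ENNReal.ofReal_le_ofReal (hmono x hij)
  have hlim (x : E) : Filter.Tendsto (fun k : ℕ => ‖min (f x) (k * bubble μ x)‖ₑ) Filter.atTop
      (nhds ‖f x‖ₑ) := by
    obtain ⟨N, hN⟩ := exists_nat_ge (f x / bubble μ x)
    refine tendsto_atTop_of_eventually_const (i₀ := N) fun k hk => ?_
    rw [min_eq_left ((div_le_iff₀ (bubble_pos μ x)).1 (hN.trans (Nat.cast_le.2 hk)))]
  have hb := measurable_bubble (E := E) μ
  refine iSup_eq_of_tendsto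
    (fun i j hij => criticalNorm_mono hμ (hnonneg i) fun x => hmono x hij) ?_
  refine (ENNReal.continuous_rpow_const.tendsto _).comp (lintegral_tendsto_of_tendsto_of_monotone
    (fun k => ?_) (.of_forall fun x i j hij => ENNReal.rpow_le_rpow (henorm x hij) hp.le)
    (.of_forall fun x => (ENNReal.continuous_rpow_const.tendsto _).comp (hlim x)))
  exact ((hf.min (hb.const_mul _)).enorm.pow_const _).aemeasurable

theorem sharpConstant_mul_criticalNorm_le_rieszEnergy (hμ : 0 < μ) (hf : Measurable f)
    (hg : Measurable g) (hf0 : ∀ x, 0 ≤ f x) (hg0 : ∀ x, 0 ≤ g x) :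
    ENNReal.ofReal (sharpConstant E μ) * (criticalNorm μ f * criticalNorm μ g) ≤
      rieszEnergy μ f g := by
  have hb := measurable_bubble (E := E) μ
  have hnonneg {h : E → ℝ} (hh : ∀ x, 0 ≤ h x) (k : ℕ) (x : E) : 0 ≤ min (h x) (k * bubble μ x) :=
    le_min (hh x) (mul_nonneg k.cast_nonneg (bubble_pos μ x).le)
  have hle (h : E → ℝ) {k l : ℕ} (hkl : k ≤ l) (x : E) :
      min (h x) (k * bubble μ x) ≤ (l : ℝ) * bubble μ x :=
    (min_le_right _ _).trans (mul_le_mul_of_nonneg_right (Nat.cast_le.2 hkl) (bubble_pos μ x).le)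
  rw [← iSup_criticalNorm_min_bubble hμ hf hf0, ← iSup_criticalNorm_min_bubble hμ hg hg0]
  simp only [ENNReal.mul_iSup, ENNReal.iSup_mul]
  refine iSup_le fun i => iSup_le fun j => ?_
  refine (sharpConstant_mul_criticalNorm_le_of_le_bubble hμ (hf.min (hb.const_mul _))
    (hg.min (hb.const_mul _)) (hnonneg hf0 _) (hnonneg hg0 _) (hle f (le_max_right i j))
    (hle g (le_max_left i j))).trans ?_
  exact rieszEnergy_mono (hnonneg hf0 _) (hnonneg hg0 _) (fun x => min_le_left _ _)
    fun x => min_le_left _ _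

end SharpInequality

/-! ### The value of the sharp constant -/

section BetaIntegral

variable {a b c : ℝ}

lemma lintegral_rpow_mul_exp_neg_mul_Ioi (hc : 0 < c) (hb : 0 < b) :
    ∫⁻ t in Set.Ioi (0 : ℝ), ENNReal.ofReal (t ^ (c - 1) * Real.exp (-(b * t))) =
      ENNReal.ofReal (Real.Gamma c * b ^ (-c)) := by
  have := Real.Gamma_pos_of_pos hc
  have hint : ∫ t in Set.Ioi (0 : ℝ), t ^ (c - 1) * Real.exp (-(b * t)) =
      Real.Gamma c * b ^ (-c) := by
    rw [Real.integral_rpow_mul_exp_neg_mul_Ioi hc hb, one_div, Real.inv_rpow hb.le,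
      Real.rpow_neg hb.le, mul_comm]
  have hpos : 0 < Real.Gamma c * b ^ (-c) := by positivity
  rw [← hint, ofReal_integral_eq_lintegral_ofReal (.of_integral_ne_zero (hint ▸ hpos.ne'))
    ((ae_restrict_iff' measurableSet_Ioi).2 (.of_forall fun t (ht : 0 < t) => by positivity))]

lemma lintegral_rpow_mul_exp_neg_mul_sq_Ioi (ha : -1 < a) (hb : 0 < b) :
    ∫⁻ r in Set.Ioi (0 : ℝ), ENNReal.ofReal (r ^ a * Real.exp (-b * r ^ 2)) =
      ENNReal.ofReal (Real.Gamma ((a + 1) / 2) / 2 * b ^ (-(a + 1) / 2)) := by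
  have hG := Real.Gamma_pos_of_pos (show 0 < (a + 1) / 2 by linarith)
  have hint : ∫ r in Set.Ioi (0 : ℝ), r ^ a * Real.exp (-b * r ^ 2) =
      Real.Gamma ((a + 1) / 2) / 2 * b ^ (-(a + 1) / 2) := by
    have := integral_rpow_mul_exp_neg_mul_rpow two_pos ha hb
    simp only [Real.rpow_two] at this
    rw [this]
    ring
  have hpos : 0 < Real.Gamma ((a + 1) / 2) / 2 * b ^ (-(a + 1) / 2) := by positivity
  rw [← hint, ofReal_integral_eq_lintegral_ofReal (.of_integral_ne_zero (hint ▸ hpos.ne'))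
    ((ae_restrict_iff' measurableSet_Ioi).2 (.of_forall fun t (ht : 0 < t) => by positivity))]

/-- Write `Γ(c) (1 + r²)^(-c)` as a Gamma integral and exchange the order of integration. -/
lemma lintegral_rpow_mul_one_add_sq_rpow_neg_Ioi (ha : -1 < a) (hc : (a + 1) / 2 < c) :
    ENNReal.ofReal (Real.Gamma c) *
        ∫⁻ r in Set.Ioi (0 : ℝ), ENNReal.ofReal (r ^ a * (1 + r ^ 2) ^ (-c)) =
      ENNReal.ofReal (Real.Gamma ((a + 1) / 2) / 2 * Real.Gamma (c - (a + 1) / 2)) := by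
  have hc0 : 0 < c := by linarith
  have hΓ := Real.Gamma_pos_of_pos hc0
  have hΓa := Real.Gamma_pos_of_pos (show 0 < (a + 1) / 2 by linarith)
  calc _ = ∫⁻ r in Set.Ioi (0 : ℝ), ∫⁻ t in Set.Ioi (0 : ℝ),
        ENNReal.ofReal (r ^ a * (t ^ (c - 1) * Real.exp (-((1 + r ^ 2) * t)))) := by
        rw [← lintegral_const_mul' _ _ ENNReal.ofReal_ne_top]
        refine setLIntegral_congr_fun measurableSet_Ioi fun r (hr : 0 < r) => ?_
        simp only [ENNReal.ofReal_mul (Real.rpow_nonneg hr.le a)]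
        rw [lintegral_const_mul' _ _ ENNReal.ofReal_ne_top,
          lintegral_rpow_mul_exp_neg_mul_Ioi hc0 (by positivity), ENNReal.ofReal_mul hΓ.le]
        ring
    _ = ∫⁻ t in Set.Ioi (0 : ℝ), ∫⁻ r in Set.Ioi (0 : ℝ),
        ENNReal.ofReal (r ^ a * (t ^ (c - 1) * Real.exp (-((1 + r ^ 2) * t)))) :=
        lintegral_lintegral_swap (by unfold Function.uncurry; fun_prop)
    _ = ∫⁻ t in Set.Ioi (0 : ℝ), ENNReal.ofReal (Real.Gamma ((a + 1) / 2) / 2) *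
        ENNReal.ofReal (t ^ (c - (a + 1) / 2 - 1) * Real.exp (-(1 * t))) := by
        refine setLIntegral_congr_fun measurableSet_Ioi fun t (ht : 0 < t) => ?_
        have hsplit (r : ℝ) : r ^ a * (t ^ (c - 1) * Real.exp (-((1 + r ^ 2) * t))) =
            t ^ (c - 1) * Real.exp (-t) * (r ^ a * Real.exp (-t * r ^ 2)) := by
          rw [show -((1 + r ^ 2) * t) = -t + -t * r ^ 2 by ring, Real.exp_add]
          ring
        have hpos : 0 ≤ t ^ (c - 1) * Real.exp (-t) := by positivity
        simp only [hsplit, ENNReal.ofReal_mul hpos]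
        rw [lintegral_const_mul' _ _ ENNReal.ofReal_ne_top,
          lintegral_rpow_mul_exp_neg_mul_sq_Ioi ha ht, ← ENNReal.ofReal_mul hpos,
          ← ENNReal.ofReal_mul (by positivity),
          show c - (a + 1) / 2 - 1 = (c - 1) + -(a + 1) / 2 by ring, Real.rpow_add ht]
        ring_nf
    _ = _ := by
        rw [lintegral_const_mul' _ _ ENNReal.ofReal_ne_top,
          lintegral_rpow_mul_exp_neg_mul_Ioi (by linarith) one_pos, Real.one_rpow, mul_one,
          ENNReal.ofReal_mul (by positivity)]

lemma integral_rpow_mul_one_add_sq_rpow_neg_Ioi (ha : -1 < a) (hc : (a + 1) / 2 < c) :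
    ∫ r in Set.Ioi (0 : ℝ), r ^ a * (1 + r ^ 2) ^ (-c) =
      Real.Gamma ((a + 1) / 2) * Real.Gamma (c - (a + 1) / 2) / (2 * Real.Gamma c) := by
  have hΓ := Real.Gamma_pos_of_pos (show 0 < c by linarith)
  have hΓa := Real.Gamma_pos_of_pos (show 0 < (a + 1) / 2 by linarith)
  have := Real.Gamma_pos_of_pos (show 0 < c - (a + 1) / 2 by linarith)
  have hreal := congrArg ENNReal.toReal (lintegral_rpow_mul_one_add_sq_rpow_neg_Ioi ha hc)
  rw [ENNReal.toReal_mul, ENNReal.toReal_ofReal hΓ.le,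
    ENNReal.toReal_ofReal (by positivity)] at hreal
  rw [integral_eq_lintegral_of_nonneg_ae ((ae_restrict_iff' measurableSet_Ioi).2
      (.of_forall fun r (hr : 0 < r) => show 0 ≤ r ^ a * (1 + r ^ 2) ^ (-c) by positivity))
      (by fun_prop), _root_.eq_div_iff (by positivity)]
  linear_combination 2 * hreal

end BetaIntegral

section Constants

variable {E : Type*} [NormedAddCommGroup E] [InnerProductSpace ℝ E] [FiniteDimensional ℝ E]
  [MeasurableSpace E] [BorelSpace E] [Nontrivial E] {μ s c : ℝ}

variable (E) in
lemma finrank_mul_volume_ball : (finrank ℝ E : ℝ) * (volume : Measure E).real (Metric.ball 0 1) =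
    2 * Real.pi ^ ((finrank ℝ E : ℝ) / 2) / Real.Gamma ((finrank ℝ E : ℝ) / 2) := by
  have hn : (0 : ℝ) < finrank ℝ E := mod_cast finrank_pos
  have := Real.Gamma_pos_of_pos (half_pos hn)
  rw [Measure.real, InnerProductSpace.volume_ball, ENNReal.ofReal_one, one_pow, one_mul,
    ENNReal.toReal_ofReal (by positivity), Real.Gamma_add_one (by positivity), Real.sqrt_eq_rpow,
    ← Real.rpow_natCast, ← Real.rpow_mul Real.pi_pos.le, one_div_mul_eq_div]
  field_simp

lemma integral_norm_rpow_mul_one_add_sq_rpow_neg (hs : 0 ≤ s)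
    (hc : ((finrank ℝ E : ℝ) + s) / 2 < c) :
    ∫ y : E, ‖y‖ ^ s * (1 + ‖y‖ ^ 2) ^ (-c) =
      Real.pi ^ ((finrank ℝ E : ℝ) / 2) / Real.Gamma ((finrank ℝ E : ℝ) / 2) *
        (Real.Gamma (((finrank ℝ E : ℝ) + s) / 2) *
          Real.Gamma (c - ((finrank ℝ E : ℝ) + s) / 2) / Real.Gamma c) := by
  have hn : 1 ≤ finrank ℝ E := finrank_pos
  have hn' : (1 : ℝ) ≤ finrank ℝ E := mod_cast hn
  have := Real.Gamma_pos_of_pos (show 0 < (finrank ℝ E : ℝ) / 2 by positivity)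
  have hΓc := Real.Gamma_pos_of_pos (show 0 < c by linarith)
  have hradial : ∫ r in Set.Ioi (0 : ℝ), r ^ (finrank ℝ E - 1) • (r ^ s * (1 + r ^ 2) ^ (-c)) =
      ∫ r in Set.Ioi (0 : ℝ), r ^ ((finrank ℝ E : ℝ) - 1 + s) * (1 + r ^ 2) ^ (-c) := by
    refine setIntegral_congr_fun measurableSet_Ioi fun r (hr : 0 < r) => ?_
    simp only [smul_eq_mul]
    rw [Real.rpow_add hr, ← mul_assoc, ← Real.rpow_natCast, Nat.cast_sub hn, Nat.cast_one]
  rw [integral_fun_norm_addHaar volume fun r => r ^ s * (1 + r ^ 2) ^ (-c), hradial,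
    integral_rpow_mul_one_add_sq_rpow_neg_Ioi (by linarith) (by linarith), nsmul_eq_mul,
    smul_eq_mul, ← mul_assoc, finrank_mul_volume_ball E,
    show (finrank ℝ E : ℝ) - 1 + s + 1 = finrank ℝ E + s by ring]
  field_simp

variable (E) in
lemma stereoMass_eq : stereoMass E = Real.pi ^ ((finrank ℝ E : ℝ) / 2) *
    (Real.Gamma ((finrank ℝ E : ℝ) / 2) / Real.Gamma (finrank ℝ E : ℝ)) := by
  have hn : (0 : ℝ) < finrank ℝ E := mod_cast finrank_pos
  have := Real.Gamma_pos_of_pos (half_pos hn)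
  have hint := integral_norm_rpow_mul_one_add_sq_rpow_neg (E := E) le_rfl
    (c := (finrank ℝ E : ℝ)) (by linarith)
  have hweight (y : E) : stereoWeight y ^ (finrank ℝ E : ℝ) =
      ‖y‖ ^ (0 : ℝ) * (1 + ‖y‖ ^ 2) ^ (-(finrank ℝ E : ℝ)) := by
    rw [stereoWeight, Real.rpow_zero, one_mul, Real.inv_rpow (by positivity),
      Real.rpow_neg (by positivity)]
  simp only [stereoMass, hweight]
  rw [hint, add_zero, show (finrank ℝ E : ℝ) - finrank ℝ E / 2 = finrank ℝ E / 2 by ring]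
  field_simp

lemma potential_bubble_zero_eq (hμ : 0 < μ) : potential μ (bubble μ) (0 : E) =
    Real.pi ^ ((finrank ℝ E : ℝ) / 2) *
      (Real.Gamma (((finrank ℝ E : ℝ) + μ) / 2) / Real.Gamma ((finrank ℝ E : ℝ) + μ / 2)) := by
  have hn : (0 : ℝ) < finrank ℝ E := mod_cast finrank_pos
  have := Real.Gamma_pos_of_pos (half_pos hn)
  have hint := integral_norm_rpow_mul_one_add_sq_rpow_neg (E := E) hμ.le
    (c := (finrank ℝ E : ℝ) + μ / 2) (by linarith)
  have hintegrand (y : E) : dist 0 y ^ μ * bubble μ y =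
      ‖y‖ ^ μ * (1 + ‖y‖ ^ 2) ^ (-((finrank ℝ E : ℝ) + μ / 2)) := by
    rw [dist_zero_left, bubble, stereoWeight, Real.inv_rpow (by positivity),
      Real.rpow_neg (by positivity)]
  simp only [potential, hintegrand]
  rw [hint, show (finrank ℝ E : ℝ) + μ / 2 - (finrank ℝ E + μ) / 2 = finrank ℝ E / 2 by ring]
  field_simp

lemma sharpConstant_eq (hμ : 0 < μ) : sharpConstant E μ = Real.pi ^ (-(μ / 2)) *
    (Real.Gamma (((finrank ℝ E : ℝ) + μ) / 2) / Real.Gamma ((finrank ℝ E : ℝ) + μ / 2)) *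
      (Real.Gamma ((finrank ℝ E : ℝ) / 2) / Real.Gamma (finrank ℝ E : ℝ)) ^
        (-(1 + μ / finrank ℝ E)) := by
  have hn : (0 : ℝ) < finrank ℝ E := mod_cast finrank_pos
  have := Real.Gamma_pos_of_pos (half_pos hn)
  have := Real.Gamma_pos_of_pos hn
  rw [sharpConstant, stereoMass_eq, potential_bubble_zero_eq hμ,
    Real.mul_rpow (by positivity) (by positivity), ← Real.rpow_mul Real.pi_pos.le,
    show -(μ / 2) = (finrank ℝ E : ℝ) / 2 + finrank ℝ E / 2 * -(1 + μ / finrank ℝ E) by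
      field_simp; ring, Real.rpow_add Real.pi_pos]
  ring

end Constants

/-! ### Moving spheres -/

section MovingSpheres

open Filter Topology Asymptotics

variable {E : Type*} [NormedAddCommGroup E]

lemma eq_of_sub_mul_dist_sq_le [NormedSpace ℝ E] {k : E → ℝ} {C : ℝ}
    (h : ∀ x y, k x - C * dist x y ^ 2 ≤ k y) (x y : E) : k x = k y := by
  have hderiv (x : E) : HasFDerivAt k (0 : E →L[ℝ] ℝ) x := by
    have hquad : (fun y => k y - k x) =O[𝓝 x] fun y => ‖y - x‖ ^ 2 := by
      refine .of_bound C (.of_forall fun y => ?_)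
      have hx := h x y
      have hy := h y x
      rw [dist_comm x y] at hx
      rw [Real.norm_eq_abs, norm_pow, norm_norm, ← dist_eq_norm, abs_le]
      constructor <;> linarith
    simpa using hquad.hasFDerivAt (𝕜 := ℝ) (n := 2) (by norm_num)
  exact is_const_of_fderiv_eq_zero (fun x => (hderiv x).differentiableAt)
    (fun x => (hderiv x).fderiv) x y

lemma tendsto_dist_div_norm [ProperSpace E] (a : E) :
    Tendsto (fun x => dist x a / ‖x‖) (cocompact E) (𝓝 1) := by
  have hzero : Tendsto (fun x : E => ‖a‖ / ‖x‖) (cocompact E) (𝓝 0) :=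
    tendsto_const_nhds.div_atTop tendsto_norm_cocompact_atTop
  refine tendsto_of_tendsto_of_tendsto_of_le_of_le' (g := fun x : E => 1 - ‖a‖ / ‖x‖)
    (h := fun x : E => 1 + ‖a‖ / ‖x‖) (by simpa using hzero.const_sub 1)
    (by simpa using hzero.const_add 1) ?_ ?_
  all_goals
    filter_upwards [tendsto_norm_cocompact_atTop.eventually_gt_atTop 0] with x hx
  · rw [le_div_iff₀ hx, sub_mul, div_mul_cancel₀ _ hx.ne', dist_eq_norm, one_mul]
    exact norm_sub_norm_le x a
  · rw [div_le_iff₀ hx, add_mul, div_mul_cancel₀ _ hx.ne', dist_eq_norm, one_mul]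
    exact norm_sub_le x a

variable [InnerProductSpace ℝ E] {a : E} {R l : ℝ} {h : E → ℝ}

/-- Outside the sphere of centre `a` and radius `R`, the function `h` lies below its reflection
`J⁻¹ * (h ∘ inversion)`. The reverse comparison is `BelowReflection a R (-h)`. -/
def BelowReflection (a : E) (R : ℝ) (h : E → ℝ) : Prop :=
  ∀ x, R < dist x a → conformalFactor a R x * h x ≤ h (inversion a R x)

lemma isClosed_setOf_belowReflection (a : E) (hh : Continuous h) :
    IsClosed {R | BelowReflection a R h} := by
  have hset : {R | BelowReflection a R h} = ⋂ x, ({R | dist x a ≤ R} ∪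
      {R | conformalFactor a R x * h x ≤ h (inversion a R x)}) := by
    ext R
    simp only [BelowReflection, Set.mem_ofPred_eq, Set.mem_iInter, Set.mem_union, ← not_lt,
      imp_iff_not_or]
  rw [hset]
  refine isClosed_iInter fun x => (isClosed_le continuous_const continuous_id).union ?_
  by_cases hx : x = a
  · simp [hx, conformalFactor]
  · simp only [conformalFactor_of_ne hx]
    exact isClosed_le (by fun_prop)
      (hh.comp (continuous_const.inversion continuous_id continuous_const fun _ => hx))

lemma BelowReflection.apply_inversion (hR : 0 < R) (hbelow : BelowReflection a R h)
    (habove : BelowReflection a R (-h)) (x : E) :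
    h (inversion a R x) = conformalFactor a R x * h x := by
  have hout {x : E} (hx : R < dist x a) : h (inversion a R x) = conformalFactor a R x * h x :=
    le_antisymm (by simpa using habove x hx) (hbelow x hx)
  obtain rfl | hxa := eq_or_ne x a
  · simp [conformalFactor]
  rcases lt_trichotomy R (dist x a) with hx | hx | hx
  · exact hout hx
  · rw [inversion_of_mem_sphere (Metric.mem_sphere.2 hx.symm), conformalFactor_of_ne hxa, ← hx,
      div_self hR.ne', one_pow, one_mul]
  · have hxa' := dist_pos.2 hxa
    have hx' := hout (x := inversion a R x) (by
      rw [dist_inversion_center, lt_div_iff₀ hxa', sq]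
      exact mul_lt_mul_of_pos_left hx hR)
    rw [inversion_inversion _ hR.ne', conformalFactor_inversion hR] at hx'
    rw [hx', mul_inv_cancel_left₀ (conformalFactor_pos hR x).ne']

lemma sub_mul_dist_sq_le {x₀ : E} (hpos : ∀ x, 0 < h x) (hl : 0 < l)
    (hinv : ∀ a x, h (inversion a √(h a / l) x) = conformalFactor a √(h a / l) x * h x)
    (hlower : ∀ x, l * dist x x₀ ^ 2 ≤ h x) (x y : E) :
    h x - l * dist x x₀ ^ 2 - l * dist x y ^ 2 ≤ h y - l * dist y x₀ ^ 2 := by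
  have hradius : 0 < √(h x / l) := Real.sqrt_pos.2 (div_pos (hpos x) hl)
  have hsq : √(h x / l) ^ 2 = h x / l := Real.sq_sqrt (div_pos (hpos x) hl).le
  obtain rfl | hy := eq_or_ne y x
  · simp
  have hJ := conformalFactor_pos (a := x) hradius y
  have hle := mul_le_mul_of_nonneg_left (hlower (inversion x √(h x / l) y)) (inv_nonneg.2 hJ.le)
  rw [hinv, inv_mul_cancel_left₀ hJ.ne', mul_left_comm, dist_inversion_sq hradius hy,
    spherePower, spherePower, hsq, dist_comm y x, dist_comm x₀ x] at hle
  have hcross : 0 ≤ l ^ 2 * dist x y ^ 2 * dist x x₀ ^ 2 / h x :=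
    div_nonneg (by positivity) (hpos x).le
  have hexpand : l * (dist y x₀ ^ 2 + (dist x y ^ 2 - h x / l) * (dist x x₀ ^ 2 - h x / l) /
      (h x / l)) = l * dist y x₀ ^ 2 + (l ^ 2 * dist x y ^ 2 * dist x x₀ ^ 2 / h x -
        l * dist x y ^ 2 - l * dist x x₀ ^ 2 + h x) := by
    have := (hpos x).ne'
    field_simp
    ring
  linarith

variable [FiniteDimensional ℝ E] [Nontrivial E]

lemma BelowReflection.sq_mul_le (hbelow : BelowReflection a R h) (hh : Continuous h)
    (hlim : Tendsto (fun x => h x / ‖x‖ ^ 2) (cocompact E) (𝓝 l)) : R ^ 2 * l ≤ h a := by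
  have hratio := tendsto_dist_div_norm a
  have hdist : Tendsto (fun x => dist x a) (cocompact E) atTop := by
    refine (hratio.pos_mul_atTop one_pos tendsto_norm_cocompact_atTop).congr' ?_
    filter_upwards [tendsto_norm_cocompact_atTop.eventually_gt_atTop 0] with x hx
    exact div_mul_cancel₀ _ hx.ne'
  have hleft : Tendsto (fun x => R ^ 2 * (h x / ‖x‖ ^ 2 / (dist x a / ‖x‖) ^ 2)) (cocompact E)
      (𝓝 (R ^ 2 * l)) := by
    simpa using (hlim.div (hratio.pow 2) (by norm_num)).const_mul (R ^ 2)
  have hinv : Tendsto (inversion a R) (cocompact E) (𝓝 a) := by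
    rw [tendsto_iff_dist_tendsto_zero]
    simpa only [dist_inversion_center] using tendsto_const_nhds.div_atTop hdist
  refine le_of_tendsto_of_tendsto hleft (hh.continuousAt.tendsto.comp hinv) ?_
  filter_upwards [hdist.eventually_gt_atTop (max R 0),
    tendsto_norm_cocompact_atTop.eventually_gt_atTop 0] with x hx hx0
  have hxa : 0 < dist x a := (le_max_right _ _).trans_lt hx
  have hle := hbelow x ((le_max_left _ _).trans_lt hx)
  rw [conformalFactor_of_ne (dist_pos.1 hxa)] at hle
  refine le_of_eq_of_le ?_ hle
  field_simp

/-- The radii with `h` below, respectively above, its reflection form two closed sets covering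
`(0, ∞)`; the asymptotics separates them by the value `√(h a / l)`, which lies in both since the
half-line is connected. -/
lemma belowReflection_sqrt (hh : Continuous h) (ha : 0 < h a) (hl : 0 < l)
    (hlim : Tendsto (fun x => h x / ‖x‖ ^ 2) (cocompact E) (𝓝 l))
    (hdich : ∀ R, 0 < R → BelowReflection a R h ∨ BelowReflection a R (-h)) :
    BelowReflection a √(h a / l) h ∧ BelowReflection a √(h a / l) (-h) := by
  have hsqrt : 0 < √(h a / l) := Real.sqrt_pos.2 (div_pos ha hl)
  have hle {R : ℝ} (hR : BelowReflection a R h) : R ≤ √(h a / l) :=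
    Real.le_sqrt_of_sq_le ((le_div_iff₀ hl).2 (hR.sq_mul_le hh hlim))
  have hge {R : ℝ} (hR0 : 0 < R) (hR : BelowReflection a R (-h)) : √(h a / l) ≤ R := by
    have hsq := hR.sq_mul_le (l := -l) hh.neg (by simpa [neg_div] using hlim.neg)
    refine Real.sqrt_le_iff.2 ⟨hR0.le, (div_le_iff₀ hl).2 ?_⟩
    rw [Pi.neg_apply] at hsq
    linarith
  obtain ⟨R, hR0, hbelow, habove⟩ := isPreconnected_closed_iff.1 (isPreconnected_Ioi (a := (0 : ℝ)))
    _ _ (isClosed_setOf_belowReflection a hh) (isClosed_setOf_belowReflection a hh.neg) hdich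
    ⟨√(h a / l) / 2, half_pos hsqrt, (hdich _ (half_pos hsqrt)).resolve_right fun hR => by
      linarith [hge (half_pos hsqrt) hR]⟩
    ⟨√(h a / l) * 2, mul_pos hsqrt two_pos, (hdich _ (mul_pos hsqrt two_pos)).resolve_left
      fun hR => by linarith [hle hR]⟩
  obtain rfl : R = √(h a / l) := le_antisymm (hle hbelow) (hge hR0 habove)
  exact ⟨hbelow, habove⟩

/-- Reflecting in the critical spheres compares `h` with its minimum value and then with the
quadratic lower bound so obtained; `h - l * dist · x₀ ^ 2` varies at most quadratically, hence is
constant. -/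
lemma exists_eq_mul_norm_sq_add_sq (hh : Continuous h) (hpos : ∀ x, 0 < h x) (hl : 0 < l)
    (hlim : Tendsto (fun x => h x / ‖x‖ ^ 2) (cocompact E) (𝓝 l))
    (hdich : ∀ a R, 0 < R → BelowReflection a R h ∨ BelowReflection a R (-h)) :
    ∃ (x₀ : E) (d : ℝ), 0 < d ∧ ∀ x, h x = l * (‖x - x₀‖ ^ 2 + d ^ 2) := by
  have hradius (a : E) : 0 < √(h a / l) := Real.sqrt_pos.2 (div_pos (hpos a) hl)
  have hsq (a : E) : √(h a / l) ^ 2 = h a / l := Real.sq_sqrt (div_pos (hpos a) hl).le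
  have hinv (a x : E) : h (inversion a √(h a / l) x) = conformalFactor a √(h a / l) x * h x :=
    have hcrit := belowReflection_sqrt hh (hpos a) hl hlim (hdich a)
    hcrit.1.apply_inversion (hradius a) hcrit.2 x
  have htop : Tendsto h (cocompact E) atTop := by
    refine (hlim.pos_mul_atTop hl
      ((tendsto_pow_atTop two_ne_zero).comp tendsto_norm_cocompact_atTop)).congr' ?_
    filter_upwards [tendsto_norm_cocompact_atTop.eventually_gt_atTop 0] with x hx
    exact div_mul_cancel₀ _ (by positivity)
  obtain ⟨x₀, hmin⟩ := hh.exists_forall_le htop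
  have hlower (x : E) : l * dist x x₀ ^ 2 ≤ h x := by
    obtain rfl | hx := eq_or_ne x x₀
    · simpa using (hpos x).le
    have hle := hmin (inversion x₀ √(h x₀ / l) x)
    have hdist := dist_pos.2 hx
    rw [hinv, conformalFactor_of_ne hx, div_pow, hsq, div_div, div_mul_eq_mul_div,
      le_div_iff₀ (by positivity)] at hle
    exact le_of_mul_le_mul_left hle (hpos x₀)
  have hquad := sub_mul_dist_sq_le hpos hl hinv hlower
  refine ⟨x₀, √(h x₀ / l), hradius x₀, fun x => ?_⟩
  have hconst := eq_of_sub_mul_dist_sq_le hquad x x₀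
  rw [dist_self, dist_eq_norm] at hconst
  rw [hsq, mul_add, mul_div_cancel₀ _ hl.ne']
  linarith

end MovingSpheres

section DualExponent

variable {E : Type*} [NormedAddCommGroup E] [InnerProductSpace ℝ E] {μ R : ℝ} {a : E} {u : E → ℝ}

/-- The exponent `q < 0` of the potential. It is conjugate to the critical exponent `p`:
`1 / p + 1 / q = 1`. -/
noncomputable def dualExponent (E : Type*) [NormedAddCommGroup E] [InnerProductSpace ℝ E] (μ : ℝ) :
    ℝ := -(2 * finrank ℝ E / μ)

lemma dualExponent_sub_one_neg (hμ : 0 < μ) : dualExponent E μ - 1 < 0 := by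
  have : 0 ≤ 2 * finrank ℝ E / μ := by positivity
  rw [dualExponent]
  linarith

lemma kelvin_rpow_dualExponent_sub_one (hμ : 0 < μ) (hR : 0 < R) (hu : ∀ x, 0 ≤ u x) (x : E) :
    kelvin μ a R (fun y => u y ^ (dualExponent E μ - 1)) x =
      (conformalFactor a R x ^ (-(μ / 2)) * u (inversion a R x)) ^ (dualExponent E μ - 1) := by
  have hJ := conformalFactor_pos (a := a) hR x
  rw [kelvin, Real.mul_rpow (by positivity) (hu _), ← Real.rpow_mul hJ.le, dualExponent]
  congr 2
  field_simp
  ring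

end DualExponent

section PotentialShape

open Filter Topology

variable {E : Type*} [NormedAddCommGroup E] {μ R : ℝ} {a x : E} {f : E → ℝ}

lemma continuousAt_conformalFactor (hx : x ≠ a) : ContinuousAt (conformalFactor a R) x := by
  have hdist : dist x a ≠ 0 := dist_ne_zero.2 hx
  have hcont : ContinuousAt (fun y => (R / dist y a) ^ 2) x := by fun_prop (disch := assumption)
  refine hcont.congr ?_
  filter_upwards [isOpen_ne.mem_nhds hx] with y hy
  rw [conformalFactor_of_ne hy]

variable [InnerProductSpace ℝ E] [FiniteDimensional ℝ E] [MeasurableSpace E] [BorelSpace E]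

lemma HasFinitePotential.tendsto_potential_div_norm_rpow (h : HasFinitePotential μ f) (hμ : 0 < μ) :
    Tendsto (fun x => potential μ f x / ‖x‖ ^ μ) (cocompact E) (𝓝 (∫ y, f y)) := by
  have : (cocompact E).IsCountablyGenerated := by
    rw [← Metric.cobounded_eq_cocompact, ← comap_norm_atTop]
    infer_instance
  have hmeas := h.measurable
  simp only [potential, ← integral_div]
  refine tendsto_integral_filter_of_dominated_convergence
    (fun y => 4 ^ (μ / 2) * (stereoWeight y ^ (-(μ / 2)) * f y))
    (.of_forall fun x => Measurable.aestronglyMeasurable (by fun_prop)) ?_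
    (h.integrable_moment.const_mul _) (.of_forall fun y => ?_)
  · filter_upwards [tendsto_norm_cocompact_atTop.eventually_ge_atTop 1] with x hx
    refine .of_forall fun y => ?_
    have hy := h.nonneg y
    have hw := stereoWeight_pos y
    rw [Real.norm_of_nonneg (by positivity), div_le_iff₀ (by positivity)]
    calc dist x y ^ μ * f y
        ≤ (2 * (1 + ‖x‖ ^ 2)) ^ (μ / 2) * stereoWeight y ^ (-(μ / 2)) * f y := by
          gcongr; exact dist_rpow_le_stereoWeight hμ x y
      _ ≤ (4 * ‖x‖ ^ 2) ^ (μ / 2) * stereoWeight y ^ (-(μ / 2)) * f y := by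
          gcongr ?_ ^ _ * _ * _
          nlinarith
      _ = 4 ^ (μ / 2) * (stereoWeight y ^ (-(μ / 2)) * f y) * ‖x‖ ^ μ := by
          rw [Real.mul_rpow (by norm_num) (by positivity), ← dist_zero_right x,
            ← dist_rpow_eq_sq_rpow]
          ring
  · have hlim := ((tendsto_dist_div_norm y).rpow_const (p := μ) (.inl one_ne_zero)).mul_const (f y)
    simp only [Real.one_rpow, one_mul, Real.div_rpow dist_nonneg (norm_nonneg _)] at hlim
    exact hlim.congr fun x => by ring

/-- The Hölder dual of `potential μ f` in the pairing of the exponents `p` and `q`. -/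
noncomputable def dualPotential (μ : ℝ) (f : E → ℝ) (x : E) : ℝ :=
  potential μ f x ^ (dualExponent E μ - 1)

/-- For every sphere, `f` and the dual of its potential deviate from their Kelvin transforms in the
same direction. Extremal functions have this property, by the equality case of the polarization
inequality. -/
def AlignedWithPotential (μ : ℝ) (f : E → ℝ) : Prop :=
  ∀ (a : E) (R : ℝ), 0 < R → ∀ᵐ x, ∀ᵐ y,
    0 ≤ spherePower a R x * (dualPotential μ f x - kelvin μ a R (dualPotential μ f) x) *
      (spherePower a R y * (f y - kelvin μ a R f y))

namespace HasFinitePotential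

lemma ae_spherePower_mul_nonpos (h : HasFinitePotential μ f) (hμ : 0 < μ)
    (hpos : ∀ x, 0 < potential μ f x) (halign : AlignedWithPotential μ f)
    (hR : 0 < R) (hx : R < dist x a)
    (hlt : conformalFactor a R x ^ (-(μ / 2)) * potential μ f (inversion a R x) < potential μ f x) :
    ∀ᵐ y, spherePower a R y * (f y - kelvin μ a R f y) ≤ 0 := by
  have hxa : x ≠ a := dist_pos.1 (hR.trans hx)
  have hlt_nhds : ∀ᶠ z in 𝓝 x,
      conformalFactor a R z ^ (-(μ / 2)) * potential μ f (inversion a R z) < potential μ f z := by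
    have hcont := h.continuous_potential hμ
    refine ContinuousAt.eventually_lt (.mul ?_ ?_) hcont.continuousAt hlt
    · exact (continuousAt_conformalFactor hxa).rpow_const (.inl (conformalFactor_pos hR x).ne')
    · exact hcont.continuousAt.comp
        (continuousAt_const.inversion continuousAt_const continuousAt_id hxa)
  have hout_nhds : ∀ᶠ z in 𝓝 x, R < dist z a :=
    (continuous_id.dist continuous_const).continuousAt.eventually (lt_mem_nhds hx)
  obtain ⟨z, hz, hzlt, hzout⟩ := (Measure.dense_of_ae (halign a R hR)).inter_nhds_nonempty
    (hlt_nhds.and hout_nhds)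
  have hdual :
      spherePower a R z * (dualPotential μ f z - kelvin μ a R (dualPotential μ f) z) < 0 := by
    have hJ := conformalFactor_pos (a := a) hR z
    unfold dualPotential
    rw [kelvin_rpow_dualExponent_sub_one hμ hR fun y => (hpos y).le]
    refine mul_neg_of_pos_of_neg (by rw [spherePower]; nlinarith) (sub_neg.2 ?_)
    exact Real.rpow_lt_rpow_of_neg (mul_pos (by positivity) (hpos _)) hzlt
      (dualExponent_sub_one_neg hμ)
  filter_upwards [hz] with y hy
  exact nonpos_of_mul_nonneg_right hy hdual

variable [Nontrivial E]

lemma potential_inversion_le (h : HasFinitePotential μ f) (hμ : 0 < μ)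
    (hR : 0 < R) (hf : ∀ᵐ y, spherePower a R y * (f y - kelvin μ a R f y) ≤ 0)
    (hx : R < dist x a) :
    conformalFactor a R x ^ (-(μ / 2)) * potential μ f (inversion a R x) ≤ potential μ f x := by
  have hxa : x ≠ a := dist_pos.1 (hR.trans hx)
  have hPx : SignType.sign (spherePower a R x) = 1 := sign_pos (by rw [spherePower]; nlinarith)
  have hint : ∫ y, (reflectedKernel μ a R x y - dist x y ^ μ) * (f y - kelvin μ a R f y) ≤ 0 := by
    refine integral_nonpos_of_ae ?_
    filter_upwards [hf] with y hy
    have hsign := sign_reflectedKernel_sub hμ hR hxa y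
    rw [hPx, one_mul] at hsign
    rwa [Pi.zero_apply, ← sign_nonpos_iff, sign_mul, hsign, ← sign_mul, sign_nonpos_iff]
  rw [← two_mul_potential_inversion_sub hR hxa (h.integrable_dist_rpow_mul hμ)] at hint
  linarith

variable (h : HasFinitePotential μ f) (hμ : 0 < μ) (hpos : ∀ x, 0 < potential μ f x)
include h hμ hpos

lemma belowReflection_or (halign : AlignedWithPotential μ f) (a : E) (hR : 0 < R) :
    BelowReflection a R (fun x => potential μ f x ^ (2 / μ)) ∨
      BelowReflection a R (-fun x => potential μ f x ^ (2 / μ)) := by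
  have hroot (x : E) : (conformalFactor a R x ^ (-(μ / 2)) * potential μ f (inversion a R x)) ^
      (2 / μ) = (conformalFactor a R x)⁻¹ * potential μ f (inversion a R x) ^ (2 / μ) := by
    have hJ := conformalFactor_pos (a := a) hR x
    rw [Real.mul_rpow (by positivity) (hpos _).le, ← Real.rpow_mul hJ.le, neg_mul,
      show μ / 2 * (2 / μ) = 1 by field_simp, Real.rpow_neg_one]
  by_cases hcmp : ∀ x, R < dist x a →
      potential μ f x ≤ conformalFactor a R x ^ (-(μ / 2)) * potential μ f (inversion a R x)
  · refine .inl fun x hx => ?_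
    rw [← le_inv_mul_iff₀ (conformalFactor_pos hR x), ← hroot]
    exact Real.rpow_le_rpow (hpos x).le (hcmp x hx) (by positivity)
  · push Not at hcmp
    obtain ⟨x₁, hx₁, hlt⟩ := hcmp
    have hsign := h.ae_spherePower_mul_nonpos hμ hpos halign hR hx₁ hlt
    refine .inr fun x hx => ?_
    have hJ := conformalFactor_pos (a := a) hR x
    rw [Pi.neg_apply, Pi.neg_apply, mul_neg, neg_le_neg_iff, ← inv_mul_le_iff₀ hJ, ← hroot]
    exact Real.rpow_le_rpow (mul_nonneg (by positivity) (hpos _).le)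
      (h.potential_inversion_le hμ hR hsign hx) (by positivity)

lemma exists_potential_eq (halign : AlignedWithPotential μ f) :
    ∃ (x₀ : E) (d C : ℝ), 0 < d ∧ 0 < C ∧
      ∀ x, potential μ f x = C * (‖x - x₀‖ ^ 2 + d ^ 2) ^ (μ / 2) := by
  have hmass : 0 < ∫ y, f y := by
    refine (integral_nonneg h.nonneg).lt_of_ne' fun hzero => (hpos 0).ne' ?_
    rw [integral_eq_zero_iff_of_nonneg h.nonneg (h.integrable hμ)] at hzero
    exact integral_eq_zero_of_ae (hzero.mono fun y hy => by simp [hy])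
  have hlim : Tendsto (fun x => potential μ f x ^ (2 / μ) / ‖x‖ ^ 2) (cocompact E)
      (𝓝 ((∫ y, f y) ^ (2 / μ))) := by
    refine ((h.tendsto_potential_div_norm_rpow hμ).rpow_const (.inl hmass.ne')).congr fun x => ?_
    rw [Real.div_rpow (hpos x).le (by positivity), ← Real.rpow_mul (norm_nonneg _),
      mul_div_cancel₀ _ hμ.ne', Real.rpow_two]
  obtain ⟨x₀, d, hd, hshape⟩ := exists_eq_mul_norm_sq_add_sq
    ((h.continuous_potential hμ).rpow_const fun x => .inl (hpos x).ne')
    (fun x => Real.rpow_pos_of_pos (hpos x) _) (Real.rpow_pos_of_pos hmass _) hlim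
    fun a R hR => h.belowReflection_or hμ hpos halign a hR
  refine ⟨x₀, d, ∫ y, f y, hd, hmass, fun x => ?_⟩
  have hroot {t : ℝ} (ht : 0 ≤ t) : (t ^ (2 / μ)) ^ (μ / 2) = t := by
    rw [← Real.rpow_mul ht, show 2 / μ * (μ / 2) = 1 by field_simp, Real.rpow_one]
  rw [← hroot (hpos x).le, hshape, Real.mul_rpow (by positivity) (by positivity), hroot hmass.le]

end HasFinitePotential

end PotentialShape

/-! ### Extremal functions -/

lemma ofReal_mul_rpow {c : ℝ} (hc : 0 < c) (x : ℝ≥0∞) (r : ℝ) :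
    (ENNReal.ofReal c * x) ^ r = ENNReal.ofReal (c ^ r) * x ^ r := by
  rw [← ENNReal.ofReal_rpow_of_pos hc, ENNReal.mul_rpow_eq_ite]
  exact if_neg (by simp [hc])

section RieszIntegral

variable {E : Type*} [NormedAddCommGroup E] [MeasureSpace E]

/-- The Riesz-type potential of `f` with values in `[0, ∞]`. -/
noncomputable def rieszIntegral (μ : ℝ) (f : E → ℝ) (x : E) : ℝ≥0∞ :=
  ∫⁻ y, ENNReal.ofReal (f y * dist x y ^ μ)

variable {μ : ℝ} {f g : E → ℝ}

lemma rieszIntegral_const_mul {c : ℝ} (hc : 0 ≤ c) (f : E → ℝ) (x : E) :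
    rieszIntegral μ (fun y => c * f y) x = ENNReal.ofReal c * rieszIntegral μ f x := by
  simp only [rieszIntegral, mul_assoc, ENNReal.ofReal_mul hc]
  exact lintegral_const_mul' _ _ ENNReal.ofReal_ne_top

lemma rieszIntegral_congr_ae (h : f =ᵐ[volume] g) : rieszIntegral μ f = rieszIntegral μ g :=
  funext fun _ => lintegral_congr_ae (h.mono fun y hy => by simp only [hy])

end RieszIntegral

lemma dualExponent_neg {E : Type*} [NormedAddCommGroup E] [InnerProductSpace ℝ E]
    [FiniteDimensional ℝ E] [Nontrivial E] {μ : ℝ} (hμ : 0 < μ) : dualExponent E μ < 0 := by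
  have : (0 : ℝ) < finrank ℝ E := mod_cast finrank_pos
  rw [dualExponent, neg_lt_zero]
  positivity

section Affine

variable {E : Type*} [NormedAddCommGroup E] [InnerProductSpace ℝ E] [FiniteDimensional ℝ E]
  [MeasurableSpace E] [BorelSpace E] {μ c d : ℝ} {f g : E → ℝ}

lemma lintegral_comp_smul_sub (hd : 0 < d) (x₀ : E) (φ : E → ℝ≥0∞) :
    ∫⁻ x, φ (d • (x - x₀)) = ENNReal.ofReal (d ^ (-(finrank ℝ E : ℝ))) * ∫⁻ x, φ x := by
  have hemb : MeasurableEmbedding fun x : E => d • x :=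
    (Homeomorph.smulOfNeZero d hd.ne').measurableEmbedding
  rw [lintegral_sub_right_eq_self (fun x => φ (d • x)) x₀, ← hemb.lintegral_map,
    Measure.map_addHaar_smul volume hd.ne', lintegral_smul_measure, smul_eq_mul,
    abs_of_pos (by positivity), Real.rpow_neg hd.le, Real.rpow_natCast]

lemma rieszIntegral_comp_smul_sub (hd : 0 < d) (x₀ : E) (f : E → ℝ) (x : E) :
    rieszIntegral μ (fun y => f (d • (y - x₀))) x =
      ENNReal.ofReal (d ^ (-(finrank ℝ E + μ))) * rieszIntegral μ f (d • (x - x₀)) := by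
  have hkernel (y : E) : ENNReal.ofReal (f (d • (y - x₀)) * dist x y ^ μ) =
      ENNReal.ofReal (d ^ (-μ)) * ENNReal.ofReal
        (f (d • (y - x₀)) * dist (d • (x - x₀)) (d • (y - x₀)) ^ μ) := by
    rw [dist_smul₀, dist_sub_right, Real.norm_of_nonneg hd.le, Real.mul_rpow hd.le dist_nonneg,
      ← ENNReal.ofReal_mul (by positivity), Real.rpow_neg hd.le]
    congr 1
    field_simp
  rw [rieszIntegral, lintegral_congr hkernel, lintegral_const_mul' _ _ ENNReal.ofReal_ne_top,
    lintegral_comp_smul_sub hd x₀ fun z => ENNReal.ofReal (f z * dist (d • (x - x₀)) z ^ μ),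
    ← mul_assoc, ← ENNReal.ofReal_mul (by positivity), ← Real.rpow_add hd, ← neg_add_rev]
  rfl

/-- `f` attains equality in the reversed Hardy-Littlewood-Sobolev inequality
`sharpConstant * ‖f‖_p ≤ ‖I f‖_q`. -/
def IsExtremal (μ : ℝ) (f : E → ℝ) : Prop :=
  (∫⁻ x, rieszIntegral μ f x ^ dualExponent E μ) ^ (1 / dualExponent E μ) =
    ENNReal.ofReal (sharpConstant E μ) * criticalNorm μ f

lemma isExtremal_congr_ae (h : f =ᵐ[volume] g) : IsExtremal μ f ↔ IsExtremal μ g := by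
  rw [IsExtremal, IsExtremal, rieszIntegral_congr_ae h, criticalNorm, criticalNorm,
    eLpNorm'_congr_ae h]

variable [Nontrivial E]

lemma criticalNorm_const_mul_comp_smul_sub (hμ : 0 < μ) (hc : 0 < c) (hd : 0 < d) (x₀ : E)
    (f : E → ℝ) : criticalNorm μ (fun x => c * f (d • (x - x₀))) =
      ENNReal.ofReal (c * d ^ (-(finrank ℝ E + μ / 2))) * criticalNorm μ f := by
  have hp := criticalExponent_pos (E := E) hμ
  have hmul := criticalExponent_mul (E := E) hμ
  have hexp : -(finrank ℝ E : ℝ) * (1 / criticalExponent E μ) = -(finrank ℝ E + μ / 2) := by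
    field_simp
    linarith
  simp only [criticalNorm, eLpNorm', enorm_mul, Real.enorm_of_nonneg hc.le, ofReal_mul_rpow hc]
  rw [lintegral_const_mul' _ _ ENNReal.ofReal_ne_top,
    lintegral_comp_smul_sub hd x₀ fun x => ‖f x‖ₑ ^ criticalExponent E μ,
    ofReal_mul_rpow (by positivity), ofReal_mul_rpow (by positivity), ← Real.rpow_mul hc.le,
    ← Real.rpow_mul hd.le, mul_one_div_cancel hp.ne', Real.rpow_one, hexp, ENNReal.ofReal_mul hc.le,
    mul_assoc]

lemma IsExtremal.const_mul_comp_smul_sub (hμ : 0 < μ) (hc : 0 < c) (hd : 0 < d) (x₀ : E)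
    (hf : IsExtremal μ f) : IsExtremal μ fun x => c * f (d • (x - x₀)) := by
  have hq := (dualExponent_neg (E := E) hμ).ne
  have hexp : -(finrank ℝ E + μ) + -(finrank ℝ E : ℝ) * (1 / dualExponent E μ) =
      -(finrank ℝ E + μ / 2) := by
    have hn : (finrank ℝ E : ℝ) ≠ 0 := mod_cast finrank_pos.ne'
    rw [dualExponent]
    field_simp
    ring
  simp only [IsExtremal, rieszIntegral_const_mul hc.le, rieszIntegral_comp_smul_sub hd,
    ofReal_mul_rpow hc, ofReal_mul_rpow (Real.rpow_pos_of_pos hd _)]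
  rw [lintegral_const_mul' _ _ ENNReal.ofReal_ne_top,
    lintegral_const_mul' _ _ ENNReal.ofReal_ne_top,
    lintegral_comp_smul_sub hd x₀ fun x => rieszIntegral μ f x ^ dualExponent E μ,
    ofReal_mul_rpow (by positivity), ofReal_mul_rpow (by positivity),
    ofReal_mul_rpow (by positivity), hf, criticalNorm_const_mul_comp_smul_sub hμ hc hd,
    ← Real.rpow_mul hc.le, ← Real.rpow_mul (by positivity), mul_one_div_cancel hq,
    Real.rpow_one, Real.rpow_one, ← Real.rpow_mul hd.le, ← hexp, Real.rpow_add hd,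
    ENNReal.ofReal_mul hc.le, ENNReal.ofReal_mul (by positivity)]
  ring

end Affine

section ScaledBubble

variable {E : Type*} [NormedAddCommGroup E] [InnerProductSpace ℝ E]

/-- The family of extremal functions: the standard bubble up to translations, dilations and
positive multiples. -/
noncomputable def scaledBubble (μ c d : ℝ) (x₀ x : E) : ℝ :=
  c * (1 / (‖x - x₀‖ ^ 2 + d ^ 2)) ^ (finrank ℝ E + μ / 2)

variable {μ c d : ℝ} {f : E → ℝ}

lemma scaledBubble_pos (μ : ℝ) (hc : 0 < c) (hd : 0 < d) (x₀ x : E) :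
    0 < scaledBubble μ c d x₀ x := by
  unfold scaledBubble
  positivity

lemma stereoWeight_inv_smul_sub (hd : 0 < d) (x₀ x : E) :
    stereoWeight (d⁻¹ • (x - x₀)) = d ^ 2 * (1 / (‖x - x₀‖ ^ 2 + d ^ 2)) := by
  rw [stereoWeight, norm_smul, norm_inv, Real.norm_of_nonneg hd.le]
  field_simp
  ring

lemma scaledBubble_eq (hd : 0 < d) (x₀ : E) : scaledBubble μ c d x₀ = fun x =>
    c * d ^ (-(2 * finrank ℝ E + μ)) * bubble μ (d⁻¹ • (x - x₀)) := by
  ext x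
  have hpow : d ^ (-(2 * finrank ℝ E + μ)) * (d ^ 2) ^ (finrank ℝ E + μ / 2) = 1 := by
    rw [← Real.rpow_two, ← Real.rpow_mul hd.le, ← Real.rpow_add hd]
    convert Real.rpow_zero d using 2
    ring
  rw [scaledBubble, bubble, stereoWeight_inv_smul_sub hd,
    Real.mul_rpow (by positivity) (by positivity)]
  linear_combination -(c * (1 / (‖x - x₀‖ ^ 2 + d ^ 2)) ^ (finrank ℝ E + μ / 2)) * hpow

end ScaledBubble

section Bernoulli

variable {p : ℝ}

lemma rpow_lt_add_mul_rpow_sub_one {x y : ℝ} (hp : 0 < p) (hp1 : p < 1) (hx : 0 ≤ x) (hy : 0 < y)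
    (hxy : x ≠ y) : x ^ p < (1 - p) * y ^ p + p * (x * y ^ (p - 1)) := by
  have hbern := rpow_one_add_lt_one_add_mul_self (s := x / y - 1)
    (by linarith [div_nonneg hx hy.le])
    (sub_ne_zero.2 ((div_eq_one_iff_eq hy.ne').not.2 hxy)) hp hp1
  rw [add_sub_cancel, Real.div_rpow hx hy.le, div_lt_iff₀ (by positivity)] at hbern
  refine hbern.trans_eq ?_
  rw [Real.rpow_sub_one hy.ne']
  field_simp
  ring

lemma rpow_le_add_mul_rpow_sub_one {x y : ℝ} (hp : 0 < p) (hp1 : p < 1) (hx : 0 ≤ x)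
    (hy : 0 < y) : x ^ p ≤ (1 - p) * y ^ p + p * (x * y ^ (p - 1)) := by
  rcases eq_or_ne x y with rfl | hxy
  · rw [Real.rpow_sub_one hy.ne', mul_div_cancel₀ _ hy.ne']
    linarith
  · exact (rpow_lt_add_mul_rpow_sub_one hp hp1 hx hy hxy).le

/-- The equality case of Hölder's inequality for the factorization
`f ^ p = (f * g ^ (p - 1)) ^ p * (g ^ p) ^ (1 - p)`. -/
lemma ae_eq_of_lintegral_rpow_eq {α : Type*} [MeasurableSpace α] {ν : Measure α} {f g : α → ℝ}
    (hp : 0 < p) (hp1 : p < 1) (hf : Measurable f) (hg : Measurable g) (hf0 : ∀ x, 0 ≤ f x)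
    (hg0 : ∀ x, 0 < g x) (hfin : ∫⁻ x, ENNReal.ofReal (g x ^ p) ∂ν ≠ ∞)
    (hpow : ∫⁻ x, ENNReal.ofReal (f x ^ p) ∂ν = ∫⁻ x, ENNReal.ofReal (g x ^ p) ∂ν)
    (hpair : ∫⁻ x, ENNReal.ofReal (f x * g x ^ (p - 1)) ∂ν =
      ∫⁻ x, ENNReal.ofReal (g x ^ p) ∂ν) : f =ᵐ[ν] g := by
  have hgp (x : α) (r : ℝ) : 0 < g x ^ r := Real.rpow_pos_of_pos (hg0 x) r
  have hmean : ∫⁻ x, ENNReal.ofReal ((1 - p) * g x ^ p + p * (f x * g x ^ (p - 1))) ∂ν =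
      ∫⁻ x, ENNReal.ofReal (f x ^ p) ∂ν := by
    have hsplit (x : α) : ENNReal.ofReal ((1 - p) * g x ^ p + p * (f x * g x ^ (p - 1))) =
        ENNReal.ofReal (1 - p) * ENNReal.ofReal (g x ^ p) +
          ENNReal.ofReal p * ENNReal.ofReal (f x * g x ^ (p - 1)) := by
      rw [ENNReal.ofReal_add (mul_nonneg (sub_nonneg.2 hp1.le) (hgp x p).le)
        (mul_nonneg hp.le (mul_nonneg (hf0 x) (hgp x _).le)), ENNReal.ofReal_mul hp.le,
        ENNReal.ofReal_mul (sub_nonneg.2 hp1.le)]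
    rw [lintegral_congr hsplit, lintegral_add_left (by fun_prop),
      lintegral_const_mul' _ _ ENNReal.ofReal_ne_top,
      lintegral_const_mul' _ _ ENNReal.ofReal_ne_top, hpair, hpow, ← add_mul,
      ← ENNReal.ofReal_add (sub_nonneg.2 hp1.le) hp.le, sub_add_cancel, ENNReal.ofReal_one, one_mul]
  filter_upwards [ae_eq_of_ae_le_of_lintegral_le
    (.of_forall fun x => ENNReal.ofReal_le_ofReal
      (rpow_le_add_mul_rpow_sub_one hp hp1 (hf0 x) (hg0 x))) (hpow ▸ hfin) (by fun_prop)
    hmean.le] with x hx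
  by_contra hne
  have hlt := rpow_lt_add_mul_rpow_sub_one hp hp1 (hf0 x) (hg0 x) hne
  exact (ENNReal.ofReal_lt_ofReal_iff_of_nonneg (Real.rpow_nonneg (hf0 x) p)).2 hlt |>.ne hx

end Bernoulli

section Potential

variable {E : Type*} [NormedAddCommGroup E]

/-- Together with the reverse estimate `dist_rpow_le_stereoWeight`, this shows that a potential
which is finite at two points is finite everywhere. -/
lemma exists_stereoWeight_rpow_neg_le {μ : ℝ} (hμ : 0 < μ) {x₁ x₂ : E} (hne : x₁ ≠ x₂) :
    ∃ C, ∀ y, stereoWeight y ^ (-(μ / 2)) ≤ C * (dist x₁ y ^ μ + dist x₂ y ^ μ) := by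
  have hδ : 0 < dist x₁ x₂ := dist_pos.2 hne
  set C := 1 + 2 * (1 + ‖x₁‖) / dist x₁ x₂
  refine ⟨C ^ μ, fun y => ?_⟩
  set s := max (dist x₁ y) (dist x₂ y)
  have hs₁ : dist x₁ y ≤ s := le_max_left _ _
  have hs₂ : dist x₂ y ≤ s := le_max_right _ _
  have hs : 0 ≤ s := dist_nonneg.trans hs₁
  have hlin : 1 + ‖y‖ ≤ C * s := by
    have hy : ‖y‖ ≤ ‖x₁‖ + dist x₁ y := by
      rw [dist_eq_norm']
      exact norm_le_insert' y x₁
    have hdiam : 1 + ‖x₁‖ ≤ 2 * (1 + ‖x₁‖) / dist x₁ x₂ * s := by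
      rw [div_mul_eq_mul_div, le_div_iff₀ hδ]
      nlinarith [dist_triangle_right x₁ x₂ y, norm_nonneg x₁]
    linarith [add_mul 1 (2 * (1 + ‖x₁‖) / dist x₁ x₂) s]
  have hsum : s ^ μ ≤ dist x₁ y ^ μ + dist x₂ y ^ μ := by
    rcases max_choice (dist x₁ y) (dist x₂ y) with h | h <;> simp only [s, h] <;>
      linarith [Real.rpow_nonneg (dist_nonneg (x := x₁) (y := y)) μ,
        Real.rpow_nonneg (dist_nonneg (x := x₂) (y := y)) μ]
  calc stereoWeight y ^ (-(μ / 2)) = (1 + ‖y‖ ^ 2) ^ (μ / 2) := by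
        rw [stereoWeight, Real.rpow_neg (by positivity), Real.inv_rpow (by positivity), inv_inv]
    _ ≤ ((1 + ‖y‖) ^ 2) ^ (μ / 2) := by
        gcongr
        nlinarith [norm_nonneg y]
    _ = (1 + ‖y‖) ^ μ := by
        rw [← Real.rpow_two, ← Real.rpow_mul (by positivity), mul_div_cancel₀ _ two_ne_zero]
    _ ≤ (C * s) ^ μ := by gcongr
    _ = C ^ μ * s ^ μ := Real.mul_rpow (by positivity) hs
    _ ≤ C ^ μ * (dist x₁ y ^ μ + dist x₂ y ^ μ) := by gcongr

variable [InnerProductSpace ℝ E] [FiniteDimensional ℝ E] [MeasurableSpace E] [BorelSpace E]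
  {μ : ℝ} {f : E → ℝ}

lemma HasFinitePotential.rieszIntegral_eq (h : HasFinitePotential μ f) (hμ : 0 < μ) (x : E) :
    rieszIntegral μ f x = ENNReal.ofReal (potential μ f x) := by
  rw [potential, ofReal_integral_eq_lintegral_ofReal (h.integrable_dist_rpow_mul hμ x)
    (.of_forall fun y => mul_nonneg (by positivity) (h.nonneg y))]
  simp only [rieszIntegral, mul_comm]

lemma hasFinitePotential_of_rieszIntegral_ne_top (hμ : 0 < μ) (hf : Measurable f)
    (hf0 : ∀ x, 0 ≤ f x) {x₁ x₂ : E} (hne : x₁ ≠ x₂) (h₁ : rieszIntegral μ f x₁ ≠ ∞)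
    (h₂ : rieszIntegral μ f x₂ ≠ ∞) : HasFinitePotential μ f := by
  obtain ⟨C, hC⟩ := exists_stereoWeight_rpow_neg_le hμ hne
  have hint {x : E} (hx : rieszIntegral μ f x ≠ ∞) : Integrable fun y => f y * dist x y ^ μ :=
    (lintegral_ofReal_ne_top_iff_integrable (by fun_prop)
      (.of_forall fun y => mul_nonneg (hf0 y) (by positivity))).1 hx
  have hw := (continuous_stereoWeight (E := E)).measurable
  refine ⟨hf, hf0, (((hint h₁).add (hint h₂)).const_mul C).mono'
    (Measurable.aestronglyMeasurable (by fun_prop)) (.of_forall fun y => ?_)⟩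
  rw [Real.norm_of_nonneg (mul_nonneg (Real.rpow_nonneg (stereoWeight_pos y).le _) (hf0 y))]
  calc stereoWeight y ^ (-(μ / 2)) * f y ≤ C * (dist x₁ y ^ μ + dist x₂ y ^ μ) * f y :=
        mul_le_mul_of_nonneg_right (hC y) (hf0 y)
    _ = _ := by simp only [Pi.add_apply]; ring

end Potential

section ExtremalScaledBubble

variable {E : Type*} [NormedAddCommGroup E] [InnerProductSpace ℝ E] [FiniteDimensional ℝ E]
  [MeasurableSpace E] [BorelSpace E] {μ c d : ℝ} {f g : E → ℝ}

lemma lintegral_stereoWeight_rpow_finrank [Nontrivial E] :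
    ∫⁻ x : E, ENNReal.ofReal (stereoWeight x ^ (finrank ℝ E : ℝ)) =
      ENNReal.ofReal (stereoMass E) :=
  (ofReal_integral_eq_lintegral_ofReal (integrable_stereoWeight_rpow_finrank E)
    (.of_forall fun x => Real.rpow_nonneg (stereoWeight_pos x).le _)).symm

lemma criticalNorm_eq_lintegral (hμ : 0 < μ) (hf0 : ∀ x, 0 ≤ f x) : criticalNorm μ f =
    (∫⁻ x, ENNReal.ofReal (f x ^ criticalExponent E μ)) ^ (1 / criticalExponent E μ) := by
  have hp : 0 ≤ criticalExponent E μ := by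
    rw [criticalExponent]
    positivity
  simp only [criticalNorm, eLpNorm', Real.enorm_of_nonneg (hf0 _),
    ENNReal.ofReal_rpow_of_nonneg (hf0 _) hp]

variable [Nontrivial E]

lemma criticalNorm_bubble (hμ : 0 < μ) : criticalNorm μ (bubble μ : E → ℝ) =
    ENNReal.ofReal (stereoMass E ^ (1 / criticalExponent E μ)) := by
  have hpow (x : E) : bubble μ x ^ criticalExponent E μ = stereoWeight x ^ (finrank ℝ E : ℝ) := by
    rw [bubble, ← Real.rpow_mul (stereoWeight_pos x).le, criticalExponent_mul hμ]
  rw [criticalNorm_eq_lintegral hμ fun x => (bubble_pos μ x).le]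
  simp only [hpow, lintegral_stereoWeight_rpow_finrank,
    ENNReal.ofReal_rpow_of_pos (stereoMass_pos E)]

lemma isExtremal_bubble (hμ : 0 < μ) : IsExtremal μ (bubble μ : E → ℝ) := by
  have hq := (dualExponent_neg (E := E) hμ).ne
  have hk := potential_bubble_zero_pos (E := E) hμ
  have hS := stereoMass_pos E
  have hn : (finrank ℝ E : ℝ) ≠ 0 := mod_cast finrank_pos.ne'
  have hpow (x : E) : rieszIntegral μ (bubble μ) x ^ dualExponent E μ =
      ENNReal.ofReal (potential μ (bubble μ) (0 : E) ^ dualExponent E μ) *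
        ENNReal.ofReal (stereoWeight x ^ (finrank ℝ E : ℝ)) := by
    have hw := stereoWeight_pos x
    rw [(hasFinitePotential_bubble μ).rieszIntegral_eq hμ, potential_bubble hμ,
      ENNReal.ofReal_mul hk.le, ofReal_mul_rpow hk, ENNReal.ofReal_rpow_of_pos (by positivity),
      ← Real.rpow_mul hw.le, dualExponent]
    congr 3
    field_simp
  have hmass : stereoMass E ^ (1 / dualExponent E μ) =
      stereoMass E ^ (-(1 + μ / finrank ℝ E)) * stereoMass E ^ (1 / criticalExponent E μ) := by
    rw [← Real.rpow_add hS, dualExponent, criticalExponent]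
    congr 1
    field_simp
    ring
  rw [IsExtremal, lintegral_congr hpow, lintegral_const_mul' _ _ ENNReal.ofReal_ne_top,
    lintegral_stereoWeight_rpow_finrank, ofReal_mul_rpow (by positivity), ← Real.rpow_mul hk.le,
    mul_one_div_cancel hq, Real.rpow_one, ENNReal.ofReal_rpow_of_pos hS, criticalNorm_bubble hμ,
    ← ENNReal.ofReal_mul hk.le, ← ENNReal.ofReal_mul (sharpConstant_pos hμ).le, sharpConstant,
    mul_assoc, hmass]

lemma isExtremal_scaledBubble (hμ : 0 < μ) (hc : 0 < c) (hd : 0 < d) (x₀ : E) :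
    IsExtremal μ (scaledBubble μ c d x₀) := by
  rw [scaledBubble_eq hd]
  exact (isExtremal_bubble hμ).const_mul_comp_smul_sub hμ (by positivity) (by positivity) x₀

lemma rieszIntegral_scaledBubble (hμ : 0 < μ) (hc : 0 < c) (hd : 0 < d) (x₀ x : E) :
    rieszIntegral μ (scaledBubble μ c d x₀) x = ENNReal.ofReal (c * d ^ (-(finrank ℝ E + μ)) *
      potential μ (bubble μ) (0 : E) * (‖x - x₀‖ ^ 2 + d ^ 2) ^ (μ / 2)) := by
  have hdexp : d ^ (-(2 * finrank ℝ E + μ)) * (d⁻¹ ^ (-(finrank ℝ E + μ)) *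
      (d ^ 2) ^ (-(μ / 2))) = d ^ (-(finrank ℝ E + μ)) := by
    rw [Real.inv_rpow hd.le, ← Real.rpow_neg hd.le, ← Real.rpow_two, ← Real.rpow_mul hd.le,
      ← Real.rpow_add hd, ← Real.rpow_add hd]
    ring_nf
  have hQ : (1 / (‖x - x₀‖ ^ 2 + d ^ 2)) ^ (-(μ / 2)) = (‖x - x₀‖ ^ 2 + d ^ 2) ^ (μ / 2) := by
    rw [one_div, Real.inv_rpow (by positivity), ← Real.rpow_neg (by positivity), neg_neg]
  rw [scaledBubble_eq hd, rieszIntegral_const_mul (by positivity),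
    rieszIntegral_comp_smul_sub (inv_pos.2 hd), (hasFinitePotential_bubble μ).rieszIntegral_eq hμ,
    ← ENNReal.ofReal_mul (by positivity), ← ENNReal.ofReal_mul (by positivity), potential_bubble hμ,
    stereoWeight_inv_smul_sub hd, Real.mul_rpow (by positivity) (by positivity), hQ,
    ← hdexp]
  ring_nf

lemma hasFinitePotential_scaledBubble (hμ : 0 < μ) (hc : 0 < c) (hd : 0 < d) (x₀ : E) :
    HasFinitePotential μ (scaledBubble μ c d x₀) := by
  obtain ⟨x₁, x₂, hne⟩ := exists_pair_ne E
  refine hasFinitePotential_of_rieszIntegral_ne_top hμ ?_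
    (fun x => (scaledBubble_pos μ hc hd x₀ x).le) hne ?_ ?_
  · unfold scaledBubble
    fun_prop
  all_goals exact rieszIntegral_scaledBubble hμ hc hd x₀ _ ▸ ENNReal.ofReal_ne_top

lemma potential_scaledBubble (hμ : 0 < μ) (hc : 0 < c) (hd : 0 < d) (x₀ x : E) :
    potential μ (scaledBubble μ c d x₀) x = c * d ^ (-(finrank ℝ E + μ)) *
      potential μ (bubble μ) (0 : E) * (‖x - x₀‖ ^ 2 + d ^ 2) ^ (μ / 2) := by
  have h := hasFinitePotential_scaledBubble hμ hc hd x₀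
  have hk := potential_bubble_zero_pos (E := E) hμ
  exact (ENNReal.ofReal_eq_ofReal_iff (potential_nonneg h.nonneg x) (by positivity)).1
    ((h.rieszIntegral_eq hμ x).symm.trans (rieszIntegral_scaledBubble hμ hc hd x₀ x))

end ExtremalScaledBubble

section Exponents

variable {E : Type*} [NormedAddCommGroup E] [InnerProductSpace ℝ E] {μ c d : ℝ}

lemma dualExponent_sub_one_mul_criticalExponent (hμ : 0 < μ) :
    (dualExponent E μ - 1) * criticalExponent E μ = dualExponent E μ := by
  rw [dualExponent, criticalExponent]
  field_simp
  ring

lemma scaledBubble_rpow_sub_one (hμ : 0 < μ) (hc : 0 < c) (hd : 0 < d) (x₀ x : E) :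
    scaledBubble μ c d x₀ x ^ (criticalExponent E μ - 1) =
      c ^ (criticalExponent E μ - 1) * (‖x - x₀‖ ^ 2 + d ^ 2) ^ (μ / 2) := by
  have hexp : -((finrank ℝ E + μ / 2) * (criticalExponent E μ - 1)) = μ / 2 := by
    linarith [criticalExponent_mul (E := E) hμ]
  rw [scaledBubble, Real.mul_rpow hc.le (by positivity), one_div, Real.inv_rpow (by positivity),
    ← Real.rpow_neg (by positivity), ← Real.rpow_mul (by positivity), neg_mul, hexp]

variable (E) in
lemma one_div_criticalExponent_add_one_div_dualExponent [FiniteDimensional ℝ E] [Nontrivial E]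
    (μ : ℝ) : 1 / criticalExponent E μ + 1 / dualExponent E μ = 1 := by
  have hn : (finrank ℝ E : ℝ) ≠ 0 := mod_cast finrank_pos.ne'
  rw [dualExponent, criticalExponent, one_div_neg_eq_neg_one_div, one_div_div, one_div_div]
  field_simp
  ring

end Exponents

section Uniqueness

variable {E : Type*} [NormedAddCommGroup E] [InnerProductSpace ℝ E] [FiniteDimensional ℝ E]
  [MeasurableSpace E] [BorelSpace E] {μ c d C : ℝ} {f g : E → ℝ}

lemma lintegral_mul_potential_comm (hμ : 0 < μ) (hf : HasFinitePotential μ f)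
    (hg : HasFinitePotential μ g) : ∫⁻ x, ENNReal.ofReal (f x * potential μ g x) =
      ∫⁻ x, ENNReal.ofReal (g x * potential μ f x) := by
  rw [← rieszEnergy_eq_lintegral_potential hμ hf.nonneg hg,
    ← rieszEnergy_eq_lintegral_potential hμ hg.nonneg hf, rieszEnergy_comm hf.measurable
    hg.measurable]

variable [Nontrivial E]

lemma exists_potential_scaledBubble_eq (hμ : 0 < μ) (hC : 0 < C) (hd : 0 < d) (x₀ : E) :
    ∃ c, 0 < c ∧ ∀ x, potential μ (scaledBubble μ c d x₀) x =
      C * (‖x - x₀‖ ^ 2 + d ^ 2) ^ (μ / 2) := by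
  have hk := potential_bubble_zero_pos (E := E) hμ
  have hc : 0 < C / (d ^ (-(finrank ℝ E + μ)) * potential μ (bubble μ) (0 : E)) := by positivity
  refine ⟨_, hc, fun x => ?_⟩
  rw [potential_scaledBubble hμ hc hd]
  field_simp

lemma IsExtremal.lintegral_rpow_eq_of_potential_eq (hμ : 0 < μ) (hf : HasFinitePotential μ f)
    (hg : HasFinitePotential μ g) (hfext : IsExtremal μ f) (hgext : IsExtremal μ g)
    (hpot : ∀ x, potential μ f x = potential μ g x) :
    ∫⁻ x, ENNReal.ofReal (f x ^ criticalExponent E μ) =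
      ∫⁻ x, ENNReal.ofReal (g x ^ criticalExponent E μ) := by
  have hp := criticalExponent_pos (E := E) hμ
  have hK := ENNReal.ofReal_pos.2 (sharpConstant_pos (E := E) hμ)
  have hnorm : criticalNorm μ f = criticalNorm μ g := by
    rw [← ENNReal.mul_right_inj hK.ne' ENNReal.ofReal_ne_top, ← hfext, ← hgext]
    simp only [hf.rieszIntegral_eq hμ, hg.rieszIntegral_eq hμ, hpot]
  rw [criticalNorm_eq_lintegral hμ hf.nonneg, criticalNorm_eq_lintegral hμ hg.nonneg] at hnorm
  exact ENNReal.rpow_left_injective (by positivity) hnorm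

/-- A bubble with the same potential as `f` has the same critical norm and, by symmetry of the
kernel, the same pairing with `f` as with itself, so that Hölder's equality case applies. -/
lemma IsExtremal.exists_ae_eq_scaledBubble (hμ : 0 < μ) (hf : HasFinitePotential μ f)
    (hext : IsExtremal μ f) (hfin : criticalNorm μ f ≠ ∞) (hC : 0 < C) (hd : 0 < d) {x₀ : E}
    (hpot : ∀ x, potential μ f x = C * (‖x - x₀‖ ^ 2 + d ^ 2) ^ (μ / 2)) :
    ∃ c, 0 < c ∧ f =ᵐ[volume] scaledBubble μ c d x₀ := by
  obtain ⟨c, hc, hpotg⟩ := exists_potential_scaledBubble_eq hμ hC hd x₀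
  have hg := hasFinitePotential_scaledBubble hμ hc hd x₀
  set g := scaledBubble μ c d x₀
  have hg0 (x : E) : 0 < g x := scaledBubble_pos μ hc hd x₀ x
  have hfg (x : E) : potential μ f x = potential μ g x := (hpot x).trans (hpotg x).symm
  have hpow := hext.lintegral_rpow_eq_of_potential_eq hμ hf hg
    (isExtremal_scaledBubble hμ hc hd x₀) hfg
  have hgfin : ∫⁻ x, ENNReal.ofReal (g x ^ criticalExponent E μ) ≠ ∞ := fun htop => hfin <| by
    rw [criticalNorm_eq_lintegral hμ hf.nonneg, hpow, htop,
      ENNReal.top_rpow_of_pos (one_div_pos.2 (criticalExponent_pos hμ))]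
  obtain ⟨k, hk, hkg⟩ : ∃ k, 0 < k ∧
      ∀ x, g x ^ (criticalExponent E μ - 1) = k * potential μ g x := by
    refine ⟨c ^ (criticalExponent E μ - 1) / C, by positivity, fun x => ?_⟩
    rw [scaledBubble_rpow_sub_one hμ hc hd, hpotg]
    field_simp
  have hpair : ∫⁻ x, ENNReal.ofReal (f x * g x ^ (criticalExponent E μ - 1)) =
      ∫⁻ x, ENNReal.ofReal (g x ^ criticalExponent E μ) := by
    have hself (x : E) : g x ^ criticalExponent E μ = k * (g x * potential μ f x) := by
      rw [hfg, mul_left_comm, ← hkg, Real.rpow_sub_one (hg0 x).ne', mul_div_cancel₀ _ (hg0 x).ne']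
    simp only [hself, hkg, mul_left_comm _ k, ENNReal.ofReal_mul hk.le]
    rw [lintegral_const_mul' _ _ ENNReal.ofReal_ne_top,
      lintegral_const_mul' _ _ ENNReal.ofReal_ne_top, lintegral_mul_potential_comm hμ hf hg]
  exact ⟨c, hc, ae_eq_of_lintegral_rpow_eq (criticalExponent_pos hμ) (criticalExponent_lt_one hμ)
    hf.measurable hg.measurable hf.nonneg hg0 hgfin hpow hpair⟩

end Uniqueness

section Extremal

variable {E : Type*} [NormedAddCommGroup E] [InnerProductSpace ℝ E] [FiniteDimensional ℝ E]
  [MeasurableSpace E] [BorelSpace E] {μ : ℝ} {f : E → ℝ}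

namespace HasFinitePotential

variable (h : HasFinitePotential μ f) (hμ : 0 < μ) (hpos : ∀ x, 0 < potential μ f x)
include h hμ hpos

lemma rieszEnergy_dualPotential :
    rieszEnergy μ (dualPotential μ f) f = ∫⁻ x, rieszIntegral μ f x ^ dualExponent E μ := by
  have hv (x : E) : 0 ≤ dualPotential μ f x := Real.rpow_nonneg (hpos x).le _
  rw [rieszEnergy_eq_lintegral_potential hμ hv h]
  refine lintegral_congr fun x => ?_
  rw [dualPotential, Real.rpow_sub_one (hpos x).ne', div_mul_cancel₀ _ (hpos x).ne',
    h.rieszIntegral_eq hμ, ENNReal.ofReal_rpow_of_pos (hpos x)]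

lemma criticalNorm_dualPotential : criticalNorm μ (dualPotential μ f) =
    (∫⁻ x, rieszIntegral μ f x ^ dualExponent E μ) ^ (1 / criticalExponent E μ) := by
  have hv (x : E) : 0 ≤ dualPotential μ f x := Real.rpow_nonneg (hpos x).le _
  simp only [criticalNorm_eq_lintegral hμ hv, h.rieszIntegral_eq hμ,
    ENNReal.ofReal_rpow_of_pos (hpos _), dualPotential, ← Real.rpow_mul (hpos _).le,
    dualExponent_sub_one_mul_criticalExponent hμ]

lemma measurable_dualPotential : Measurable (dualPotential μ f) :=
  ((h.continuous_potential hμ).rpow_const fun x => .inl (hpos x).ne').measurable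

end HasFinitePotential

variable [Nontrivial E]

lemma criticalNorm_ne_zero (hμ : 0 < μ) (hf : Measurable f) (hne : ¬ f =ᵐ[volume] 0) :
    criticalNorm μ f ≠ 0 := by
  rwa [criticalNorm, Ne, eLpNorm'_eq_zero_iff (criticalExponent_pos hμ) hf.aestronglyMeasurable]

namespace IsExtremal

variable (h : IsExtremal μ f) (hμ : 0 < μ)
include h hμ

lemma lintegral_rpow_ne_zero (hfin : criticalNorm μ f ≠ ∞) :
    ∫⁻ x, rieszIntegral μ f x ^ dualExponent E μ ≠ 0 := by
  intro hzero
  rw [IsExtremal, hzero, ENNReal.zero_rpow_of_neg (one_div_neg.2 (dualExponent_neg hμ))] at h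
  exact ENNReal.mul_ne_top ENNReal.ofReal_ne_top hfin h.symm

lemma lintegral_rpow_ne_top (hf : Measurable f) (hne : ¬ f =ᵐ[volume] 0) :
    ∫⁻ x, rieszIntegral μ f x ^ dualExponent E μ ≠ ∞ := by
  intro htop
  rw [IsExtremal, htop, ENNReal.top_rpow_of_neg (one_div_neg.2 (dualExponent_neg hμ))] at h
  exact mul_ne_zero (ENNReal.ofReal_pos.2 (sharpConstant_pos hμ)).ne'
    (criticalNorm_ne_zero hμ hf hne) h.symm

lemma hasFinitePotential (hf : Measurable f) (hf0 : ∀ x, 0 ≤ f x) (hfin : criticalNorm μ f ≠ ∞) :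
    HasFinitePotential μ f := by
  have hfreq : ∃ᶠ x in ae volume, rieszIntegral μ f x ≠ ∞ := fun htop =>
    h.lintegral_rpow_ne_zero hμ hfin <| lintegral_eq_zero_of_ae_eq_zero <| htop.mono fun x hx => by
      simp [not_not.1 hx, ENNReal.top_rpow_of_neg (dualExponent_neg (E := E) hμ)]
  obtain ⟨x₁, h₁⟩ := hfreq.exists
  obtain ⟨x₂, h₂, hne⟩ := (hfreq.and_eventually (Measure.ae_ne volume x₁)).exists
  exact hasFinitePotential_of_rieszIntegral_ne_top hμ hf hf0 hne h₂ h₁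

variable (hf : HasFinitePotential μ f) (hfin : criticalNorm μ f ≠ ∞) (hne : ¬ f =ᵐ[volume] 0)
include hf hfin hne

lemma rieszEnergy_dualPotential_eq : rieszEnergy μ (dualPotential μ f) f =
    ENNReal.ofReal (sharpConstant E μ) *
      (criticalNorm μ (dualPotential μ f) * criticalNorm μ f) := by
  have hpos := hf.potential_pos hμ hne
  rw [hf.rieszEnergy_dualPotential hμ hpos, hf.criticalNorm_dualPotential hμ hpos, mul_left_comm,
    ← h, ← ENNReal.rpow_add _ _ (h.lintegral_rpow_ne_zero hμ hfin)
      (h.lintegral_rpow_ne_top hμ hf.measurable hne),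
    one_div_criticalExponent_add_one_div_dualExponent, ENNReal.rpow_one]

lemma alignedWithPotential : AlignedWithPotential μ f := by
  intro a R hR
  have hpos := hf.potential_pos hμ hne
  have hv (x : E) : 0 ≤ dualPotential μ f x := Real.rpow_nonneg (hpos x).le _
  have hvm := hf.measurable_dualPotential hμ hpos
  refine ae_spherePower_mul_nonneg_of_rieszEnergy_le_polarize (e := 1) hR hvm hf.measurable hv
    hf.nonneg hμ one_ne_zero ?_ ?_
  · rw [hf.rieszEnergy_dualPotential hμ hpos]
    exact h.lintegral_rpow_ne_top hμ hf.measurable hne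
  · rw [h.rieszEnergy_dualPotential_eq hμ hf hfin hne, ← criticalNorm_polarize hμ hR one_ne_zero a
      hvm, ← criticalNorm_polarize hμ hR one_ne_zero a hf.measurable]
    exact sharpConstant_mul_criticalNorm_le_rieszEnergy hμ (measurable_polarize _ _ _ _ hvm)
      (measurable_polarize _ _ _ _ hf.measurable) (polarize_nonneg hR hv)
      (polarize_nonneg hR hf.nonneg)

end IsExtremal

theorem isExtremal_iff_exists_ae_eq_scaledBubble (hμ : 0 < μ) (hf : Measurable f)
    (hf0 : ∀ x, 0 ≤ f x) (hfin : criticalNorm μ f ≠ ∞) (hne : ¬ f =ᵐ[volume] 0) :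
    IsExtremal μ f ↔ ∃ c d x₀, 0 < c ∧ 0 < d ∧ f =ᵐ[volume] scaledBubble μ c d x₀ := by
  constructor
  · intro h
    have hpot := h.hasFinitePotential hμ hf hf0 hfin
    obtain ⟨x₀, d, C, hd, hC, hshape⟩ := hpot.exists_potential_eq hμ (hpot.potential_pos hμ hne)
      (h.alignedWithPotential hμ hpot hfin hne)
    obtain ⟨c, hc, hae⟩ := h.exists_ae_eq_scaledBubble hμ hpot hfin hC hd hshape
    exact ⟨c, d, x₀, hc, hd, hae⟩
  · rintro ⟨c, d, x₀, hc, hd, hae⟩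
    exact (isExtremal_congr_ae hae).2 (isExtremal_scaledBubble hμ hc hd x₀)

end Extremal

section RieszOrder

variable (E : Type*) [NormedAddCommGroup E] [InnerProductSpace ℝ E] (α : ℝ)

lemma finrank_add_half_sub : (finrank ℝ E : ℝ) + (α - finrank ℝ E) / 2 = (finrank ℝ E + α) / 2 := by
  ring

lemma criticalExponent_sub_finrank :
    criticalExponent E (α - finrank ℝ E) = 2 * finrank ℝ E / (finrank ℝ E + α) := by
  rw [criticalExponent, finrank_add_half_sub, div_div_eq_mul_div, mul_comm]

lemma dualExponent_sub_finrank :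
    dualExponent E (α - finrank ℝ E) = 2 * finrank ℝ E / (finrank ℝ E - α) := by
  rw [dualExponent, ← div_neg, neg_sub]

variable {E α} [FiniteDimensional ℝ E] [MeasurableSpace E] [BorelSpace E] [Nontrivial E]
  {μ : ℝ} {f : E → ℝ}

lemma sharpConstant_sub_finrank (hα : finrank ℝ E < α) :
    sharpConstant E (α - finrank ℝ E) =
      Real.pi ^ ((finrank ℝ E - α) / 2) *
        (Real.Gamma (α / 2) / Real.Gamma ((finrank ℝ E + α) / 2)) *
        (Real.Gamma ((finrank ℝ E : ℝ) / 2) / Real.Gamma (finrank ℝ E : ℝ)) ^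
          (-(α / finrank ℝ E)) := by
  have hn : (finrank ℝ E : ℝ) ≠ 0 := mod_cast finrank_pos.ne'
  rw [sharpConstant_eq (sub_pos.2 hα), finrank_add_half_sub, add_sub_cancel, ← neg_div, neg_sub,
    sub_div α, div_self hn, add_sub_cancel]

lemma criticalNorm_eq_integral (hμ : 0 < μ) (hf0 : ∀ x, 0 ≤ f x)
    (hint : Integrable fun x => |f x| ^ criticalExponent E μ) :
    criticalNorm μ f =
      ENNReal.ofReal ((∫ x, |f x| ^ criticalExponent E μ) ^ (1 / criticalExponent E μ)) := by
  have hpow (x : E) : 0 ≤ |f x| ^ criticalExponent E μ := Real.rpow_nonneg (abs_nonneg _) _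
  rw [← ENNReal.ofReal_rpow_of_nonneg (integral_nonneg hpow)
      (one_div_pos.2 (criticalExponent_pos hμ)).le,
    ofReal_integral_eq_lintegral_ofReal hint (.of_forall hpow), criticalNorm_eq_lintegral hμ hf0]
  simp only [abs_of_nonneg (hf0 _)]

end RieszOrder

end ReversedHLS

open ReversedHLS

theorem sharp_reversed_HLS_Rn_extremals_general {E : Type*} [NormedAddCommGroup E]
    [InnerProductSpace ℝ E] [FiniteDimensional ℝ E] [MeasurableSpace E] [BorelSpace E]
    [Nontrivial E] {α p q : ℝ} (hα : finrank ℝ E < α)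
    (hp : p = 2 * finrank ℝ E / (finrank ℝ E + α)) (hq : q = 2 * finrank ℝ E / (finrank ℝ E - α))
    {f : E → ℝ} (hf : Measurable f) (hfpos : ∀ x, 0 ≤ f x)
    (hfLp : Integrable fun x => |f x| ^ p) (hfne : ¬ f =ᵐ[volume] 0) :
    (∫⁻ x, (∫⁻ y, ENNReal.ofReal (f y * dist x y ^ (α - finrank ℝ E))) ^ q) ^ (1 / q) =
        ENNReal.ofReal (Real.pi ^ ((finrank ℝ E - α) / 2) *
            (Real.Gamma (α / 2) / Real.Gamma ((finrank ℝ E + α) / 2)) *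
            (Real.Gamma ((finrank ℝ E : ℝ) / 2) / Real.Gamma (finrank ℝ E : ℝ)) ^
              (-(α / finrank ℝ E)) * (∫ x, |f x| ^ p) ^ (1 / p)) ↔
      ∃ c d x₀, 0 < c ∧ 0 < d ∧
        ∀ᵐ x, f x = c * (1 / (‖x - x₀‖ ^ 2 + d ^ 2)) ^ ((finrank ℝ E + α) / 2) := by
  have hμ := sub_pos.2 hα
  rw [← criticalExponent_sub_finrank] at hp
  rw [← dualExponent_sub_finrank] at hq
  subst hp hq
  have hnorm := criticalNorm_eq_integral hμ hfpos hfLp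
  have hfin := hnorm.trans_ne ENNReal.ofReal_ne_top
  rw [← sharpConstant_sub_finrank hα, ENNReal.ofReal_mul (sharpConstant_pos hμ).le, ← hnorm,
    ← finrank_add_half_sub]
  exact isExtremal_iff_exists_ae_eq_scaledBubble hμ hf hfpos hfin hfne

/-- **Extremal functions for the sharp reversed HLS inequality on `ℝⁿ`**
(Corollary 1.3, equality case): for `1 ≤ n < α`, `p = 2n/(n+α)`, `q = 2n/(n-α)`, a
nonnegative `f ∈ L^p(ℝⁿ)`, not identically zero, achieves equality
`‖I_α f‖_{L^q(ℝⁿ)} = N*(n,α) ‖f‖_{L^p(ℝⁿ)}` if and only if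
`f(x) = c (1/(|x-x₀|² + d²))^((n+α)/2)` for some `c, d > 0` and `x₀ ∈ ℝⁿ`. -/
theorem sharp_reversed_HLS_Rn_extremals (n : ℕ) (hn : 1 ≤ n) (α p q : ℝ)
    (hα : (n : ℝ) < α)
    (hp : p = 2 * n / ((n : ℝ) + α)) (hq : q = 2 * n / ((n : ℝ) - α))
    (f : EuclideanSpace ℝ (Fin n) → ℝ)
    (hf : Measurable f) (hfpos : ∀ x, 0 ≤ f x)
    (hfLp : Integrable (fun x => |f x| ^ p))
    (hfne : ¬ (f =ᵐ[volume] 0)) :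
    (∫⁻ x, (rieszNeg n α f x) ^ q) ^ (1 / q) =
        ENNReal.ofReal
          ((Real.pi ^ (((n : ℝ) - α) / 2) * (Real.Gamma (α / 2) / Real.Gamma (((n : ℝ) + α) / 2)) *
              (Real.Gamma ((n : ℝ) / 2) / Real.Gamma (n : ℝ)) ^ (-(α / (n : ℝ)))) *
            (∫ x, |f x| ^ p) ^ (1 / p)) ↔
      ∃ (c d : ℝ) (x₀ : EuclideanSpace ℝ (Fin n)), 0 < c ∧ 0 < d ∧
        ∀ᵐ x ∂(volume : Measure (EuclideanSpace ℝ (Fin n))),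
          f x = c * (1 / (‖x - x₀‖ ^ 2 + d ^ 2)) ^ (((n : ℝ) + α) / 2) := by
  have : NeZero n := .of_pos hn
  simpa only [rieszNeg, finrank_euclideanSpace_fin] using
    sharp_reversed_HLS_Rn_extremals_general (E := EuclideanSpace ℝ (Fin n)) (by simpa) (by simpa)
      (by simpa) hf hfpos hfLp hfne
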